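/- arXiv:1207.1480 — 4 statements merged into one kernel-verified Lean document; each statement's English description precedes it below -/
import Mathlib

section
/- Let G be an infinite d-regular graph with spectral radius ρ < 1 and let p ∈ [0,1] satisfy p(d-1)ρ < 1. Then for vertices x, y at graph distance R, the two-point connection probability satisfies P_p(x ↔ y) ≤ C·(p(d-1)ρ)^R where C = d/((d-1)(1-ρ)(1 - p(d-1)ρ)). In particular P_p(x ↔ y) → 0 as R → ∞. -/
open MeasureTheory Filter Set
open scoped ENNReal

namespace SimpleGraph

variable {V : Type*}

/-- n-step transition kernel of the simple random walk. -/
noncomputable def srw (G : SimpleGraph V) [DecidableEq V] [∀ v, Fintype (G.neighborSet v)] :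
    ℕ → V → V → ℝ
  | 0, x, y => if x = y then 1 else 0
  | n + 1, x, y => ∑ z ∈ G.neighborFinset x, (G.degree x : ℝ)⁻¹ * srw G n z y

/-- auxiliary kernel of the non-backtracking walk: `nbwAux n prev cur y` is the probability that
the walk currently at `cur`, having just come from `prev`, is at `y` after `n` more steps. -/
noncomputable def nbwAux (G : SimpleGraph V) [DecidableEq V] [∀ v, Fintype (G.neighborSet v)] :
    ℕ → V → V → V → ℝ
  | 0, _, c, y => if c = y then 1 else 0
  | n + 1, prev, c, y =>
      ∑ z ∈ (G.neighborFinset c).erase prev, ((G.degree c : ℝ) - 1)⁻¹ * nbwAux G n c z y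

/-- n-step transition kernel of the non-backtracking random walk (first step uniform). -/
noncomputable def nbw (G : SimpleGraph V) [DecidableEq V] [∀ v, Fintype (G.neighborSet v)] :
    ℕ → V → V → ℝ
  | 0, x, y => if x = y then 1 else 0
  | n + 1, x, y => ∑ z ∈ G.neighborFinset x, (G.degree x : ℝ)⁻¹ * nbwAux G n x z y

/-- spectral radius of the simple random walk, `ρ = lim (p^{2n}(x,x))^{1/2n}`. -/
noncomputable def spectralRadius (G : SimpleGraph V) [DecidableEq V]
    [∀ v, Fintype (G.neighborSet v)] (x : V) : ℝ :=
  Filter.limsup (fun n : ℕ => (G.srw (2 * n) x x) ^ ((2 * n : ℝ))⁻¹) Filter.atTop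

/-- a walk all of whose edges are open in the percolation configuration `ω`. -/
def openWalk (G : SimpleGraph V) (ω : G.edgeSet → Bool) {x y : V} (w : G.Walk x y) : Prop :=
  ∀ e (he : e ∈ w.edges), ω ⟨e, w.edges_subset_edgeSet he⟩ = true

/-- `x` and `y` are connected by an open path. -/
def percConn (G : SimpleGraph V) (ω : G.edgeSet → Bool) (x y : V) : Prop :=
  ∃ w : G.Walk x y, G.openWalk ω w

/-- the open cluster of `x`. -/
def percCluster (G : SimpleGraph V) (ω : G.edgeSet → Bool) (x : V) : Set V :=
  {y | G.percConn ω x y}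

/-- the event that the shortest open path between `x` and `y` has length exactly `n`. -/
def shortestOpenConn (G : SimpleGraph V) (ω : G.edgeSet → Bool) (x y : V) (n : ℕ) : Prop :=
  (∃ w : G.Walk x y, w.IsPath ∧ w.length = n ∧ G.openWalk ω w) ∧
    ∀ w : G.Walk x y, G.openWalk ω w → n ≤ w.length

/-- `μ` is the Bernoulli(p) bond percolation measure: a probability measure under which the
states of edges are i.i.d., each open with probability `p`. -/
def IsBernoulliPercolation (G : SimpleGraph V) (p : ℝ)
    (μ : Measure (G.edgeSet → Bool)) : Prop :=
  IsProbabilityMeasure μ ∧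
    ∀ (s : Finset G.edgeSet) (b : G.edgeSet → Bool),
      μ {ω | ∀ e ∈ s, ω e = b e} = ∏ e ∈ s, ENNReal.ofReal (if b e then p else 1 - p)

/-- critical percolation probability, relative to a family `P p` of percolation measures. -/
noncomputable def percCritical (G : SimpleGraph V)
    (P : ℝ → Measure (G.edgeSet → Bool)) : ℝ :=
  sInf {p : ℝ | p ∈ Set.Icc (0:ℝ) 1 ∧ 0 < P p {ω | ∃ x, (G.percCluster ω x).Infinite}}

/-- `c_n(x)`: number of self-avoiding walks of length `n` from `x` to `y`. -/
noncomputable def sawCountTo (G : SimpleGraph V) (x y : V) (n : ℕ) : ℕ :=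
  Nat.card {w : G.Walk x y // w.IsPath ∧ w.length = n}

/-- `c_n`: number of self-avoiding walks of length `n` starting at `x`. -/
noncomputable def sawCount (G : SimpleGraph V) (x : V) (n : ℕ) : ℕ :=
  Nat.card {w : (y : V) × G.Walk x y // w.2.IsPath ∧ w.2.length = n}

/-- the connective constant `μ = inf_n c_n^{1/n}`. -/
noncomputable def connectiveConstant (G : SimpleGraph V) (x : V) : ℝ :=
  ⨅ n : ℕ+, (G.sawCount x n : ℝ) ^ (((n : ℕ) : ℝ))⁻¹

/-- the self-avoiding-walk two-point generating function `G_z(x)`. -/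
noncomputable def sawGen (G : SimpleGraph V) (x₀ : V) (z : ℝ) (x : V) : ℝ≥0∞ :=
  ∑' n : ℕ, (G.sawCountTo x₀ x n : ℝ≥0∞) * (ENNReal.ofReal z) ^ n

/-- vertex-transitivity. -/
def IsVertexTransitive (G : SimpleGraph V) : Prop :=
  ∀ x y : V, ∃ φ : G ≃g G, φ x = y

end SimpleGraph

/-!
Deleting backtracks from the simple random walk on a `d`-regular graph leaves, conditionally on the
length `m` of what remains, a non-backtracking walk of `m` steps; as a process in time this length
is the distance to the root of simple random walk on the `d`-regular tree, a reflected walk on `ℕ`.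
When `ρ < 1` the reflected walk is transient, so in expectation it visits every level `n` at least
once, and never before time `n`. Hence `nbw n x y ≤ ∑_{k ≥ n} srw k x y ≤ ρ ^ n / (1 - ρ)`, which
bounds the number of self-avoiding walks of length `n` from `x` to `y`. A union bound over these
and a geometric series over `n ≥ dist x y` give the theorem.
-/

namespace ReflectedWalk

/-- The Markov operator, acting on functions, of the nearest-neighbour walk on `ℕ` which steps from
`0` to `1` and from `m + 1` to `m` with probability `β`, to `m + 2` with probability `1 - β`.
For `β = 1 / d` this walk is the distance to the root of simple random walk on the `d`-regular
tree. -/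
def step (β : ℝ) : Module.End ℝ (ℕ → ℝ) where
  toFun u
    | 0 => u 1
    | m + 1 => (1 - β) * u (m + 2) + β * u m
  map_add' u v := by
    ext (_ | m)
    · rfl
    · simp only [Pi.add_apply]; ring
  map_smul' c u := by
    ext (_ | m)
    · rfl
    · simp only [Pi.smul_apply, smul_eq_mul, RingHom.id_apply]; ring

/-- The probability that the reflected walk started at `0` is at `m` at time `k`. -/
noncomputable def kernel (β : ℝ) (k m : ℕ) : ℝ := (step β ^ k) (Pi.single m 1) 0

variable {β : ℝ}

theorem kernel_zero (m : ℕ) : kernel β 0 m = if m = 0 then 1 else 0 := by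
  simp only [kernel, pow_zero, Module.End.one_apply, Pi.single_apply, eq_comm]

theorem kernel_succ_zero (k : ℕ) : kernel β (k + 1) 0 = β * kernel β k 1 := by
  have h : step β (Pi.single 0 1) = β • Pi.single 1 1 := by
    ext (_ | m) <;> simp [step, Pi.single_apply]
  simp only [kernel, pow_succ, Module.End.mul_apply, h, map_smul, Pi.smul_apply, smul_eq_mul]

theorem kernel_succ_one (k : ℕ) :
    kernel β (k + 1) 1 = kernel β k 0 + β * kernel β k 2 := by
  have h : step β (Pi.single 1 1) = Pi.single 0 1 + β • Pi.single 2 1 := by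
    ext (_ | m) <;> simp [step, Pi.single_apply]
  simp only [kernel, pow_succ, Module.End.mul_apply, h, map_add, map_smul, Pi.add_apply,
    Pi.smul_apply, smul_eq_mul]

theorem kernel_succ_add_two (k m : ℕ) :
    kernel β (k + 1) (m + 2) = (1 - β) * kernel β k (m + 1) + β * kernel β k (m + 3) := by
  have h : step β (Pi.single (m + 2) 1) =
      (1 - β) • Pi.single (m + 1) 1 + β • Pi.single (m + 3) 1 := by
    ext (_ | j) <;> simp [step, Pi.single_apply]
  simp only [kernel, pow_succ, Module.End.mul_apply, h, map_add, map_smul, Pi.add_apply,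
    Pi.smul_apply, smul_eq_mul]

theorem kernel_eq_zero_of_lt {k m : ℕ} (hkm : k < m) : kernel β k m = 0 := by
  induction k generalizing m with
  | zero => rw [kernel_zero, if_neg hkm.ne']
  | succ k ih =>
    obtain ⟨m, rfl⟩ : ∃ j, m = j + 2 := ⟨m - 2, by omega⟩
    rw [kernel_succ_add_two, ih (by omega), ih (by omega), mul_zero, mul_zero, add_zero]

theorem step_pow_nonneg (hβ0 : 0 ≤ β) (hβ1 : β ≤ 1) {u : ℕ → ℝ} (hu : 0 ≤ u) (k : ℕ) :
    0 ≤ (step β ^ k) u := by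
  induction k generalizing u with
  | zero => exact hu
  | succ k ih =>
    rw [pow_succ, Module.End.mul_apply]
    refine ih ?_
    rintro (_ | m)
    · exact hu 1
    · exact add_nonneg (mul_nonneg (sub_nonneg.2 hβ1) (hu _)) (mul_nonneg hβ0 (hu _))

theorem kernel_nonneg (hβ0 : 0 ≤ β) (hβ1 : β ≤ 1) (k m : ℕ) : 0 ≤ kernel β k m :=
  step_pow_nonneg hβ0 hβ1 (Pi.single_nonneg.2 zero_le_one) k 0

theorem kernel_mul_le_step_pow (hβ0 : 0 ≤ β) (hβ1 : β ≤ 1) {u : ℕ → ℝ} (hu : 0 ≤ u) (k m : ℕ) :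
    kernel β k m * u m ≤ (step β ^ k) u 0 := by
  have hrest : 0 ≤ u - u m • Pi.single m 1 := by
    intro j
    rcases eq_or_ne j m with rfl | hj
    · simp
    · simpa [hj] using hu j
  have h := step_pow_nonneg hβ0 hβ1 hrest k 0
  simpa [kernel, mul_comm] using h

theorem summable_kernel (hβ0 : 0 < β) (hβ1 : β ≤ 1) (h : Summable fun k => kernel β k 0) (m : ℕ) :
    Summable fun k => kernel β k m := by
  induction m with
  | zero => exact h
  | succ m ih =>
    have hle : ∀ k, β * kernel β k (m + 1) ≤ kernel β (k + 1) m := by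
      have h0 := kernel_nonneg hβ0.le hβ1
      intro k
      rcases m with _ | _ | m
      · exact (kernel_succ_zero k).ge
      · rw [kernel_succ_one]; exact le_add_of_nonneg_left (h0 k 0)
      · rw [kernel_succ_add_two]
        exact le_add_of_nonneg_left (mul_nonneg (sub_nonneg.2 hβ1) (h0 k _))
    refine (summable_mul_left_iff hβ0.ne').1 ?_
    exact ((summable_nat_add_iff 1).2 ih).of_nonneg_of_le
      (fun k => mul_nonneg hβ0.le (kernel_nonneg hβ0.le hβ1 _ _)) hle

-- In expectation, a transient walk makes exactly one more up-step than down-steps across each edge.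
theorem one_sub_mul_tsum_kernel_succ (hs : ∀ m, Summable fun k => kernel β k m) (m : ℕ) :
    (1 - β) * ∑' k, kernel β k (m + 1) = 1 + β * ∑' k, kernel β k (m + 2) := by
  have first_step (m : ℕ) := (hs m).tsum_eq_zero_add
  induction m with
  | zero =>
    have hzero := first_step 0
    have hone := first_step 1
    simp only [kernel_zero, kernel_succ_zero, tsum_mul_left, if_true] at hzero
    simp only [kernel_zero, kernel_succ_one, one_ne_zero, if_false,
      (hs 0).tsum_add ((hs 2).mul_left β), tsum_mul_left] at hone
    linarith
  | succ m ih =>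
    have hstep := first_step (m + 2)
    simp only [kernel_zero, kernel_succ_add_two, Nat.add_eq_zero_iff, OfNat.ofNat_ne_zero,
      and_false, if_false, ((hs (m + 1)).mul_left (1 - β)).tsum_add ((hs (m + 3)).mul_left β),
      tsum_mul_left] at hstep
    linarith

theorem one_le_tsum_kernel (hβ0 : 0 ≤ β) (hβ1 : β ≤ 1)
    (hs : ∀ m, Summable fun k => kernel β k m) (m : ℕ) : 1 ≤ ∑' k, kernel β k m := by
  have hpos (m : ℕ) : 0 ≤ ∑' k, kernel β k m := tsum_nonneg fun k => kernel_nonneg hβ0 hβ1 k m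
  rcases m with _ | m
  · rw [(hs 0).tsum_eq_zero_add, kernel_zero, if_pos rfl]
    exact le_add_of_nonneg_right (tsum_nonneg fun k => kernel_nonneg hβ0 hβ1 _ _)
  · calc 1 ≤ 1 + β * ∑' k, kernel β k (m + 2) := le_add_of_nonneg_right (mul_nonneg hβ0 (hpos _))
      _ = (1 - β) * ∑' k, kernel β k (m + 1) := (one_sub_mul_tsum_kernel_succ hs m).symm
      _ ≤ ∑' k, kernel β k (m + 1) := mul_le_of_le_one_left (hpos _) (by linarith)

end ReflectedWalk

namespace BondPercolation

open SimpleGraph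
open scoped Finset

variable {V : Type*} {G : SimpleGraph V}

theorem le_of_eventually_mul_pow_le_pow {K : Type*} [Field K] [LinearOrder K]
    [IsStrictOrderedRing K] [Archimedean K] {a b C : K} (hb : 0 < b) (hC : 0 < C)
    (h : ∀ᶠ m : ℕ in atTop, C * a ^ m ≤ b ^ m) : a ≤ b := by
  by_contra! hba
  have htop := tendsto_pow_atTop_atTop_of_one_lt ((one_lt_div hb).2 hba)
  obtain ⟨m, hle, hgt⟩ := (h.and (htop.eventually_gt_atTop (1 / C))).exists
  rw [div_pow, div_lt_div_iff₀ hC (by positivity)] at hgt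
  linarith

section RandomWalk

variable [DecidableEq V] [∀ v, Fintype (G.neighborSet v)] {d : ℕ}

theorem srw_nonneg (n : ℕ) (x y : V) : 0 ≤ G.srw n x y := by
  induction n generalizing x with
  | zero => rw [srw]; split_ifs <;> norm_num
  | succ n ih => exact Finset.sum_nonneg fun z _ => mul_nonneg (by positivity) (ih z)

theorem srw_le_one (n : ℕ) (x y : V) : G.srw n x y ≤ 1 := by
  induction n generalizing x with
  | zero => rw [srw]; split_ifs <;> norm_num
  | succ n ih =>
    calc G.srw (n + 1) x y ≤ ∑ _z ∈ G.neighborFinset x, (G.degree x : ℝ)⁻¹ :=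
          Finset.sum_le_sum fun z _ => mul_le_of_le_one_right (by positivity) (ih z)
      _ = G.degree x * (G.degree x : ℝ)⁻¹ := by
          rw [Finset.sum_const, card_neighborFinset_eq_degree, nsmul_eq_mul]
      _ ≤ 1 := mul_inv_le_one

theorem srw_mul_srw_le_srw_add (m n : ℕ) (x y z : V) :
    G.srw m x y * G.srw n y z ≤ G.srw (m + n) x z := by
  induction m generalizing x with
  | zero =>
    rw [srw, zero_add]
    split_ifs with hxy
    · rw [hxy, one_mul]
    · rw [zero_mul]; exact srw_nonneg n x z
  | succ m ih =>
    rw [Nat.add_right_comm, srw, srw, Finset.sum_mul]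
    refine Finset.sum_le_sum fun w _ => ?_
    rw [mul_assoc]
    exact mul_le_mul_of_nonneg_left (ih w) (by positivity)

theorem srw_self_pow_le (n m : ℕ) (x : V) : G.srw n x x ^ m ≤ G.srw (n * m) x x := by
  induction m with
  | zero => simp [srw]
  | succ m ih =>
    rw [pow_succ, Nat.mul_succ]
    exact (mul_le_mul_of_nonneg_right ih (srw_nonneg n x x)).trans
      (srw_mul_srw_le_srw_add _ _ _ _ _)

theorem srw_length_pos {x y : V} (w : G.Walk x y) : 0 < G.srw w.length x y := by
  induction w with
  | nil => simp [srw]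
  | @cons x z y hxz w ih =>
    have hdeg : 0 < G.degree x := (G.degree_pos_iff_exists_adj x).2 ⟨z, hxz⟩
    rw [Walk.length_cons, srw]
    exact Finset.sum_pos' (fun v _ => mul_nonneg (by positivity) (srw_nonneg _ v y))
      ⟨z, (G.mem_neighborFinset x z).2 hxz, by positivity⟩

theorem srw_succ_eq_sum_last_step (n : ℕ) (x y : V) :
    G.srw (n + 1) x y = ∑ z ∈ G.neighborFinset y, G.srw n x z * (G.degree z : ℝ)⁻¹ := by
  induction n generalizing x with
  | zero =>
    have hmem : y ∈ G.neighborFinset x ↔ x ∈ G.neighborFinset y := by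
      rw [G.mem_neighborFinset, G.mem_neighborFinset, G.adj_comm]
    simp only [srw, mul_ite, ite_mul, one_mul, mul_one, zero_mul, mul_zero, Finset.sum_ite_eq,
      Finset.sum_ite_eq']
    exact if_congr hmem rfl rfl
  | succ n ih =>
    rw [srw, Finset.sum_congr rfl fun w _ => by rw [ih w, Finset.mul_sum], Finset.sum_comm]
    refine Finset.sum_congr rfl fun z _ => ?_
    rw [srw, Finset.sum_mul]
    exact Finset.sum_congr rfl fun w _ => (mul_assoc _ _ _).symm

theorem degree_mul_srw_comm (n : ℕ) (x y : V) :
    G.degree x * G.srw n x y = G.degree y * G.srw n y x := by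
  induction n generalizing x with
  | zero =>
    rcases eq_or_ne x y with rfl | hxy
    · rfl
    · simp [srw, hxy, hxy.symm]
  | succ n ih =>
    rw [srw, srw_succ_eq_sum_last_step, Finset.mul_sum, Finset.mul_sum]
    refine Finset.sum_congr rfl fun z hz => ?_
    have hxz := (G.mem_neighborFinset x z).1 hz
    have hx : (G.degree x : ℝ) ≠ 0 :=
      Nat.cast_ne_zero.2 ((G.degree_pos_iff_exists_adj x).2 ⟨z, hxz⟩).ne'
    have hz : (G.degree z : ℝ) ≠ 0 :=
      Nat.cast_ne_zero.2 ((G.degree_pos_iff_exists_adj z).2 ⟨x, hxz.symm⟩).ne'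
    rw [mul_inv_cancel_left₀ hx, ← mul_assoc, ← ih z, mul_right_comm, mul_inv_cancel₀ hz, one_mul]

theorem isBoundedUnder_srw_root (x : V) :
    IsBoundedUnder (· ≤ ·) atTop fun n : ℕ => G.srw (2 * n) x x ^ ((2 * n : ℝ))⁻¹ :=
  isBoundedUnder_of ⟨1, fun _ =>
    Real.rpow_le_one (srw_nonneg _ x x) (srw_le_one _ x x) (by positivity)⟩

theorem spectralRadius_nonneg (x : V) : 0 ≤ G.spectralRadius x :=
  le_limsup_of_frequently_le
    (Frequently.of_forall fun _ => Real.rpow_nonneg (srw_nonneg _ x x) _)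
    (isBoundedUnder_srw_root x)

theorem eventually_srw_self_le_pow {x : V} {r : ℝ} (hr : G.spectralRadius x < r) :
    ∀ᶠ n : ℕ in atTop, G.srw (2 * n) x x ≤ r ^ (2 * n) := by
  have hr0 : 0 ≤ r := (spectralRadius_nonneg x).trans hr.le
  filter_upwards [eventually_lt_of_limsup_lt hr (isBoundedUnder_srw_root x), eventually_gt_atTop 0]
    with n hroot hn
  have h := (Real.rpow_inv_le_iff_of_pos (srw_nonneg _ x x) hr0 (by positivity)).1 hroot.le
  exact_mod_cast h

theorem exists_eventually_mul_srw_self_le_pow (hconn : G.Connected) (x₀ x : V) {r : ℝ}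
    (hr : G.spectralRadius x₀ < r) :
    ∃ C > 0, ∀ᶠ n : ℕ in atTop, C * G.srw (2 * n) x x ≤ r ^ (2 * n) := by
  obtain ⟨w⟩ := hconn.preconnected x₀ x
  have hr0 : 0 < r := (spectralRadius_nonneg x₀).trans_lt hr
  have hgo := srw_length_pos w
  have hback := w.length_reverse ▸ srw_length_pos w.reverse
  set j := w.length
  refine ⟨G.srw j x₀ x * G.srw j x x₀ / r ^ (2 * j), by positivity, ?_⟩
  filter_upwards [(tendsto_add_atTop_nat j).eventually (eventually_srw_self_le_pow hr)] with n hn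
  rw [div_mul_eq_mul_div, div_le_iff₀ (by positivity)]
  calc G.srw j x₀ x * G.srw j x x₀ * G.srw (2 * n) x x
      = G.srw j x₀ x * G.srw (2 * n) x x * G.srw j x x₀ := mul_right_comm _ _ _
    _ ≤ G.srw (j + 2 * n) x₀ x * G.srw j x x₀ :=
        mul_le_mul_of_nonneg_right (srw_mul_srw_le_srw_add _ _ _ _ _) hback.le
    _ ≤ G.srw (j + 2 * n + j) x₀ x₀ := srw_mul_srw_le_srw_add _ _ _ _ _
    _ = G.srw (2 * (n + j)) x₀ x₀ := by congr 1; ring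
    _ ≤ r ^ (2 * (n + j)) := hn
    _ = r ^ (2 * n) * r ^ (2 * j) := by rw [mul_add, pow_add]

theorem srw_self_le_spectralRadius_pow (hconn : G.Connected) (x₀ x : V) (n : ℕ) :
    G.srw (2 * n) x x ≤ G.spectralRadius x₀ ^ (2 * n) := by
  rcases Nat.eq_zero_or_pos n with rfl | hn
  · exact srw_le_one _ x x
  have le_pow_of_lt : ∀ r, G.spectralRadius x₀ < r → G.srw (2 * n) x x ≤ r ^ (2 * n) := by
    intro r hr
    have hr0 : 0 < r := (spectralRadius_nonneg x₀).trans_lt hr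
    obtain ⟨C, hC, hCr⟩ := exists_eventually_mul_srw_self_le_pow hconn x₀ x hr
    refine le_of_eventually_mul_pow_le_pow (by positivity) hC ?_
    filter_upwards [(tendsto_id.const_mul_atTop' hn).eventually hCr] with m hm
    rw [id_eq, ← mul_assoc, pow_mul r] at hm
    exact (mul_le_mul_of_nonneg_left (srw_self_pow_le (2 * n) m x) hC.le).trans hm
  have hcont : Tendsto (· ^ (2 * n)) (nhdsWithin (G.spectralRadius x₀) (Ioi (G.spectralRadius x₀)))
      (nhds (G.spectralRadius x₀ ^ (2 * n))) :=
    (continuous_pow (2 * n)).continuousWithinAt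
  exact ge_of_tendsto hcont (eventually_of_mem self_mem_nhdsWithin le_pow_of_lt)

theorem srw_mul_srw_comm_le_spectralRadius_pow (hconn : G.Connected) (x₀ x y : V) (n : ℕ) :
    G.srw n x y * G.srw n y x ≤ G.spectralRadius x₀ ^ (2 * n) := by
  refine (srw_mul_srw_le_srw_add n n x y x).trans ?_
  rw [← two_mul]
  exact srw_self_le_spectralRadius_pow hconn x₀ x n

theorem srw_le_spectralRadius_pow (hconn : G.Connected) (hreg : G.IsRegularOfDegree d)
    (hd : d ≠ 0) (x₀ x y : V) (n : ℕ) : G.srw n x y ≤ G.spectralRadius x₀ ^ n := by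
  have hsymm : G.srw n x y = G.srw n y x := by
    have h := degree_mul_srw_comm (G := G) n x y
    rw [hreg.degree_eq, hreg.degree_eq] at h
    exact mul_left_cancel₀ (Nat.cast_ne_zero.2 hd) h
  have h := srw_mul_srw_comm_le_spectralRadius_pow hconn x₀ x y n
  rw [← hsymm, ← sq, mul_comm 2 n, pow_mul] at h
  exact (pow_le_pow_iff_left₀ (srw_nonneg n x y) (pow_nonneg (spectralRadius_nonneg x₀) n)
    two_ne_zero).1 h

theorem nbwAux_nonneg (hreg : G.IsRegularOfDegree d) (hd : 1 ≤ d) (n : ℕ) (x c y : V) :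
    0 ≤ G.nbwAux n x c y := by
  induction n generalizing x c with
  | zero => rw [nbwAux]; split_ifs <;> norm_num
  | succ n ih =>
    have hdeg : (0 : ℝ) ≤ G.degree c - 1 := by
      rw [hreg.degree_eq, sub_nonneg]; exact_mod_cast hd
    exact Finset.sum_nonneg fun z _ => mul_nonneg (inv_nonneg.2 hdeg) (ih c z)

theorem nbw_nonneg (hreg : G.IsRegularOfDegree d) (hd : 1 ≤ d) (n : ℕ) (x y : V) :
    0 ≤ G.nbw n x y := by
  rcases n with _ | n
  · rw [nbw]; split_ifs <;> norm_num
  · exact Finset.sum_nonneg fun z _ =>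
      mul_nonneg (by positivity) (nbwAux_nonneg hreg hd n x z y)

theorem sum_nbwAux_previous (hreg : G.IsRegularOfDegree d) (hd : 2 ≤ d) (n : ℕ) (x y : V) :
    ∑ z ∈ G.neighborFinset x, G.nbwAux n z x y = d * G.nbw n x y := by
  have hd0 : (d : ℝ) ≠ 0 := by exact_mod_cast (by omega : d ≠ 0)
  have hd1 : (d : ℝ) - 1 ≠ 0 := sub_ne_zero.2 (by exact_mod_cast (by omega : d ≠ 1))
  rcases n with _ | n
  · simp only [nbwAux, nbw, Finset.sum_const, card_neighborFinset_eq_degree, hreg.degree_eq,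
      nsmul_eq_mul]
  · simp only [nbwAux, nbw, hreg.degree_eq, ← Finset.mul_sum, mul_inv_cancel_left₀ hd0]
    have hsplit : ∑ z ∈ G.neighborFinset x, ∑ w ∈ (G.neighborFinset x).erase z, G.nbwAux n x w y =
        (d - 1) * ∑ w ∈ G.neighborFinset x, G.nbwAux n x w y := by
      rw [Finset.sum_congr rfl fun z hz => Finset.sum_erase_eq_sub hz, Finset.sum_sub_distrib,
        Finset.sum_const, card_neighborFinset_eq_degree, hreg.degree_eq, nsmul_eq_mul]
      ring
    rw [hsplit, inv_mul_cancel_left₀ hd1]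

theorem nbw_succ_of_adj (hreg : G.IsRegularOfDegree d) (hd : 2 ≤ d) (n : ℕ) {x z : V}
    (hxz : G.Adj x z) (y : V) : G.nbw (n + 1) z y =
      (d : ℝ)⁻¹ * (((d : ℝ) - 1) * G.nbwAux (n + 1) x z y + G.nbwAux n z x y) := by
  have hd1 : (d : ℝ) - 1 ≠ 0 := sub_ne_zero.2 (by exact_mod_cast (by omega : d ≠ 1))
  have hx : x ∈ G.neighborFinset z := (G.mem_neighborFinset z x).2 hxz.symm
  simp only [nbw, nbwAux, hreg.degree_eq, ← Finset.mul_sum, mul_inv_cancel_left₀ hd1,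
    Finset.sum_erase_add _ _ hx]

theorem average_nbw_eq_step (hreg : G.IsRegularOfDegree d) (hd : 2 ≤ d) (x y : V) :
    (d : ℝ)⁻¹ • ∑ z ∈ G.neighborFinset x, (fun m => G.nbw m z y) =
      ReflectedWalk.step (d : ℝ)⁻¹ fun m => G.nbw m x y := by
  have hd0 : (d : ℝ) ≠ 0 := by exact_mod_cast (by omega : d ≠ 0)
  ext (_ | m) <;> rw [Pi.smul_apply, Finset.sum_apply, smul_eq_mul]
  · simp only [ReflectedWalk.step, LinearMap.coe_mk, AddHom.coe_mk, nbw, nbwAux, hreg.degree_eq,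
      Finset.mul_sum]
  · have hnext : ∑ z ∈ G.neighborFinset x, G.nbwAux (m + 1) x z y = d * G.nbw (m + 2) x y := by
      rw [nbw, hreg.degree_eq, ← Finset.mul_sum, mul_inv_cancel_left₀ hd0]
    rw [Finset.sum_congr rfl fun z hz =>
        nbw_succ_of_adj hreg hd m ((G.mem_neighborFinset x z).1 hz) y,
      ← Finset.mul_sum, Finset.sum_add_distrib, ← Finset.mul_sum, hnext,
      sum_nbwAux_previous hreg hd]
    simp only [ReflectedWalk.step, LinearMap.coe_mk, AddHom.coe_mk]
    field_simp

theorem srw_eq_step_pow_nbw (hreg : G.IsRegularOfDegree d) (hd : 2 ≤ d) (k : ℕ) (x y : V) :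
    G.srw k x y = (ReflectedWalk.step (d : ℝ)⁻¹ ^ k) (fun m => G.nbw m x y) 0 := by
  induction k generalizing x with
  | zero => rfl
  | succ k ih =>
    rw [srw, hreg.degree_eq, ← Finset.mul_sum, pow_succ, Module.End.mul_apply,
      ← average_nbw_eq_step hreg hd, map_smul, map_sum, Pi.smul_apply, Finset.sum_apply,
      smul_eq_mul, Finset.sum_congr rfl fun z _ => ih z]

theorem kernel_mul_nbw_le_srw (hreg : G.IsRegularOfDegree d) (hd : 2 ≤ d) (k m : ℕ) (x y : V) :
    ReflectedWalk.kernel (d : ℝ)⁻¹ k m * G.nbw m x y ≤ G.srw k x y := by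
  rw [srw_eq_step_pow_nbw hreg hd]
  exact ReflectedWalk.kernel_mul_le_step_pow (by positivity) (Nat.cast_inv_le_one d)
    (fun j => nbw_nonneg hreg (by omega) j x y) k m

theorem nbw_le_tsum_srw (hreg : G.IsRegularOfDegree d) (hd : 2 ≤ d) {x y : V}
    (hxx : Summable fun k => G.srw k x x) (hxy : Summable fun k => G.srw k x y) (n : ℕ) :
    G.nbw n x y ≤ ∑' k, G.srw (k + n) x y := by
  have hβ0 : (0 : ℝ) < (d : ℝ)⁻¹ := inv_pos.2 (by exact_mod_cast (by omega : 0 < d))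
  have hβ1 : (d : ℝ)⁻¹ ≤ 1 := Nat.cast_inv_le_one d
  have hs : ∀ m, Summable fun k => ReflectedWalk.kernel (d : ℝ)⁻¹ k m :=
    ReflectedWalk.summable_kernel hβ0 hβ1 <| hxx.of_nonneg_of_le
      (fun k => ReflectedWalk.kernel_nonneg hβ0.le hβ1 k 0) fun k => by
        simpa [nbw] using kernel_mul_nbw_le_srw hreg hd k 0 x x
  have hshift : ∑' k, ReflectedWalk.kernel (d : ℝ)⁻¹ k n =
      ∑' k, ReflectedWalk.kernel (d : ℝ)⁻¹ (k + n) n := by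
    rw [← (hs n).sum_add_tsum_nat_add n, Finset.sum_eq_zero, zero_add]
    exact fun k hk => ReflectedWalk.kernel_eq_zero_of_lt (Finset.mem_range.1 hk)
  calc G.nbw n x y
      ≤ (∑' k, ReflectedWalk.kernel (d : ℝ)⁻¹ k n) * G.nbw n x y :=
        le_mul_of_one_le_left (nbw_nonneg hreg (by omega) n x y)
          (ReflectedWalk.one_le_tsum_kernel hβ0.le hβ1 hs n)
    _ = ∑' k, ReflectedWalk.kernel (d : ℝ)⁻¹ (k + n) n * G.nbw n x y := by
        rw [hshift, tsum_mul_right]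
    _ ≤ ∑' k, G.srw (k + n) x y :=
        (((summable_nat_add_iff n).2 (hs n)).mul_right _).tsum_le_tsum
          (fun k => kernel_mul_nbw_le_srw hreg hd (k + n) n x y) ((summable_nat_add_iff n).2 hxy)

theorem nbw_le_spectralRadius_pow_div (hconn : G.Connected) (hreg : G.IsRegularOfDegree d)
    (hd : 2 ≤ d) {x₀ : V} (hρ : G.spectralRadius x₀ < 1) (n : ℕ) (x y : V) :
    G.nbw n x y ≤ G.spectralRadius x₀ ^ n / (1 - G.spectralRadius x₀) := by
  set ρ := G.spectralRadius x₀
  have hρ0 : 0 ≤ ρ := spectralRadius_nonneg x₀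
  have hle (k : ℕ) (v : V) : G.srw k x v ≤ ρ ^ k :=
    srw_le_spectralRadius_pow hconn hreg (by omega) x₀ x v k
  have hs (v : V) : Summable fun k => G.srw k x v :=
    (summable_geometric_of_lt_one hρ0 hρ).of_nonneg_of_le (fun k => srw_nonneg k x v)
      fun k => hle k v
  have hgeom : HasSum (fun k => ρ ^ (k + n)) (ρ ^ n / (1 - ρ)) := by
    simpa only [pow_add, div_eq_inv_mul] using
      (hasSum_geometric_of_lt_one hρ0 hρ).mul_right (ρ ^ n)
  calc G.nbw n x y ≤ ∑' k, G.srw (k + n) x y := nbw_le_tsum_srw hreg hd (hs x) (hs y) n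
    _ ≤ ∑' k, ρ ^ (k + n) := ((summable_nat_add_iff n).2 (hs y)).tsum_le_tsum
        (fun k => hle (k + n) y) hgeom.summable
    _ = ρ ^ n / (1 - ρ) := hgeom.tsum_eq

end RandomWalk

section SelfAvoidingWalk

variable [DecidableEq V] [∀ v, Fintype (G.neighborSet v)] {d : ℕ}

theorem card_filter_finsetWalkLength_succ_le (n : ℕ) (x y : V) (P : G.Walk x y → Prop)
    [DecidablePred P] :
    #{w ∈ G.finsetWalkLength (n + 1) x y | P w} ≤
      ∑ z : G.neighborSet x, #{w ∈ G.finsetWalkLength n z y | P (.cons z.2 w)} := by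
  rw [finsetWalkLength, Finset.filter_biUnion]
  refine Finset.card_biUnion_le.trans (Finset.sum_le_sum fun z _ => ?_)
  rw [Finset.filter_map, Finset.card_map]
  rfl

theorem card_paths_avoiding_succ_le (n : ℕ) (x c y : V) :
    #{w ∈ G.finsetWalkLength (n + 1) c y | w.IsPath ∧ x ∉ w.support} ≤
      ∑ z ∈ (G.neighborFinset c).erase x,
        #{w ∈ G.finsetWalkLength n z y | w.IsPath ∧ c ∉ w.support} := by
  have hfirst (z : G.neighborSet c) :
      #{w ∈ G.finsetWalkLength n z y |
          (Walk.cons z.2 w).IsPath ∧ x ∉ (Walk.cons z.2 w).support} ≤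
        if x = z.1 then 0
        else #{w ∈ G.finsetWalkLength n z y | w.IsPath ∧ c ∉ w.support} := by
    split_ifs with hxz
    · rw [Nat.le_zero, Finset.card_filter_eq_zero_iff]
      rintro w - ⟨-, hx⟩
      exact hx (List.mem_cons_of_mem _ (hxz ▸ w.start_mem_support))
    · exact Finset.card_le_card <| Finset.monotone_filter_right _ fun w _ hw =>
        (Walk.cons_isPath_iff ..).1 hw.1
  have hsum := (card_filter_finsetWalkLength_succ_le n c y
    fun w => w.IsPath ∧ x ∉ w.support).trans (Finset.sum_le_sum fun z _ => hfirst z)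
  rw [← Finset.filter_ne, Finset.sum_filter, neighborFinset_def, ← Finset.sum_set_coe]
  simpa only [ne_eq, ite_not] using hsum

theorem card_paths_avoiding_le_nbwAux (hreg : G.IsRegularOfDegree d) (hd : 2 ≤ d) (n : ℕ)
    (x c y : V) :
    (#{w ∈ G.finsetWalkLength n c y | w.IsPath ∧ x ∉ w.support} : ℝ) ≤
      ((d : ℝ) - 1) ^ n * G.nbwAux n x c y := by
  induction n generalizing x c with
  | zero =>
    rcases eq_or_ne c y with rfl | hcy
    · simpa [finsetWalkLength, nbwAux] using Finset.card_filter_le {(Walk.nil : G.Walk c c)} _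
    · simp [finsetWalkLength, nbwAux, hcy]
  | succ n ih =>
    have hd1 : (d : ℝ) - 1 ≠ 0 := sub_ne_zero.2 (by exact_mod_cast (by omega : d ≠ 1))
    calc (#{w ∈ G.finsetWalkLength (n + 1) c y | w.IsPath ∧ x ∉ w.support} : ℝ)
        ≤ ∑ z ∈ (G.neighborFinset c).erase x,
            (#{w ∈ G.finsetWalkLength n z y | w.IsPath ∧ c ∉ w.support} : ℝ) := by
          exact_mod_cast card_paths_avoiding_succ_le n x c y
      _ ≤ ∑ z ∈ (G.neighborFinset c).erase x, ((d : ℝ) - 1) ^ n * G.nbwAux n c z y :=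
          Finset.sum_le_sum fun z _ => ih c z
      _ = ((d : ℝ) - 1) ^ (n + 1) * G.nbwAux (n + 1) x c y := by
          rw [nbwAux, hreg.degree_eq, ← Finset.mul_sum, ← Finset.mul_sum, pow_succ, mul_assoc,
            mul_inv_cancel_left₀ hd1]

theorem sawCountTo_eq_card_filter (n : ℕ) (x y : V) :
    G.sawCountTo x y n = #{w ∈ G.finsetWalkLength n x y | w.IsPath} :=
  Nat.subtype_card _ fun w => by rw [Finset.mem_filter, mem_finsetWalkLength_iff, and_comm]

theorem sawCountTo_succ_le_sum (n : ℕ) (x y : V) :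
    G.sawCountTo x y (n + 1) ≤ ∑ z ∈ G.neighborFinset x,
      #{w ∈ G.finsetWalkLength n z y | w.IsPath ∧ x ∉ w.support} := by
  rw [sawCountTo_eq_card_filter, neighborFinset_def, ← Finset.sum_set_coe]
  exact (card_filter_finsetWalkLength_succ_le n x y fun w => w.IsPath).trans <|
    Finset.sum_le_sum fun z _ => Finset.card_le_card <|
      Finset.monotone_filter_right _ fun w _ hw => (Walk.cons_isPath_iff ..).1 hw

theorem sawCountTo_le_nbw (hreg : G.IsRegularOfDegree d) (hd : 2 ≤ d) (n : ℕ) (x y : V) :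
    (G.sawCountTo x y n : ℝ) ≤ d / (d - 1) * ((d - 1) ^ n * G.nbw n x y) := by
  have hd1 : (0 : ℝ) < d - 1 := sub_pos.2 (by exact_mod_cast (by omega : 1 < d))
  rcases n with _ | n
  · have hcount : (G.sawCountTo x y 0 : ℝ) ≤ G.nbw 0 x y := by
      rw [sawCountTo_eq_card_filter]
      rcases eq_or_ne x y with rfl | hxy
      · simpa [finsetWalkLength, nbw] using Finset.card_filter_le {(Walk.nil : G.Walk x x)} _
      · simp [finsetWalkLength, nbw, hxy]
    rw [pow_zero, one_mul]
    exact hcount.trans <| le_mul_of_one_le_left (nbw_nonneg hreg (by omega) 0 x y)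
      ((one_le_div hd1).2 (sub_le_self _ zero_le_one))
  · have hd0 : (d : ℝ) ≠ 0 := by exact_mod_cast (by omega : d ≠ 0)
    calc (G.sawCountTo x y (n + 1) : ℝ)
        ≤ ∑ z ∈ G.neighborFinset x,
            (#{w ∈ G.finsetWalkLength n z y | w.IsPath ∧ x ∉ w.support} : ℝ) := by
          exact_mod_cast sawCountTo_succ_le_sum n x y
      _ ≤ ∑ z ∈ G.neighborFinset x, ((d : ℝ) - 1) ^ n * G.nbwAux n x z y :=
          Finset.sum_le_sum fun z _ => card_paths_avoiding_le_nbwAux hreg hd n x z y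
      _ = d / (d - 1) * ((d - 1) ^ (n + 1) * G.nbw (n + 1) x y) := by
          rw [nbw, hreg.degree_eq, ← Finset.mul_sum, ← Finset.mul_sum, pow_succ]
          field_simp

theorem sawCountTo_le_spectralRadius_pow (hconn : G.Connected) (hreg : G.IsRegularOfDegree d)
    (hd : 2 ≤ d) {x₀ : V} (hρ : G.spectralRadius x₀ < 1) (n : ℕ) (x y : V) :
    (G.sawCountTo x y n : ℝ) ≤
      d / ((d - 1) * (1 - G.spectralRadius x₀)) * ((d - 1) * G.spectralRadius x₀) ^ n := by
  have hd1 : (0 : ℝ) < d - 1 := sub_pos.2 (by exact_mod_cast (by omega : 1 < d))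
  calc (G.sawCountTo x y n : ℝ)
      ≤ d / (d - 1) * ((d - 1) ^ n * G.nbw n x y) := sawCountTo_le_nbw hreg hd n x y
    _ ≤ d / (d - 1) * ((d - 1) ^ n * (G.spectralRadius x₀ ^ n / (1 - G.spectralRadius x₀))) := by
        gcongr
        exact nbw_le_spectralRadius_pow_div hconn hreg hd hρ n x y
    _ = _ := by rw [mul_pow]; field_simp

end SelfAvoidingWalk

section Percolation

theorem sawCountTo_eq_zero_of_lt_dist {x y : V} {n : ℕ} (hn : n < G.dist x y) :
    G.sawCountTo x y n = 0 := by
  have : IsEmpty {w : G.Walk x y // w.IsPath ∧ w.length = n} :=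
    ⟨fun w => hn.not_ge (w.2.2 ▸ dist_le w.1)⟩
  exact Nat.card_of_isEmpty

theorem sawGen_le_of_sawCountTo_le {x y : V} {K a z : ℝ} (ha : 0 ≤ a) (hz : 0 ≤ z)
    (hza : z * a < 1) (h : ∀ n, (G.sawCountTo x y n : ℝ) ≤ K * a ^ n) :
    G.sawGen x z y ≤ ENNReal.ofReal (K / (1 - z * a) * (z * a) ^ G.dist x y) := by
  set R := G.dist x y
  have hK : 0 ≤ K := (Nat.cast_nonneg _).trans (by simpa using h 0)
  have hr : 0 ≤ z * a := mul_nonneg hz ha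
  have hgeom : HasSum (fun n => K * (z * a) ^ (n + R)) (K / (1 - z * a) * (z * a) ^ R) := by
    simpa only [pow_add, div_eq_mul_inv, mul_assoc] using
      ((hasSum_geometric_of_lt_one hr hza).mul_right ((z * a) ^ R)).mul_left K
  have hterm (n : ℕ) : (G.sawCountTo x y n : ℝ≥0∞) * ENNReal.ofReal z ^ n ≤
      ENNReal.ofReal (K * (z * a) ^ n) := by
    rw [← ENNReal.ofReal_natCast, ← ENNReal.ofReal_pow hz,
      ← ENNReal.ofReal_mul (Nat.cast_nonneg _)]
    refine ENNReal.ofReal_le_ofReal ?_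
    calc (G.sawCountTo x y n : ℝ) * z ^ n ≤ K * a ^ n * z ^ n := by gcongr; exact h n
      _ = K * (z * a) ^ n := by rw [mul_pow]; ring
  calc G.sawGen x z y
      = ∑' n, (G.sawCountTo x y (n + R) : ℝ≥0∞) * ENNReal.ofReal z ^ (n + R) := by
        rw [sawGen, ← ENNReal.summable.sum_add_tsum_nat_add' (k := R), Finset.sum_eq_zero,
          zero_add]
        intro n hn
        rw [sawCountTo_eq_zero_of_lt_dist (Finset.mem_range.1 hn), Nat.cast_zero, zero_mul]
    _ ≤ ∑' n, ENNReal.ofReal (K * (z * a) ^ (n + R)) := ENNReal.tsum_le_tsum fun n => hterm _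
    _ = ENNReal.ofReal (K / (1 - z * a) * (z * a) ^ R) := by
        rw [← ENNReal.ofReal_tsum_of_nonneg (fun n => by positivity) hgeom.summable, hgeom.tsum_eq]

variable {p : ℝ} {μ : Measure (G.edgeSet → Bool)}

theorem measure_openWalk (hμ : G.IsBernoulliPercolation p μ) {x y : V} {w : G.Walk x y}
    (hw : w.IsTrail) : μ {ω | G.openWalk ω w} = ENNReal.ofReal p ^ w.length := by
  classical
  let s : Finset G.edgeSet := w.edges.toFinset.subtype (· ∈ G.edgeSet)
  have hs : s.card = w.length := by
    rw [Finset.card_subtype, Finset.filter_true_of_mem,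
      List.toFinset_card_of_nodup hw.edges_nodup, w.length_edges]
    exact fun e he => w.edges_subset_edgeSet (List.mem_toFinset.1 he)
  have hevent : {ω | G.openWalk ω w} = {ω | ∀ e ∈ s, ω e = true} := by
    ext ω
    simp only [s, openWalk, Set.mem_ofPred_eq, Finset.mem_subtype, List.mem_toFinset,
      Subtype.forall]
    exact ⟨fun h e _ he => h e he, fun h e he => h e _ he⟩
  rw [hevent, hμ.2 s fun _ => true]
  simp only [if_true, Finset.prod_const, hs]

theorem measure_percConn_le_sawGen [∀ v, Finite (G.neighborSet v)]
    (hμ : G.IsBernoulliPercolation p μ) (x y : V) :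
    μ {ω | G.percConn ω x y} ≤ G.sawGen x p y := by
  classical
  let _ := fun v => Fintype.ofFinite (G.neighborSet v)
  have hcover : {ω | G.percConn ω x y} ⊆
      ⋃ n, ⋃ w : {w : G.Walk x y // w.IsPath ∧ w.length = n}, {ω | G.openWalk ω w.1} := by
    rintro ω ⟨w, hw⟩
    simp only [mem_iUnion]
    exact ⟨_, ⟨w.bypass, w.bypass_isPath, rfl⟩,
      fun e he => hw e (w.edges_bypass_subset_edges he)⟩
  calc μ {ω | G.percConn ω x y}
      ≤ ∑' n, ∑' w : {w : G.Walk x y // w.IsPath ∧ w.length = n}, μ {ω | G.openWalk ω w.1} :=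
        (measure_mono hcover).trans <| (measure_iUnion_le _).trans <|
          ENNReal.tsum_le_tsum fun n => measure_iUnion_le _
    _ = G.sawGen x p y := by
        refine tsum_congr fun n => ?_
        rw [tsum_congr fun w => (measure_openWalk hμ w.2.1.isTrail).trans (by rw [w.2.2]),
          ENNReal.tsum_const, ENat.card_eq_coe_natCard, sawCountTo, ENat.toENNReal_coe]

theorem measure_percConn_le [DecidableEq V] [∀ v, Fintype (G.neighborSet v)]
    (hconn : G.Connected) {d : ℕ} (hd : 2 ≤ d) (hreg : G.IsRegularOfDegree d) {x₀ : V}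
    (hρ : G.spectralRadius x₀ < 1) (hp : 0 ≤ p)
    (hpd : p * ((d : ℝ) - 1) * G.spectralRadius x₀ < 1) (hμ : G.IsBernoulliPercolation p μ)
    (x y : V) :
    μ {ω | G.percConn ω x y} ≤ ENNReal.ofReal
      ((d : ℝ) / (((d : ℝ) - 1) * (1 - G.spectralRadius x₀) *
          (1 - p * ((d : ℝ) - 1) * G.spectralRadius x₀)) *
        (p * ((d : ℝ) - 1) * G.spectralRadius x₀) ^ G.dist x y) := by
  have hd1 : (0 : ℝ) ≤ d - 1 := sub_nonneg.2 (by exact_mod_cast (by omega : 1 ≤ d))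
  rw [mul_assoc] at hpd
  have h := sawGen_le_of_sawCountTo_le (mul_nonneg hd1 (spectralRadius_nonneg x₀)) hp hpd
    fun n => sawCountTo_le_spectralRadius_pow hconn hreg hd hρ n x y
  rw [div_div, ← mul_assoc p] at h
  exact (measure_percConn_le_sawGen hμ x y).trans h

end Percolation

end BondPercolation

/-- two-point function bound. If `p(d-1)ρ < 1` then
`P_p(x ↔ y) ≤ C (p(d-1)ρ)^{dist(x,y)}` with `C = d/((d-1)(1-ρ)(1-p(d-1)ρ))`; in particular the
two-point function tends to `0` as the distance tends to infinity. -/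
theorem stmt_6 {V : Type*} [DecidableEq V] (G : SimpleGraph V)
    [∀ v, Fintype (G.neighborSet v)] [Infinite V] (hconn : G.Connected)
    (d : ℕ) (hd : 2 ≤ d) (hreg : G.IsRegularOfDegree d)
    (x₀ : V) (ρ : ℝ) (hρ : G.spectralRadius x₀ = ρ) (hρ1 : ρ < 1)
    (p : ℝ) (hp : p ∈ Set.Icc (0:ℝ) 1) (hpd : p * ((d : ℝ) - 1) * ρ < 1)
    (μ : MeasureTheory.Measure (G.edgeSet → Bool)) (hμ : G.IsBernoulliPercolation p μ) :
    (∀ x y : V,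
        μ {ω | G.percConn ω x y} ≤
          ENNReal.ofReal
            ((d : ℝ) / (((d : ℝ) - 1) * (1 - ρ) * (1 - p * ((d : ℝ) - 1) * ρ)) *
              (p * ((d : ℝ) - 1) * ρ) ^ (G.dist x y))) ∧
      ∀ ε : ℝ, 0 < ε → ∃ R : ℕ, ∀ x y : V, R ≤ G.dist x y →
        μ {ω | G.percConn ω x y} ≤ ENNReal.ofReal ε := by
  subst hρ
  have hbound := BondPercolation.measure_percConn_le hconn hd hreg hρ1 hp.1 hpd hμ
  refine ⟨hbound, fun ε hε => ?_⟩
  set r := p * ((d : ℝ) - 1) * G.spectralRadius x₀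
  set C := (d : ℝ) / (((d : ℝ) - 1) * (1 - G.spectralRadius x₀) * (1 - r))
  have hr : 0 ≤ r := by
    have hd1 : (0 : ℝ) ≤ d - 1 := sub_nonneg.2 (by exact_mod_cast (by omega : 1 ≤ d))
    exact mul_nonneg (mul_nonneg hp.1 hd1) (BondPercolation.spectralRadius_nonneg x₀)
  have hdecay : Tendsto (fun n : ℕ => C * r ^ n) atTop (nhds 0) := by
    simpa using (tendsto_pow_atTop_nhds_zero_of_lt_one hr hpd).const_mul C
  obtain ⟨R, hR⟩ := eventually_atTop.1 (hdecay.eventually_le_const hε)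
  exact ⟨R, fun x y hxy => (hbound x y).trans (ENNReal.ofReal_le_ofReal (hR _ hxy))⟩
end

section
/- Let G be a d-regular graph with spectral radius ρ < 1 and suppose p_c(d-1)ρ < 1. Then the open triangle condition holds at p_c: Σ_{x,y} P_{p_c}(0 ↔ x) P_{p_c}(x ↔ y) P_{p_c}(y ↔ 0) < ∞. -/
open MeasureTheory Filter Set
open scoped ENNReal

/-!
On the `d`-regular tree covering the graph, a simple random walk escapes along a uniform
non-backtracking ray, whose `n`-th vertex it visits at some time `≥ n`; hence the non-backtracking
kernel satisfies `qⁿ(x, y) ≤ ∑_{j ≥ n} pʲ(x, y)`. Without the tree, this follows by induction on `n`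
from a Harnack inequality for superharmonic functions across an edge. Counting open self-avoiding
paths then bounds `P_p(x ↔ y)` by a multiple of the Green function `∑ₙ lⁿ pⁿ(x, y)` for any `l ≥ 1`
with `p (d - 1) < l`. Choose moreover `l r < 1` with `r` above the spectral radius. By
Chapman–Kolmogorov, the Green operator preserves the bound `Pⁿ f(x₀) = O(rⁿ)`, which `δ_{x₀}`
satisfies; the open triangle sum is dominated by three applications of this operator to `δ_{x₀}`,
evaluated at `x₀`.
-/

namespace Percolation

section Prerequisites

lemma exists_gt_gt_mul_lt_one {a b : ℝ} (ha : 0 < a) (hb : 0 ≤ b) (hab : a * b < 1) :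
    ∃ a' > a, ∃ b' > b, a' * b' < 1 := by
  obtain ⟨b', hb', hab'⟩ := exists_between ((lt_div_iff₀' ha).2 hab)
  have hb'0 : 0 < b' := hb.trans_lt hb'
  obtain ⟨a', ha', hab''⟩ := exists_between ((lt_div_iff₀ hb'0).2 ((lt_div_iff₀' ha).1 hab'))
  exact ⟨a', ha', b', hb', (lt_div_iff₀ hb'0).1 hab''⟩

lemma max_one_mul_max_zero_lt_one {a b : ℝ} (hb : b < 1) (hab : a * b < 1) :
    max 1 a * max b 0 < 1 := by
  rcases max_choice b 0 with h | h <;> rcases max_choice 1 a with h' | h' <;>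
    simp [h, h', hb, hab]

end Prerequisites

variable {V : Type*} [DecidableEq V] {G : SimpleGraph V} [∀ v, Fintype (G.neighborSet v)]

section SimpleRandomWalk

lemma srw_nonneg (n : ℕ) (x y : V) : 0 ≤ G.srw n x y := by
  induction n generalizing x with
  | zero => simp only [SimpleGraph.srw]; positivity
  | succ n ih => exact Finset.sum_nonneg fun z _ => mul_nonneg (by positivity) (ih z)

lemma srw_le_one (n : ℕ) (x y : V) : G.srw n x y ≤ 1 := by
  induction n generalizing x with
  | zero => simp only [SimpleGraph.srw]; split_ifs <;> norm_num
  | succ n ih =>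
    calc G.srw (n + 1) x y ≤ ∑ _z ∈ G.neighborFinset x, (G.degree x : ℝ)⁻¹ * 1 :=
          Finset.sum_le_sum fun z _ => mul_le_mul_of_nonneg_left (ih z) (by positivity)
      _ = G.degree x * (G.degree x : ℝ)⁻¹ := by simp
      _ ≤ 1 := mul_inv_le_one

lemma hasSum_srw_mul_srw (m n : ℕ) (x y : V) :
    HasSum (fun z => G.srw m x z * G.srw n z y) (G.srw (m + n) x y) := by
  induction m generalizing x with
  | zero =>
    have h := hasSum_single (f := fun z => G.srw 0 x z * G.srw n z y) x fun z hz => by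
      simp [SimpleGraph.srw, hz.symm]
    simpa [SimpleGraph.srw] using h
  | succ m ih =>
    simp only [Nat.succ_add, SimpleGraph.srw, Finset.sum_mul, mul_assoc]
    exact hasSum_sum fun z _ => (ih z).mul_left _

lemma srw_mul_srw_le (m n : ℕ) (x z y : V) :
    G.srw m x z * G.srw n z y ≤ G.srw (m + n) x y :=
  le_hasSum (hasSum_srw_mul_srw m n x y) z fun _ _ => mul_nonneg (srw_nonneg ..) (srw_nonneg ..)

lemma srw_length_pos {x y : V} (w : G.Walk x y) : 0 < G.srw w.length x y := by
  induction w with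
  | nil => simp [SimpleGraph.srw]
  | @cons x z y hxz w ih =>
    refine Finset.sum_pos' (fun _ _ => mul_nonneg (by positivity) (srw_nonneg ..))
      ⟨z, (G.mem_neighborFinset x z).2 hxz, mul_pos (inv_pos.2 ?_) ih⟩
    exact_mod_cast (G.degree_pos_iff_exists_adj x).2 ⟨z, hxz⟩

lemma summable_srw {x₀ : V} (hconn : G.Connected) (h : Summable fun n => G.srw n x₀ x₀)
    (x y : V) : Summable fun n => G.srw n x y := by
  obtain ⟨v⟩ := hconn.preconnected x₀ x
  obtain ⟨w⟩ := hconn.preconnected y x₀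
  have hv := srw_length_pos v
  have hw := srw_length_pos w
  generalize v.length = a at hv
  generalize w.length = b at hw
  have hdetour (n : ℕ) :
      G.srw a x₀ x * G.srw n x y * G.srw b y x₀ ≤ G.srw (n + (a + b)) x₀ x₀ := by
    rw [← add_assoc, add_comm n a]
    exact (mul_le_mul_of_nonneg_right (srw_mul_srw_le a n x₀ x y) hw.le).trans
      (srw_mul_srw_le (a + n) b x₀ y x₀)
  have hscaled : Summable fun n => G.srw a x₀ x * G.srw n x y * G.srw b y x₀ :=
    Summable.of_nonneg_of_le
      (fun n => mul_nonneg (mul_nonneg hv.le (srw_nonneg n x y)) hw.le) hdetour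
      ((summable_nat_add_iff (a + b)).2 h)
  rwa [summable_mul_right_iff hw.ne', summable_mul_left_iff hv.ne'] at hscaled

end SimpleRandomWalk

section SpectralRadius

lemma exists_srw_two_mul_le {x : V} {r : ℝ} (hr : 0 < r) (h : G.spectralRadius x < r) :
    ∃ C > 0, ∀ n, G.srw (2 * n) x x ≤ C * r ^ (2 * n) := by
  have hbdd : IsBoundedUnder (· ≤ ·) atTop
      fun n : ℕ => G.srw (2 * n) x x ^ ((2 * n : ℝ))⁻¹ :=
    isBoundedUnder_of ⟨1, fun n => Real.rpow_le_one (srw_nonneg ..) (srw_le_one ..) (by positivity)⟩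
  have hO : (fun n => G.srw (2 * n) x x) =O[atTop] fun n => r ^ (2 * n) := by
    refine Asymptotics.IsBigO.of_bound' ?_
    filter_upwards [eventually_lt_of_limsup_lt h hbdd, eventually_gt_atTop 0] with n hn hn0
    rw [Real.norm_of_nonneg (srw_nonneg ..), Real.norm_of_nonneg (by positivity)]
    have := (Real.rpow_inv_le_iff_of_pos (srw_nonneg ..) hr.le (by positivity)).1 hn.le
    exact_mod_cast this
  obtain ⟨C, hC, hle⟩ := Asymptotics.bound_of_isBigO_nat_atTop hO
  refine ⟨C, hC, fun n => ?_⟩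
  have := hle (x := n) (by positivity)
  rwa [Real.norm_of_nonneg (srw_nonneg ..), Real.norm_of_nonneg (by positivity)] at this

-- `spectralRadius` sees even times only; a closed walk of odd length, if any, links the parities.
lemma exists_srw_self_le {x : V} {r : ℝ} (hr : 0 < r) (h : G.spectralRadius x < r) :
    ∃ C, ∀ n, G.srw n x x ≤ C * r ^ n := by
  obtain ⟨C, hC, heven⟩ := exists_srw_two_mul_le hr h
  obtain ⟨D, hD, hodd⟩ : ∃ D, 0 ≤ D ∧ ∀ n, Odd n → G.srw n x x ≤ D * r ^ n := by
    by_cases hm : ∃ m, Odd m ∧ 0 < G.srw m x x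
    · obtain ⟨m, hm, hpos⟩ := hm
      refine ⟨C * r ^ m / G.srw m x x, by positivity, fun n hn => ?_⟩
      obtain ⟨k, hk⟩ := (hn.add_odd hm).two_dvd
      rw [div_mul_eq_mul_div, le_div_iff₀ hpos, mul_assoc, ← pow_add, add_comm m, hk]
      exact (srw_mul_srw_le ..).trans (hk ▸ heven k)
    · push Not at hm
      exact ⟨0, le_rfl, fun n hn => by simpa using hm n hn⟩
  refine ⟨C + D, fun n => ?_⟩
  rw [add_mul]
  rcases n.even_or_odd' with ⟨k, rfl | rfl⟩
  · exact (heven k).trans (le_add_of_nonneg_right (by positivity))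
  · exact (hodd _ ⟨k, rfl⟩).trans (le_add_of_nonneg_left (by positivity))

end SpectralRadius

section Harnack

variable {d : ℕ}

lemma sub_one_mul_le_sum_erase (hd : 1 ≤ d) (hreg : G.IsRegularOfDegree d) {u c : V}
    (huc : G.Adj u c) {f : V → ℝ} {a : ℝ} (h : ∀ z, G.Adj c z → a ≤ f z) :
    ((d : ℝ) - 1) * a ≤ ∑ z ∈ (G.neighborFinset c).erase u, f z := by
  have hcard : (((G.neighborFinset c).erase u).card : ℝ) = d - 1 := by
    rw [Finset.card_erase_of_mem ((G.mem_neighborFinset c u).2 huc.symm),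
      G.card_neighborFinset_eq_degree, hreg.degree_eq, Nat.cast_sub hd, Nat.cast_one]
  rw [← hcard, ← nsmul_eq_mul]
  exact Finset.card_nsmul_le_sum _ _ _ fun z hz =>
    h z ((G.mem_neighborFinset c z).1 (Finset.mem_of_mem_erase hz))

omit [DecidableEq V] in
lemma superharmonic_le_of_adj (hd : 2 ≤ d) (hreg : G.IsRegularOfDegree d) {h : V → ℝ}
    (h0 : ∀ v, 0 ≤ h v) (hsuper : ∀ c, ∑ z ∈ G.neighborFinset c, h z ≤ d * h c) {u c : V}
    (huc : G.Adj u c) : h u ≤ (d - 1) * h c := by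
  classical
  have hd2 : (2 : ℝ) ≤ d := by exact_mod_cast hd
  -- Summing the bound with factor `k` over the edges at `c` other than `u c` yields the same bound
  -- with factor `1 + k (d - 1) ≥ k + 1`.
  have hdefect (k : ℕ) : ∀ {u c}, G.Adj u c → k * (h u - (d - 1) * h c) ≤ h c := by
    induction k with
    | zero => intro u c _; simpa using h0 c
    | succ k ih =>
      intro u c huc
      have hsum := sub_one_mul_le_sum_erase (by lia) hreg huc
        (f := fun z => (1 + k * ((d : ℝ) - 1)) * h z) (a := k * h c)
        fun z hz => by linarith [ih hz]
      have hc := hsuper c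
      rw [← Finset.add_sum_erase _ h ((G.mem_neighborFinset c u).2 huc.symm)] at hc
      rw [← Finset.mul_sum] at hsum
      have hk : (0 : ℝ) ≤ k * ((d : ℝ) - 1) := mul_nonneg k.cast_nonneg (by linarith)
      have himproved : (1 + k * ((d : ℝ) - 1)) * (h u - (d - 1) * h c) ≤ h c := by
        nlinarith [mul_le_mul_of_nonneg_left hc (add_nonneg zero_le_one hk)]
      rcases le_total (h u - (d - 1) * h c) 0 with hneg | hpos
      · exact (mul_nonpos_of_nonneg_of_nonpos (by positivity) hneg).trans (h0 c)
      · refine (mul_le_mul_of_nonneg_right ?_ hpos).trans himproved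
        push_cast
        nlinarith [k.cast_nonneg (α := ℝ)]
  by_contra! hlt
  obtain ⟨k, hk⟩ := exists_nat_gt (h c / (h u - (d - 1) * h c))
  exact absurd (hdefect k huc) (not_le.2 ((div_lt_iff₀ (sub_pos.2 hlt)).1 hk))

end Harnack

section NonBacktracking

/-- The expected number of visits of the simple random walk from `x` to `y` at times `≥ n`.
It is real-valued, hence meaningful only where the return probabilities are summable. -/
noncomputable def srwTail (G : SimpleGraph V) [∀ v, Fintype (G.neighborSet v)]
    (n : ℕ) (x y : V) : ℝ :=
  ∑' j, G.srw (n + j) x y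

variable {d : ℕ} {y : V}

lemma srwTail_nonneg (n : ℕ) (x y : V) : 0 ≤ srwTail G n x y :=
  tsum_nonneg fun _ => srw_nonneg ..

lemma srw_add_srwTail_succ (hsum : ∀ x, Summable fun n => G.srw n x y) (n : ℕ) (x : V) :
    G.srw n x y + srwTail G (n + 1) x y = srwTail G n x y := by
  have hn : Summable fun j => G.srw (n + j) x y := by
    simpa only [add_comm n] using (summable_nat_add_iff n).2 (hsum x)
  rw [srwTail, srwTail, hn.tsum_eq_zero_add, add_zero]
  simp only [add_assoc, add_comm 1]

lemma srwTail_succ_le (hsum : ∀ x, Summable fun n => G.srw n x y) (n : ℕ) (x : V) :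
    srwTail G (n + 1) x y ≤ srwTail G n x y := by
  linarith [srw_add_srwTail_succ hsum n x, srw_nonneg (G := G) n x y]

lemma mul_srwTail_succ (hd : d ≠ 0) (hreg : G.IsRegularOfDegree d)
    (hsum : ∀ x, Summable fun n => G.srw n x y) (n : ℕ) (x : V) :
    d * srwTail G (n + 1) x y = ∑ z ∈ G.neighborFinset x, srwTail G n z y := by
  have hn (z : V) : Summable fun j => G.srw (n + j) z y := by
    simpa only [add_comm n] using (summable_nat_add_iff n).2 (hsum z)
  have hd' : (d : ℝ) ≠ 0 := Nat.cast_ne_zero.2 hd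
  simp only [srwTail, Nat.succ_add, SimpleGraph.srw, hreg.degree_eq]
  rw [Summable.tsum_finsetSum fun z _ => (hn z).mul_left _]
  simp only [tsum_mul_left, ← Finset.mul_sum, mul_inv_cancel_left₀ hd']

lemma srwTail_zero_le_of_adj (hd : 2 ≤ d) (hreg : G.IsRegularOfDegree d)
    (hsum : ∀ x, Summable fun n => G.srw n x y) {u c : V} (huc : G.Adj u c) :
    srwTail G 0 u y ≤ (d - 1) * srwTail G 0 c y :=
  superharmonic_le_of_adj hd hreg (srwTail_nonneg 0 · y)
    (fun c => (mul_srwTail_succ (by lia) hreg hsum 0 c).symm.trans_le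
      (mul_le_mul_of_nonneg_left (srwTail_succ_le hsum 0 c) d.cast_nonneg)) huc

lemma three_le_of_summable_srw (hd : 2 ≤ d) (hreg : G.IsRegularOfDegree d)
    (hsum : ∀ x, Summable fun n => G.srw n x y) : 3 ≤ d := by
  by_contra! hlt
  obtain rfl : d = 2 := by lia
  have hharnack (z : V) (hz : z ∈ G.neighborFinset y) : srwTail G 0 y y ≤ srwTail G 0 z y := by
    have := srwTail_zero_le_of_adj hd hreg hsum ((G.mem_neighborFinset y z).1 hz)
    norm_num at this
    exact this
  have hnbrs := Finset.card_nsmul_le_sum _ _ _ hharnack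
  rw [← mul_srwTail_succ (by lia) hreg hsum, G.card_neighborFinset_eq_degree, hreg.degree_eq,
    nsmul_eq_mul] at hnbrs
  have hself : 1 + srwTail G 1 y y = srwTail G 0 y y := by
    simpa [SimpleGraph.srw] using srw_add_srwTail_succ hsum 0 y
  push_cast at hnbrs
  linarith

-- In the universal cover a walk from `c` reaches `u` with probability `1 / (d - 1)`; otherwise it
-- escapes along a uniform non-backtracking ray, whose `n`-th vertex it visits at a time `≥ n`.
lemma nbwAux_add_srwTail_le (hd : 2 ≤ d) (hreg : G.IsRegularOfDegree d)
    (hsum : ∀ x, Summable fun n => G.srw n x y) (n : ℕ) {u c : V} (huc : G.Adj u c) :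
    (d - 2) * G.nbwAux n u c y + srwTail G n u y ≤ (d - 1) * srwTail G n c y := by
  have hd2 : (2 : ℝ) ≤ d := by exact_mod_cast hd
  have hd1 : (0 : ℝ) < d - 1 := by linarith
  have hsplit (n : ℕ) {u c : V} (huc : G.Adj u c) : d * srwTail G (n + 1) c y =
      srwTail G n u y + ∑ z ∈ (G.neighborFinset c).erase u, srwTail G n z y := by
    rw [mul_srwTail_succ (by lia) hreg hsum,
      Finset.add_sum_erase _ (srwTail G n · y) ((G.mem_neighborFinset c u).2 huc.symm)]
  induction n generalizing u c with
  | zero =>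
    have hothers := sub_one_mul_le_sum_erase (by lia) hreg huc
      (f := fun z => (d - 1) * srwTail G 0 z y)
      fun z hz => srwTail_zero_le_of_adj hd hreg hsum hz
    rw [← Finset.mul_sum, mul_le_mul_iff_right₀ hd1] at hothers
    have hnbw : G.nbwAux 0 u c y = G.srw 0 c y := rfl
    nlinarith [hsplit 0 huc, srw_add_srwTail_succ hsum 0 c, srw_nonneg (G := G) 0 c y]
  | succ n ih =>
    have hothers := sub_one_mul_le_sum_erase (by lia) hreg huc
      (f := fun z => (d - 1) * srwTail G n z y - (d - 2) * G.nbwAux n c z y)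
      (a := srwTail G n c y) fun z hz => by linarith [ih hz]
    have hnbw : ∑ z ∈ (G.neighborFinset c).erase u, G.nbwAux n c z y =
        (d - 1) * G.nbwAux (n + 1) u c y := by
      rw [SimpleGraph.nbwAux, hreg.degree_eq, ← Finset.mul_sum, mul_inv_cancel_left₀ hd1.ne']
    rw [Finset.sum_sub_distrib, ← Finset.mul_sum, ← Finset.mul_sum, hnbw, mul_left_comm,
      ← mul_sub, mul_le_mul_iff_right₀ hd1] at hothers
    linarith [hsplit n huc, srwTail_succ_le hsum n c, srwTail_succ_le hsum n u]

lemma nbw_le_srwTail (hd : 2 ≤ d) (hreg : G.IsRegularOfDegree d)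
    (hsum : ∀ x, Summable fun n => G.srw n x y) (n : ℕ) (x : V) :
    G.nbw n x y ≤ srwTail G n x y := by
  cases n with
  | zero =>
    have hnbw : G.nbw 0 x y = G.srw 0 x y := rfl
    linarith [srw_add_srwTail_succ hsum 0 x, srwTail_nonneg (G := G) 1 x y]
  | succ n =>
    have hd3 : (3 : ℝ) ≤ d := by exact_mod_cast three_le_of_summable_srw hd hreg hsum
    have hd0 : (0 : ℝ) < d := by linarith
    have hnbrs := Finset.sum_le_sum fun z (hz : z ∈ G.neighborFinset x) =>
      nbwAux_add_srwTail_le hd hreg hsum n ((G.mem_neighborFinset x z).1 hz)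
    have hnbw : ∑ z ∈ G.neighborFinset x, G.nbwAux n x z y = d * G.nbw (n + 1) x y := by
      rw [SimpleGraph.nbw, hreg.degree_eq, ← Finset.mul_sum, mul_inv_cancel_left₀ hd0.ne']
    rw [Finset.sum_add_distrib, ← Finset.mul_sum, ← Finset.mul_sum, Finset.sum_const, hnbw,
      ← mul_srwTail_succ (by lia) hreg hsum, G.card_neighborFinset_eq_degree, hreg.degree_eq,
      nsmul_eq_mul, mul_left_comm, ← mul_add, mul_left_comm, mul_le_mul_iff_right₀ hd0] at hnbrs
    have : (d - 2) * G.nbw (n + 1) x y ≤ (d - 2) * srwTail G (n + 1) x y := by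
      linarith [srwTail_succ_le hsum n x]
    exact le_of_mul_le_mul_left this (by linarith)

end NonBacktracking

section Green

/-- The Green function `∑ₙ lⁿ pⁿ(x, y)` of the simple random walk. -/
noncomputable def green (G : SimpleGraph V) [∀ v, Fintype (G.neighborSet v)]
    (l : ℝ≥0∞) (x y : V) : ℝ≥0∞ :=
  ∑' n, l ^ n * ENNReal.ofReal (G.srw n x y)

/-- The `n`-step transition operator of the simple random walk, applied to `f` at `x`. -/
noncomputable def srwOp (G : SimpleGraph V) [∀ v, Fintype (G.neighborSet v)]
    (n : ℕ) (f : V → ℝ≥0∞) (x : V) : ℝ≥0∞ :=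
  ∑' y, ENNReal.ofReal (G.srw n x y) * f y

lemma srwOp_zero (f : V → ℝ≥0∞) (x : V) : srwOp G 0 f x = f x := by
  rw [srwOp, tsum_eq_single x fun y hy => by simp [SimpleGraph.srw, hy.symm]]
  simp [SimpleGraph.srw]

lemma srwOp_single (n : ℕ) (x y : V) :
    srwOp G n (Pi.single y 1) x = ENNReal.ofReal (G.srw n x y) := by
  rw [srwOp, tsum_eq_single y fun z hz => by simp [hz]]
  simp

lemma srwOp_srwOp (m n : ℕ) (f : V → ℝ≥0∞) (x : V) :
    srwOp G m (srwOp G n f) x = srwOp G (m + n) f x := by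
  have hck (y : V) : ∑' z, ENNReal.ofReal (G.srw m x z) * ENNReal.ofReal (G.srw n z y) =
      ENNReal.ofReal (G.srw (m + n) x y) := by
    have h := hasSum_srw_mul_srw (G := G) m n x y
    simp only [← h.tsum_eq, ← ENNReal.ofReal_mul (srw_nonneg ..)]
    exact (ENNReal.ofReal_tsum_of_nonneg
      (fun z => mul_nonneg (srw_nonneg ..) (srw_nonneg ..)) h.summable).symm
  simp only [srwOp, ← ENNReal.tsum_mul_left, ← mul_assoc, ← hck, ← ENNReal.tsum_mul_right]
  exact ENNReal.tsum_comm

lemma tsum_green_mul (l : ℝ≥0∞) (f : V → ℝ≥0∞) (x : V) :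
    ∑' y, green G l x y * f y = ∑' n, l ^ n * srwOp G n f x := by
  simp only [green, srwOp, ← ENNReal.tsum_mul_left, ← ENNReal.tsum_mul_right, mul_assoc]
  exact ENNReal.tsum_comm

lemma srwOp_tsum_green_mul (l : ℝ≥0∞) (n : ℕ) (f : V → ℝ≥0∞) (x : V) :
    srwOp G n (fun z => ∑' y, green G l z y * f y) x = ∑' k, l ^ k * srwOp G (n + k) f x := by
  simp only [tsum_green_mul, ← srwOp_srwOp]
  rw [srwOp]
  simp only [← ENNReal.tsum_mul_left, mul_left_comm _ (l ^ _)]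
  rw [ENNReal.tsum_comm]
  simp only [ENNReal.tsum_mul_left]
  rfl

lemma srwOp_tsum_green_mul_le {l C r : ℝ≥0∞} {f : V → ℝ≥0∞} {x : V}
    (h : ∀ n, srwOp G n f x ≤ C * r ^ n) (n : ℕ) :
    srwOp G n (fun z => ∑' y, green G l z y * f y) x ≤ C * (1 - l * r)⁻¹ * r ^ n :=
  calc _ = ∑' k, l ^ k * srwOp G (n + k) f x := srwOp_tsum_green_mul ..
    _ ≤ ∑' k, C * r ^ n * (l * r) ^ k := by
        refine ENNReal.tsum_le_tsum fun k => (mul_le_mul_right (h (n + k)) _).trans_eq ?_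
        ring
    _ = C * (1 - l * r)⁻¹ * r ^ n := by
        rw [ENNReal.tsum_mul_left, ENNReal.tsum_geometric, mul_right_comm]

lemma tsum_green_triangle_lt_top {l C r : ℝ≥0∞} {x : V} (hC : C ≠ ⊤) (hlr : l * r < 1)
    (h : ∀ n, ENNReal.ofReal (G.srw n x x) ≤ C * r ^ n) :
    ∑' y, green G l x y * ∑' z, green G l y z * green G l z x < ⊤ := by
  have hgreen (z : V) : green G l z x = ∑' y, green G l z y * (Pi.single x 1 : V → ℝ≥0∞) y := by
    rw [tsum_green_mul]
    simp only [srwOp_single]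
    rfl
  have hdecay := srwOp_tsum_green_mul_le (l := l) (srwOp_tsum_green_mul_le (l := l)
    (srwOp_tsum_green_mul_le (l := l) fun n => (srwOp_single n x x).trans_le (h n))) 0
  simp only [← hgreen, srwOp_zero, pow_zero, mul_one] at hdecay
  have hinv : (1 - l * r)⁻¹ < ⊤ := ENNReal.inv_lt_top.2 (tsub_pos_of_lt hlr)
  exact hdecay.trans_lt
    (ENNReal.mul_lt_top (ENNReal.mul_lt_top (ENNReal.mul_lt_top hC.lt_top hinv) hinv) hinv)

lemma ofReal_pow_mul_srwTail_le_green {l : ℝ} (hl : 1 ≤ l) {x y : V}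
    (hsum : Summable fun n => G.srw n x y) (n : ℕ) :
    ENNReal.ofReal (l ^ n * srwTail G n x y) ≤ green G (ENNReal.ofReal l) x y := by
  have hl0 : 0 ≤ l := zero_le_one.trans hl
  have hn : Summable fun j => G.srw (n + j) x y := by
    simpa only [add_comm n] using (summable_nat_add_iff n).2 hsum
  rw [srwTail, ← tsum_mul_left, ENNReal.ofReal_tsum_of_nonneg
    (fun _ => mul_nonneg (by positivity) (srw_nonneg ..)) (hn.mul_left _)]
  calc ∑' j, ENNReal.ofReal (l ^ n * G.srw (n + j) x y)
      ≤ ∑' j, ENNReal.ofReal l ^ (n + j) * ENNReal.ofReal (G.srw (n + j) x y) := by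
        refine ENNReal.tsum_le_tsum fun j => ?_
        rw [← ENNReal.ofReal_pow hl0, ← ENNReal.ofReal_mul (by positivity)]
        exact ENNReal.ofReal_le_ofReal (mul_le_mul_of_nonneg_right
          (pow_le_pow_right₀ hl (n.le_add_right j)) (srw_nonneg ..))
    _ ≤ green G (ENNReal.ofReal l) x y :=
        ENNReal.tsum_comp_le_tsum_of_injective (add_right_injective n) _

end Green

section SelfAvoiding

lemma card_filter_finsetWalkLength_succ_le {n : ℕ} {x y : V} {P : G.Walk x y → Prop}
    [DecidablePred P] {Q : ∀ z, G.Walk z y → Prop} [∀ z, DecidablePred (Q z)]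
    (h : ∀ z (hz : G.Adj x z) (w : G.Walk z y), P (.cons hz w) → Q z w) :
    ((G.finsetWalkLength (n + 1) x y).filter P).card ≤
      ∑ z ∈ G.neighborFinset x, ((G.finsetWalkLength n z y).filter (Q z)).card := by
  rw [SimpleGraph.neighborFinset, ← Finset.sum_set_coe, SimpleGraph.finsetWalkLength,
    Finset.filter_biUnion]
  refine Finset.card_biUnion_le.trans (Finset.sum_le_sum fun z _ => ?_)
  rw [Finset.filter_map, Finset.card_map]
  exact Finset.card_le_card (Finset.monotone_filter_right _ fun w _ => h z z.2 w)

lemma card_path_le_sum_neighborFinset (n : ℕ) (x y : V) :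
    ((G.finsetWalkLength (n + 1) x y).filter fun w => w.IsPath).card ≤
      ∑ z ∈ G.neighborFinset x,
        ((G.finsetWalkLength n z y).filter fun w => w.IsPath ∧ x ∉ w.support).card :=
  card_filter_finsetWalkLength_succ_le fun _ hz w => (SimpleGraph.Walk.cons_isPath_iff hz w).1

lemma card_avoiding_le_sum_erase (n : ℕ) (u c y : V) :
    ((G.finsetWalkLength (n + 1) c y).filter fun w => w.IsPath ∧ u ∉ w.support).card ≤
      ∑ z ∈ (G.neighborFinset c).erase u,
        ((G.finsetWalkLength n z y).filter fun w => w.IsPath ∧ c ∉ w.support).card := by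
  let Q (z : V) (w : G.Walk z y) : Prop := (w.IsPath ∧ c ∉ w.support) ∧ u ∉ w.support
  have hstart : ((G.finsetWalkLength n u y).filter (Q u)).card = 0 := by simp [Q]
  calc _ ≤ ∑ z ∈ G.neighborFinset c, ((G.finsetWalkLength n z y).filter (Q z)).card :=
        card_filter_finsetWalkLength_succ_le fun z hz w hw =>
          ⟨(SimpleGraph.Walk.cons_isPath_iff hz w).1 hw.1, List.not_mem_of_not_mem_cons hw.2⟩
    _ = ∑ z ∈ (G.neighborFinset c).erase u, ((G.finsetWalkLength n z y).filter (Q z)).card := by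
        rw [Finset.sum_erase]
        exact hstart
    _ ≤ _ := Finset.sum_le_sum fun z _ =>
        Finset.card_le_card (Finset.monotone_filter_right _ fun w _ hw => hw.1)

lemma card_avoiding_le_nbwAux {d : ℕ} (hd : 2 ≤ d) (hreg : G.IsRegularOfDegree d)
    (n : ℕ) (u c y : V) :
    (((G.finsetWalkLength n c y).filter fun w => w.IsPath ∧ u ∉ w.support).card : ℝ) ≤
      (d - 1) ^ n * G.nbwAux n u c y := by
  have hd1 : (0 : ℝ) < d - 1 := by
    have : (2 : ℝ) ≤ d := by exact_mod_cast hd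
    linarith
  induction n generalizing u c with
  | zero =>
    refine (Nat.cast_le.2 (Finset.card_filter_le _ _)).trans ?_
    rcases eq_or_ne c y with rfl | h <;>
      simp [SimpleGraph.finsetWalkLength, SimpleGraph.nbwAux, *]
  | succ n ih =>
    calc _ ≤ ∑ z ∈ (G.neighborFinset c).erase u, (d - 1 : ℝ) ^ n * G.nbwAux n c z y :=
          (Nat.cast_le.2 (card_avoiding_le_sum_erase n u c y)).trans
            (by push_cast; exact Finset.sum_le_sum fun z _ => ih c z)
      _ = (d - 1) ^ (n + 1) * G.nbwAux (n + 1) u c y := by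
          rw [SimpleGraph.nbwAux, hreg.degree_eq, ← Finset.mul_sum, ← Finset.mul_sum, pow_succ,
            mul_assoc, mul_inv_cancel_left₀ hd1.ne']

lemma sawCountTo_eq_card (x y : V) (n : ℕ) :
    G.sawCountTo x y n = ((G.finsetWalkLength n x y).filter fun w => w.IsPath).card :=
  Nat.subtype_card _ fun w => by
    rw [Finset.mem_filter, G.mem_finsetWalkLength_iff, and_comm]

lemma sawCountTo_le {d : ℕ} (hd : 2 ≤ d) (hreg : G.IsRegularOfDegree d) (n : ℕ) (x y : V) :
    (G.sawCountTo x y n : ℝ) ≤ d * (d - 1) ^ (n - 1) * G.nbw n x y := by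
  have hd0 : (1 : ℝ) ≤ d := by exact_mod_cast one_le_two.trans hd
  rw [sawCountTo_eq_card]
  cases n with
  | zero =>
    refine (Nat.cast_le.2 (Finset.card_filter_le _ _)).trans ?_
    rcases eq_or_ne x y with rfl | h <;>
      simp [SimpleGraph.finsetWalkLength, SimpleGraph.nbw, *]
  | succ n =>
    calc _ ≤ ∑ z ∈ G.neighborFinset x, (d - 1 : ℝ) ^ n * G.nbwAux n x z y :=
          (Nat.cast_le.2 (card_path_le_sum_neighborFinset n x y)).trans (by
            push_cast
            exact Finset.sum_le_sum fun z _ => card_avoiding_le_nbwAux hd hreg n x z y)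
      _ = _ := by
          rw [SimpleGraph.nbw, hreg.degree_eq, ← Finset.mul_sum, ← Finset.mul_sum,
            Nat.add_sub_cancel, mul_right_comm, mul_assoc, mul_assoc]
          field_simp

end SelfAvoiding

section TwoPoint

variable {p : ℝ} {μ : Measure (G.edgeSet → Bool)}

omit [DecidableEq V] [∀ v, Fintype (G.neighborSet v)] in
lemma measure_openWalk (hμ : G.IsBernoulliPercolation p μ) {x y : V} {w : G.Walk x y}
    (hw : w.IsTrail) : μ {ω | G.openWalk ω w} = ENNReal.ofReal p ^ w.length := by
  classical
  let s : Finset G.edgeSet := w.edges.toFinset.subtype (· ∈ G.edgeSet)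
  have hopen : {ω | G.openWalk ω w} = {ω | ∀ e ∈ s, ω e = true} := by
    ext ω
    simp only [SimpleGraph.openWalk, s, Finset.mem_subtype, List.mem_toFinset, Subtype.forall]
    exact ⟨fun h e _ he => h e he, fun h e he => h e (w.edges_subset_edgeSet he) he⟩
  have hcard : s.card = w.length := by
    rw [Finset.card_subtype, Finset.filter_true_of_mem
      fun e he => w.edges_subset_edgeSet (List.mem_toFinset.1 he),
      List.toFinset_card_of_nodup hw.edges_nodup, w.length_edges]
  rw [hopen, hμ.2 s fun _ => true]
  simp [hcard]

omit [DecidableEq V] [∀ v, Fintype (G.neighborSet v)] in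
lemma measure_percConn_le_sawGen [∀ v, Finite (G.neighborSet v)]
    (hμ : G.IsBernoulliPercolation p μ) (x y : V) :
    μ {ω | G.percConn ω x y} ≤ G.sawGen x p y := by
  classical
  have (v : V) := Fintype.ofFinite (G.neighborSet v)
  let paths (n : ℕ) := (G.finsetWalkLength n x y).filter fun w => w.IsPath
  have hcover : {ω | G.percConn ω x y} ⊆ ⋃ n, ⋃ w ∈ paths n, {ω | G.openWalk ω w} := by
    rintro ω ⟨w, hw⟩
    simp only [mem_iUnion, paths, Finset.mem_filter, G.mem_finsetWalkLength_iff]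
    exact ⟨_, w.bypass, ⟨rfl, w.bypass_isPath⟩, fun e he => hw e (w.edges_bypass_subset_edges he)⟩
  have hpath {n : ℕ} {w : G.Walk x y} (hw : w ∈ paths n) :
      μ {ω | G.openWalk ω w} = ENNReal.ofReal p ^ n := by
    obtain ⟨hlen, hw⟩ := Finset.mem_filter.1 hw
    rw [measure_openWalk hμ hw.isTrail, G.mem_finsetWalkLength_iff.1 hlen]
  calc _ ≤ ∑' n, ∑ w ∈ paths n, μ {ω | G.openWalk ω w} :=
        (measure_mono hcover).trans <| (measure_iUnion_le _).trans <|
          ENNReal.tsum_le_tsum fun n => measure_biUnion_finset_le _ _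
    _ = G.sawGen x p y := tsum_congr fun n => by
        rw [Finset.sum_congr rfl fun w hw => hpath hw, Finset.sum_const, nsmul_eq_mul,
          sawCountTo_eq_card]

lemma sawCountTo_mul_pow_le_green {d : ℕ} (hd : 2 ≤ d) (hreg : G.IsRegularOfDegree d) {y : V}
    (hsum : ∀ x, Summable fun n => G.srw n x y) {l : ℝ} (hl : 1 ≤ l) (x : V) (n : ℕ) :
    (G.sawCountTo x y n : ℝ≥0∞) * ENNReal.ofReal p ^ n ≤
      d * green G (ENNReal.ofReal l) x y * ENNReal.ofReal (p * (d - 1) / l) ^ n := by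
  have hd1 : (1 : ℝ) ≤ d - 1 := by
    have : (2 : ℝ) ≤ d := by exact_mod_cast hd
    linarith
  have : 0 < l := by linarith
  have hcount : (G.sawCountTo x y n : ℝ) ≤ d * ((d - 1) / l) ^ n * (l ^ n * srwTail G n x y) :=
    calc _ ≤ d * (d - 1) ^ (n - 1) * G.nbw n x y := sawCountTo_le hd hreg n x y
      _ ≤ d * (d - 1) ^ (n - 1) * srwTail G n x y := by
          gcongr
          exact nbw_le_srwTail hd hreg hsum n x
      _ ≤ d * (d - 1) ^ n * srwTail G n x y := by
          gcongr
          exacts [srwTail_nonneg n x y, n.pred_le]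
      _ = _ := by rw [div_pow]; field_simp
  calc _ ≤ ENNReal.ofReal (d * ((d - 1) / l) ^ n * (l ^ n * srwTail G n x y)) *
          ENNReal.ofReal p ^ n := by
        gcongr
        rw [← ENNReal.ofReal_natCast]
        exact ENNReal.ofReal_le_ofReal hcount
    _ ≤ d * ENNReal.ofReal ((d - 1) / l) ^ n * green G (ENNReal.ofReal l) x y *
          ENNReal.ofReal p ^ n := by
        rw [ENNReal.ofReal_mul (by positivity), ENNReal.ofReal_mul (by positivity),
          ENNReal.ofReal_pow (by positivity), ENNReal.ofReal_natCast]
        gcongr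
        exact ofReal_pow_mul_srwTail_le_green hl (hsum x) n
    _ = _ := by
        rw [mul_div_assoc, ENNReal.ofReal_mul' (by positivity), mul_pow]
        ring

lemma exists_measure_percConn_le_green {d : ℕ} (hd : 2 ≤ d) (hreg : G.IsRegularOfDegree d)
    (hμ : G.IsBernoulliPercolation p μ) (hsum : ∀ x y, Summable fun n => G.srw n x y) {l : ℝ}
    (hl : 1 ≤ l) (hpl : p * ((d : ℝ) - 1) < l) :
    ∃ A < ⊤, ∀ x y, μ {ω | G.percConn ω x y} ≤ A * green G (ENNReal.ofReal l) x y := by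
  have hratio : ENNReal.ofReal (p * (d - 1) / l) < 1 := by
    rwa [ENNReal.ofReal_lt_one, div_lt_one (one_pos.trans_le hl)]
  refine ⟨d * (1 - ENNReal.ofReal (p * (d - 1) / l))⁻¹, ENNReal.mul_lt_top (by simp)
    (ENNReal.inv_lt_top.2 (tsub_pos_of_lt hratio)), fun x y => ?_⟩
  calc _ ≤ G.sawGen x p y := measure_percConn_le_sawGen hμ x y
    _ ≤ ∑' n, d * green G (ENNReal.ofReal l) x y * ENNReal.ofReal (p * (d - 1) / l) ^ n :=
        ENNReal.tsum_le_tsum (sawCountTo_mul_pow_le_green hd hreg (hsum · y) hl x)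
    _ = _ := by rw [ENNReal.tsum_mul_left, ENNReal.tsum_geometric, mul_right_comm]

omit [DecidableEq V] [∀ v, Fintype (G.neighborSet v)] in
lemma percCritical_mem_Icc (P : ℝ → Measure (G.edgeSet → Bool)) :
    G.percCritical P ∈ Icc (0 : ℝ) 1 := by
  refine ⟨Real.sInf_nonneg fun p hp => hp.1.1, ?_⟩
  rcases eq_empty_or_nonempty
    {p : ℝ | p ∈ Icc (0 : ℝ) 1 ∧ 0 < P p {ω | ∃ x, (G.percCluster ω x).Infinite}} with h | ⟨p, hp⟩
  · rw [SimpleGraph.percCritical, h, Real.sInf_empty]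
    exact zero_le_one
  · exact (csInf_le ⟨0, fun q hq => hq.1.1⟩ hp).trans hp.1.2

end TwoPoint

end Percolation

theorem stmt_8_general {V : Type*} [DecidableEq V] {G : SimpleGraph V}
    [∀ v, Fintype (G.neighborSet v)] (hconn : G.Connected) {d : ℕ} (hd : 2 ≤ d)
    (hreg : G.IsRegularOfDegree d) {x₀ : V} (hρ : G.spectralRadius x₀ < 1) {p : ℝ}
    {μ : Measure (G.edgeSet → Bool)} (hμ : G.IsBernoulliPercolation p μ)
    (hp : p * ((d : ℝ) - 1) * G.spectralRadius x₀ < 1) :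
    (∑' (x : V) (y : V), μ {ω | G.percConn ω x₀ x} * μ {ω | G.percConn ω x y} *
      μ {ω | G.percConn ω y x₀}) < ⊤ := by
  obtain ⟨l, hl, r, hr, hlr⟩ := Percolation.exists_gt_gt_mul_lt_one (lt_max_of_lt_left one_pos)
    (le_max_right _ 0) (Percolation.max_one_mul_max_zero_lt_one hρ hp)
  obtain ⟨hl1, hpl⟩ := max_lt_iff.1 hl
  obtain ⟨hρr, hr0⟩ := max_lt_iff.1 hr
  have hl0 : 0 < l := one_pos.trans hl1
  have hr1 : r < 1 := by nlinarith
  obtain ⟨C, hC⟩ := Percolation.exists_srw_self_le hr0 hρr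
  have hsum := Percolation.summable_srw hconn <| Summable.of_nonneg_of_le
    (fun n => Percolation.srw_nonneg n x₀ x₀) hC
    ((summable_geometric_of_lt_one hr0.le hr1).mul_left C)
  obtain ⟨A, hA, hτ⟩ :=
    Percolation.exists_measure_percConn_le_green hd hreg hμ hsum hl1.le hpl
  let g := Percolation.green G (ENNReal.ofReal l)
  have htri : ∑' x, g x₀ x * ∑' y, g x y * g y x₀ < ⊤ :=
    Percolation.tsum_green_triangle_lt_top ENNReal.ofReal_ne_top
      (by rwa [← ENNReal.ofReal_mul hl0.le, ENNReal.ofReal_lt_one])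
      fun n => (ENNReal.ofReal_le_ofReal (hC n)).trans_eq
        (by rw [ENNReal.ofReal_mul' (by positivity), ENNReal.ofReal_pow hr0.le])
  calc _ ≤ ∑' (x : V) (y : V), A * g x₀ x * (A * g x y) * (A * g y x₀) := by
        gcongr <;> exact hτ _ _
    _ = A ^ 3 * ∑' x, g x₀ x * ∑' y, g x y * g y x₀ := by
        simp only [← ENNReal.tsum_mul_left]
        congr! 4
        ring
    _ < ⊤ := ENNReal.mul_lt_top (ENNReal.pow_lt_top hA) htri

/-- if `p_c (d-1) ρ < 1` on a d-regular graph with spectral radius `ρ < 1`, then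
the open triangle condition holds at `p_c`. -/
theorem stmt_8 {V : Type*} [DecidableEq V] (G : SimpleGraph V)
    [∀ v, Fintype (G.neighborSet v)] [Infinite V] (hconn : G.Connected)
    (d : ℕ) (hd : 2 ≤ d) (hreg : G.IsRegularOfDegree d)
    (x₀ : V) (ρ : ℝ) (hρ : G.spectralRadius x₀ = ρ) (hρ1 : ρ < 1)
    (P : ℝ → MeasureTheory.Measure (G.edgeSet → Bool))
    (hP : ∀ q ∈ Set.Icc (0:ℝ) 1, G.IsBernoulliPercolation q (P q))
    (hpc : G.percCritical P * ((d : ℝ) - 1) * ρ < 1) :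
    (∑' (x : V) (y : V),
        P (G.percCritical P) {ω | G.percConn ω x₀ x} *
          P (G.percCritical P) {ω | G.percConn ω x y} *
          P (G.percCritical P) {ω | G.percConn ω y x₀}) < ⊤ := by
  subst hρ
  exact stmt_8_general hconn hd hreg hρ1 (hP _ (Percolation.percCritical_mem_Icc P)) hpc
end

section
/- Let G be a d-regular transitive graph with spectral radius ρ < 1 such that p_c(d-1)ρ < 1. Then there exists c > 0 such that for all n and all vertices x, the self-avoiding walk endpoint distribution satisfies P(SAW(n) = x) = c_n(x)/c_n ≤ e^{-cn}. -/
open MeasureTheory Filter Set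
open scoped ENNReal

/-!
Fix `ρ < s ≤ 1` and `a > p_c` with `a (d - 1) s < 1`.

Reversibility gives `pₙ(x, y)² ≤ p₂ₙ(x, x)`, and by transitivity the right side does not depend on
`x`, so `pₙ(x, y) = O(rⁿ)` uniformly for every `r > ρ`. Hence the Green function `u` of the simple
random walk at `1 / s` is bounded. It satisfies `A u ≤ d s u` for the adjacency operator `A`, and
`u ≥ 1` at its pole. The recursion `A_{n+1} = A_n A - (d - 1) A_{n-1}` (with `d` in place of `d - 1`
for `n = 1`) of the non-backtracking walk operators turns this into
`A_n u ≤ d / (d - 1) ((d - 1) s)ⁿ u`. A self-avoiding walk is non-backtracking, so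
`c_n(x) = O(((d - 1) s)ⁿ)` uniformly in `x`.

An infinite cluster contains an open self-avoiding walk of each length `n`, so by the union bound
`c_n aⁿ` is at least the positive probability of an infinite cluster at some level `p < a`.
The ratio `c_n(x) / c_n` is therefore `O((a (d - 1) s)ⁿ)`. For the finitely many small `n ≥ 1` it is
less than `1` because the walks of length `n` have at least two endpoints.
-/

namespace SelfAvoidingWalk

open SimpleGraph Topology

section SpectralBound

variable {V : Type*} [DecidableEq V] (G : SimpleGraph V) [∀ v, Fintype (G.neighborSet v)]

section SimpleRandomWalk

lemma srw_nonneg (n : ℕ) (x y : V) : 0 ≤ G.srw n x y := by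
  induction n generalizing x with
  | zero => simp only [srw]; positivity
  | succ n ih =>
    exact Finset.sum_nonneg fun z _ => mul_nonneg (by positivity) (ih z)

lemma srw_le_one (n : ℕ) (x y : V) : G.srw n x y ≤ 1 := by
  induction n generalizing x with
  | zero => simp only [srw]; split <;> norm_num
  | succ n ih =>
    calc G.srw (n + 1) x y
        ≤ ∑ _z ∈ G.neighborFinset x, (G.degree x : ℝ)⁻¹ :=
          Finset.sum_le_sum fun z _ => mul_le_of_le_one_right (by positivity) (ih z)
      _ = G.degree x * (G.degree x : ℝ)⁻¹ := by simp
      _ ≤ 1 := mul_inv_le_one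

lemma srw_mul_srw_le (m n : ℕ) (x y z : V) :
    G.srw m x y * G.srw n y z ≤ G.srw (m + n) x z := by
  induction m generalizing x with
  | zero =>
    by_cases h : x = y
    · simp [srw, h]
    · simpa [srw, h] using srw_nonneg G n x z
  | succ m ih =>
    rw [Nat.add_right_comm, srw, srw, Finset.sum_mul]
    refine Finset.sum_le_sum fun w _ => ?_
    rw [mul_assoc]
    exact mul_le_mul_of_nonneg_left (ih w) (by positivity)

lemma srw_succ_right (n : ℕ) (x y : V) :
    G.srw (n + 1) x y = ∑ z ∈ G.neighborFinset y, G.srw n x z * (G.degree z : ℝ)⁻¹ := by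
  induction n generalizing x with
  | zero =>
    have hmem : y ∈ G.neighborFinset x ↔ x ∈ G.neighborFinset y := by
      rw [mem_neighborFinset, mem_neighborFinset, G.adj_comm]
    simp only [srw, mul_ite, mul_one, mul_zero, ite_mul, one_mul, zero_mul, Finset.sum_ite_eq,
      Finset.sum_ite_eq', hmem]
  | succ n ih =>
    have hstep : ∀ z, G.srw (n + 1) x z =
        ∑ w ∈ G.neighborFinset x, (G.degree x : ℝ)⁻¹ * G.srw n w z := fun _ => rfl
    rw [srw]
    simp only [ih, hstep, Finset.mul_sum, Finset.sum_mul, mul_assoc]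
    exact Finset.sum_comm

variable {G} {d : ℕ}

lemma srw_comm (hreg : G.IsRegularOfDegree d) (n : ℕ) (x y : V) :
    G.srw n x y = G.srw n y x := by
  induction n generalizing x y with
  | zero => simp only [srw, eq_comm]
  | succ n ih =>
    rw [srw_succ_right, srw]
    exact Finset.sum_congr rfl fun z _ => by rw [ih x z, hreg y, hreg z, mul_comm]

lemma srw_map_iso (φ : G ≃g G) (n : ℕ) (x y : V) : G.srw n (φ x) (φ y) = G.srw n x y := by
  induction n generalizing x with
  | zero => simp [srw]
  | succ n ih =>
    rw [srw, srw]
    refine (Finset.sum_equiv φ.toEquiv (fun z => ?_) fun z _ => ?_).symm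
    · rw [mem_neighborFinset, mem_neighborFinset]
      exact φ.map_adj_iff.symm
    · rw [φ.degree_eq, ← ih]; rfl

lemma srw_self_eq (htrans : G.IsVertexTransitive) (n : ℕ) (x y : V) :
    G.srw n x x = G.srw n y y := by
  obtain ⟨φ, rfl⟩ := htrans x y
  exact (srw_map_iso φ n x x).symm

lemma srw_sq_le (hreg : G.IsRegularOfDegree d) (n : ℕ) (x y : V) :
    G.srw n x y ^ 2 ≤ G.srw (2 * n) x x := by
  calc G.srw n x y ^ 2 = G.srw n x y * G.srw n y x := by rw [srw_comm hreg n y x, sq]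
    _ ≤ G.srw (2 * n) x x := by rw [two_mul]; exact srw_mul_srw_le G n n x y x

end SimpleRandomWalk

section SpectralRadius

lemma isBoundedUnder_srw_rpow (x : V) :
    IsBoundedUnder (· ≤ ·) atTop
      fun n : ℕ => G.srw (2 * n) x x ^ ((2 * n : ℝ))⁻¹ :=
  isBoundedUnder_of
    ⟨1, fun _ => Real.rpow_le_one (srw_nonneg ..) (srw_le_one ..) (by positivity)⟩

lemma spectralRadius_nonneg (x : V) : 0 ≤ G.spectralRadius x :=
  le_limsup_of_frequently_le
    (Frequently.of_forall fun _ => Real.rpow_nonneg (srw_nonneg ..) _)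
    (isBoundedUnder_srw_rpow G x)

variable {G}

lemma eventually_srw_self_le_pow {x : V} {s : ℝ} (hs : G.spectralRadius x < s) :
    ∀ᶠ n : ℕ in atTop, G.srw (2 * n) x x ≤ s ^ (2 * n) := by
  filter_upwards [eventually_lt_of_limsup_lt hs (isBoundedUnder_srw_rpow G x),
    eventually_gt_atTop 0] with n hlt hn
  have hs0 : 0 ≤ s := (spectralRadius_nonneg G x).trans hs.le
  have hroot := (Real.rpow_inv_le_iff_of_pos (srw_nonneg G _ x x) hs0 (by positivity)).1 hlt.le
  exact_mod_cast hroot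

lemma exists_srw_le_mul_pow {d : ℕ} (htrans : G.IsVertexTransitive)
    (hreg : G.IsRegularOfDegree d) {x₀ : V} {s : ℝ} (hs : G.spectralRadius x₀ < s) (hs1 : s ≤ 1) :
    ∃ C : ℝ, ∀ n x y, G.srw n x y ≤ C * s ^ n := by
  have hs0 : 0 < s := (spectralRadius_nonneg G x₀).trans_lt hs
  obtain ⟨N, hN⟩ := eventually_atTop.1 (eventually_srw_self_le_pow hs)
  have hlarge : ∀ n ≥ N, ∀ x y, G.srw n x y ≤ s ^ n := fun n hn x y => by
    refine le_of_sq_le_sq ?_ (by positivity)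
    calc G.srw n x y ^ 2 ≤ G.srw (2 * n) x x := srw_sq_le hreg n x y
      _ = G.srw (2 * n) x₀ x₀ := srw_self_eq htrans _ x x₀
      _ ≤ (s ^ n) ^ 2 := by rw [← pow_mul']; exact hN n hn
  have hC : 1 ≤ (s ^ N)⁻¹ := (one_le_inv₀ (by positivity)).2 (pow_le_one₀ hs0.le hs1)
  refine ⟨(s ^ N)⁻¹, fun n x y => ?_⟩
  rcases le_total N n with hn | hn
  · exact (hlarge n hn x y).trans (le_mul_of_one_le_left (by positivity) hC)
  · refine (srw_le_one G n x y).trans ?_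
    rw [inv_mul_eq_div, one_le_div (by positivity)]
    exact pow_le_pow_of_le_one hs0.le hs1 hn

end SpectralRadius

section Nonbacktracking

/-- The (unnormalized) adjacency operator of `G` acting on functions on the vertices. -/
def adjSum (f : V → ℝ) (x : V) : ℝ :=
  ∑ z ∈ G.neighborFinset x, f z

/-- The sum of `f` over the endpoints of all non-backtracking walks of length `n` from `x` whose
first step avoids `F`. Taking `F = ∅` gives all non-backtracking walks from `x`, and `F = {v}`
those that continue a step from `v` to `x`. -/
def nonbacktrackingSum (f : V → ℝ) : ℕ → Finset V → V → ℝ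
  | 0, _, x => f x
  | n + 1, F, x => ∑ z ∈ G.neighborFinset x \ F, nonbacktrackingSum f n {x} z

lemma nonbacktrackingSum_succ (f : V → ℝ) (n : ℕ) (F : Finset V) (x : V) :
    nonbacktrackingSum G f (n + 1) F x =
      ∑ z ∈ G.neighborFinset x \ F, nonbacktrackingSum G f n {x} z :=
  rfl

variable {G}

lemma nonbacktrackingSum_nonneg {f : V → ℝ} (hf : ∀ x, 0 ≤ f x) (n : ℕ) (F : Finset V) (x : V) :
    0 ≤ nonbacktrackingSum G f n F x := by
  induction n generalizing F x with
  | zero => exact hf x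
  | succ n ih => exact Finset.sum_nonneg fun z _ => ih {x} z

lemma nonbacktrackingSum_mono {f g : V → ℝ} (hfg : ∀ x, f x ≤ g x) (n : ℕ) (F : Finset V)
    (x : V) : nonbacktrackingSum G f n F x ≤ nonbacktrackingSum G g n F x := by
  induction n generalizing F x with
  | zero => exact hfg x
  | succ n ih => exact Finset.sum_le_sum fun z _ => ih {x} z

lemma nonbacktrackingSum_const_mul (c : ℝ) (f : V → ℝ) (n : ℕ) (F : Finset V) (x : V) :
    nonbacktrackingSum G (fun y => c * f y) n F x = c * nonbacktrackingSum G f n F x := by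
  induction n generalizing F x with
  | zero => rfl
  | succ n ih => simp only [nonbacktrackingSum, ih, Finset.mul_sum]

lemma adjSum_eq_nonbacktrackingSum_add (f : V → ℝ) {x z : V} (hxz : G.Adj x z) :
    adjSum G f z = nonbacktrackingSum G f 1 {x} z + f x := by
  have hx : {x} ⊆ G.neighborFinset z := by simpa using hxz.symm
  rw [adjSum, ← Finset.sum_sdiff hx, Finset.sum_singleton]
  rfl

lemma nonbacktrackingSum_adjSum_one (f : V → ℝ) (F : Finset V) (x : V) :
    nonbacktrackingSum G (adjSum G f) 1 F x =
      nonbacktrackingSum G f 2 F x + (G.neighborFinset x \ F).card * f x := by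
  have hstep : ∀ z ∈ G.neighborFinset x \ F,
      adjSum G f z = nonbacktrackingSum G f 1 {x} z + f x := fun z hz =>
    adjSum_eq_nonbacktrackingSum_add f
      ((G.mem_neighborFinset x z).1 (Finset.mem_sdiff.1 hz).1)
  calc nonbacktrackingSum G (adjSum G f) 1 F x
      = ∑ z ∈ G.neighborFinset x \ F, adjSum G f z := rfl
    _ = _ := by
      rw [Finset.sum_congr rfl hstep, Finset.sum_add_distrib, Finset.sum_const, nsmul_eq_mul,
        ← nonbacktrackingSum_succ]

variable {d : ℕ}

-- Appending an arbitrary step to a walk of length `n + 2` either continues it or undoes its last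
-- step; the walk of length `n + 1` that remains arises from `d - 1` choices of the undone step.
lemma nonbacktrackingSum_adjSum_add_two (hreg : G.IsRegularOfDegree d) (f : V → ℝ) (n : ℕ)
    (F : Finset V) (x : V) :
    nonbacktrackingSum G (adjSum G f) (n + 2) F x =
      nonbacktrackingSum G f (n + 3) F x + (d - 1) * nonbacktrackingSum G f (n + 1) F x := by
  simp only [nonbacktrackingSum_succ G _ _ F, Finset.mul_sum, ← Finset.sum_add_distrib]
  refine Finset.sum_congr rfl fun z hz => ?_
  induction n generalizing F x z with
  | zero =>
    have hx : {x} ⊆ G.neighborFinset z := by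
      simpa [G.adj_comm z x] using (Finset.mem_sdiff.1 hz).1
    have hcard : ((G.neighborFinset z \ {x}).card : ℝ) = d - 1 := by
      rw [Finset.cast_card_sdiff hx]; simp [hreg z]
    rw [zero_add, nonbacktrackingSum_adjSum_one, hcard]
    rfl
  | succ n ih =>
    simp only [nonbacktrackingSum_succ G _ _ {x}, Finset.mul_sum, ← Finset.sum_add_distrib]
    exact Finset.sum_congr rfl fun w hw => ih {x} z w hw

section Superharmonic

variable {u : V → ℝ} {s : ℝ}

lemma nonbacktrackingSum_add_two_le (hreg : G.IsRegularOfDegree d) (hd : 1 ≤ d)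
    (hs0 : 0 ≤ s) (hs1 : s ≤ 1) (hu0 : ∀ x, 0 ≤ u x) (hu : ∀ x, adjSum G u x ≤ d * s * u x)
    (n : ℕ) (x : V) :
    nonbacktrackingSum G u (n + 2) ∅ x ≤ (d - 1) * s * nonbacktrackingSum G u (n + 1) ∅ x := by
  have hd1 : (1 : ℝ) ≤ d := by exact_mod_cast hd
  have hadj : ∀ k, nonbacktrackingSum G (adjSum G u) k ∅ x ≤
      d * s * nonbacktrackingSum G u k ∅ x := fun k =>
    (nonbacktrackingSum_mono hu k ∅ x).trans_eq (nonbacktrackingSum_const_mul (d * s) u k ∅ x)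
  induction n with
  | zero =>
    have hone : nonbacktrackingSum G u 1 ∅ x ≤ d * s * u x := by
      simpa [nonbacktrackingSum, adjSum] using hu x
    have htwo := nonbacktrackingSum_adjSum_one (G := G) u ∅ x
    have hsq : s * nonbacktrackingSum G u 1 ∅ x ≤ d * u x := by
      calc s * nonbacktrackingSum G u 1 ∅ x ≤ s * (d * s * u x) := by gcongr
        _ = s ^ 2 * (d * u x) := by ring
        _ ≤ d * u x :=
          mul_le_of_le_one_left (mul_nonneg (by positivity) (hu0 x)) (pow_le_one₀ hs0 hs1)
    simp only [Finset.sdiff_empty, card_neighborFinset_eq_degree, hreg x] at htwo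
    linarith [hadj 1]
  | succ n ih =>
    have hrec := nonbacktrackingSum_adjSum_add_two hreg u n ∅ x
    have hpos := nonbacktrackingSum_nonneg (G := G) hu0 (n + 1) ∅ x
    have hsq : s * nonbacktrackingSum G u (n + 2) ∅ x ≤
        (d - 1) * nonbacktrackingSum G u (n + 1) ∅ x := by
      calc s * nonbacktrackingSum G u (n + 2) ∅ x
          ≤ s * ((d - 1) * s * nonbacktrackingSum G u (n + 1) ∅ x) := by gcongr
        _ = s ^ 2 * ((d - 1) * nonbacktrackingSum G u (n + 1) ∅ x) := by ring
        _ ≤ (d - 1) * nonbacktrackingSum G u (n + 1) ∅ x :=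
          mul_le_of_le_one_left (mul_nonneg (by linarith) hpos) (pow_le_one₀ hs0 hs1)
    linarith [hadj (n + 2)]

lemma nonbacktrackingSum_le (hreg : G.IsRegularOfDegree d) (hd : 2 ≤ d)
    (hs0 : 0 ≤ s) (hs1 : s ≤ 1) (hu0 : ∀ x, 0 ≤ u x) (hu : ∀ x, adjSum G u x ≤ d * s * u x)
    (n : ℕ) (x : V) :
    nonbacktrackingSum G u n ∅ x ≤ d / (d - 1) * ((d - 1) * s) ^ n * u x := by
  have hd1 : (0 : ℝ) < d - 1 := by
    have : (2 : ℝ) ≤ d := by exact_mod_cast hd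
    linarith
  match n with
  | 0 =>
    rw [pow_zero, mul_one]
    exact le_mul_of_one_le_left (hu0 x) ((one_le_div hd1).2 (by linarith))
  | n + 1 =>
    induction n with
    | zero =>
      calc nonbacktrackingSum G u 1 ∅ x ≤ d * s * u x := by
            simpa [nonbacktrackingSum, adjSum] using hu x
        _ = d / (d - 1) * ((d - 1) * s) ^ 1 * u x := by field_simp
    | succ n ih =>
      calc nonbacktrackingSum G u (n + 2) ∅ x
          ≤ (d - 1) * s * nonbacktrackingSum G u (n + 1) ∅ x :=
            nonbacktrackingSum_add_two_le hreg (by lia) hs0 hs1 hu0 hu n x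
        _ ≤ (d - 1) * s * (d / (d - 1) * ((d - 1) * s) ^ (n + 1) * u x) := by gcongr
        _ = d / (d - 1) * ((d - 1) * s) ^ (n + 2) * u x := by ring

end Superharmonic

end Nonbacktracking

section GreenFunction

/-- The Green function `∑ₘ tᵐ pₘ(x, y)` of the simple random walk, as a function of its starting
point `x`. Where the series diverges the value is the junk value `0` of `tsum`. -/
noncomputable def greenFunction (t : ℝ) (y x : V) : ℝ :=
  ∑' m : ℕ, t ^ m * G.srw m x y

variable {G} {t C r : ℝ} {x y : V}

lemma greenFunction_nonneg (ht : 0 ≤ t) : 0 ≤ greenFunction G t y x :=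
  tsum_nonneg fun m => mul_nonneg (pow_nonneg ht m) (srw_nonneg G m x y)

lemma greenFunction_eq (hsum : ∀ z, Summable fun m => t ^ m * G.srw m z y) :
    greenFunction G t y x =
      (if x = y then 1 else 0) + t * (G.degree x : ℝ)⁻¹ * adjSum G (greenFunction G t y) x := by
  have hstep (m : ℕ) : t ^ (m + 1) * G.srw (m + 1) x y =
      t * (G.degree x : ℝ)⁻¹ * ∑ z ∈ G.neighborFinset x, t ^ m * G.srw m z y := by
    rw [srw, ← Finset.mul_sum, ← Finset.mul_sum]; ring
  rw [greenFunction, (hsum x).tsum_eq_zero_add]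
  simp only [hstep, tsum_mul_left, adjSum, greenFunction, Summable.tsum_finsetSum fun z _ => hsum z]
  simp [srw]

lemma ite_eq_le_greenFunction (ht : 0 ≤ t)
    (hsum : ∀ z, Summable fun m => t ^ m * G.srw m z y) :
    (if x = y then 1 else 0) ≤ greenFunction G t y x := by
  have hadj : 0 ≤ adjSum G (greenFunction G t y) x :=
    Finset.sum_nonneg fun z _ => greenFunction_nonneg ht
  rw [greenFunction_eq hsum]
  exact le_add_of_nonneg_right (by positivity)

lemma adjSum_greenFunction_le {d : ℕ} (hreg : G.IsRegularOfDegree d) (hd : d ≠ 0) {s : ℝ}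
    (hs : 0 < s) (hsum : ∀ z, Summable fun m => s⁻¹ ^ m * G.srw m z y) :
    adjSum G (greenFunction G s⁻¹ y) x ≤ d * s * greenFunction G s⁻¹ y x := by
  calc adjSum G (greenFunction G s⁻¹ y) x
      = d * s * (s⁻¹ * (d : ℝ)⁻¹ * adjSum G (greenFunction G s⁻¹ y) x) := by field_simp
    _ ≤ d * s * greenFunction G s⁻¹ y x := by
      rw [greenFunction_eq (x := x) hsum, hreg x]
      gcongr
      exact le_add_of_nonneg_left (by positivity)

lemma summable_pow_mul_srw (ht : 0 ≤ t) (hr : 0 ≤ r) (htr : t * r < 1)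
    (hbound : ∀ m, G.srw m x y ≤ C * r ^ m) : Summable fun m => t ^ m * G.srw m x y := by
  refine .of_nonneg_of_le (fun m => mul_nonneg (pow_nonneg ht m) (srw_nonneg G m x y)) (fun m => ?_)
    ((summable_geometric_of_lt_one (mul_nonneg ht hr) htr).mul_left C)
  calc t ^ m * G.srw m x y ≤ t ^ m * (C * r ^ m) := by gcongr; exact hbound m
    _ = C * (t * r) ^ m := by ring

lemma greenFunction_le (ht : 0 ≤ t) (hr : 0 ≤ r) (htr : t * r < 1)
    (hbound : ∀ m, G.srw m x y ≤ C * r ^ m) : greenFunction G t y x ≤ C * (1 - t * r)⁻¹ := by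
  have htr0 : 0 ≤ t * r := mul_nonneg ht hr
  rw [← tsum_geometric_of_lt_one htr0 htr, ← tsum_mul_left]
  refine (summable_pow_mul_srw ht hr htr hbound).tsum_le_tsum (fun m => ?_)
    ((summable_geometric_of_lt_one htr0 htr).mul_left C)
  calc t ^ m * G.srw m x y ≤ t ^ m * (C * r ^ m) := by gcongr; exact hbound m
    _ = C * (t * r) ^ m := by ring

end GreenFunction

section SelfAvoidingWalks

/-- The self-avoiding walks of length `n` from `x` to `y` that avoid the vertices in `F`. -/
def pathsAvoiding (n : ℕ) (x y : V) (F : Finset V) : Finset (G.Walk x y) :=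
  {w ∈ G.finsetWalkLength n x y | w.IsPath ∧ ∀ v ∈ F, v ∉ w.support}

variable {G} {n : ℕ} {x y : V} {F : Finset V}

lemma mem_pathsAvoiding {w : G.Walk x y} :
    w ∈ pathsAvoiding G n x y F ↔ w.length = n ∧ w.IsPath ∧ ∀ v ∈ F, v ∉ w.support := by
  rw [pathsAvoiding, Finset.mem_filter, mem_finsetWalkLength_iff]

lemma sawCountTo_eq_card_pathsAvoiding : G.sawCountTo x y n = (pathsAvoiding G n x y ∅).card :=
  Nat.subtype_card _ fun w => by simp [mem_pathsAvoiding, and_comm]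

lemma pathsAvoiding_succ_subset :
    pathsAvoiding G (n + 1) x y F ⊆ (G.neighborFinset x \ F).attach.biUnion fun z =>
      (pathsAvoiding G n z y {x}).image
        (Walk.cons ((G.mem_neighborFinset x z).1 (Finset.mem_sdiff.1 z.2).1)) := by
  intro w hw
  obtain ⟨hlen, hpath, hF⟩ := mem_pathsAvoiding.1 hw
  cases w with
  | nil => simp at hlen
  | @cons _ z _ hxz w =>
    rw [Walk.cons_isPath_iff] at hpath
    have hzF : z ∉ F := fun hz => hF z hz (List.mem_cons_of_mem _ w.start_mem_support)
    simp only [Finset.mem_biUnion, Finset.mem_image]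
    exact ⟨⟨z, by simpa [hzF] using hxz⟩, Finset.mem_attach _ _, w,
      mem_pathsAvoiding.2 ⟨Nat.succ.inj hlen, hpath.1, by simpa using hpath.2⟩, rfl⟩

lemma card_pathsAvoiding_le_nonbacktrackingSum :
    ((pathsAvoiding G n x y F).card : ℝ) ≤
      nonbacktrackingSum G (fun z => if z = y then 1 else 0) n F x := by
  induction n generalizing x F with
  | zero =>
    have hnil : ∀ w ∈ pathsAvoiding G 0 x y F, w.length = 0 :=
      fun w hw => (mem_pathsAvoiding.1 hw).1
    rw [nonbacktrackingSum]
    split_ifs with hxy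
    · subst hxy
      exact_mod_cast Finset.card_le_one.2 fun w hw w' hw' => by
        rw [(Walk.length_eq_zero_iff.1 (hnil w hw)).eq_nil,
          (Walk.length_eq_zero_iff.1 (hnil w' hw')).eq_nil]
    · have hempty : pathsAvoiding G 0 x y F = ∅ :=
        Finset.eq_empty_of_forall_notMem fun w hw => hxy (Walk.eq_of_length_eq_zero (hnil w hw))
      simp [hempty]
  | succ n ih =>
    calc ((pathsAvoiding G (n + 1) x y F).card : ℝ)
        ≤ ∑ z ∈ (G.neighborFinset x \ F).attach, ((pathsAvoiding G n z y {x}).card : ℝ) := by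
          exact_mod_cast (Finset.card_le_card pathsAvoiding_succ_subset).trans <|
            Finset.card_biUnion_le.trans <| Finset.sum_le_sum fun z _ => Finset.card_image_le
      _ ≤ ∑ z ∈ (G.neighborFinset x \ F).attach,
            nonbacktrackingSum G (fun z => if z = y then 1 else 0) n {x} z :=
          Finset.sum_le_sum fun z _ => ih
      _ = nonbacktrackingSum G (fun z => if z = y then 1 else 0) (n + 1) F x :=
          Finset.sum_attach _ fun z => nonbacktrackingSum G _ n {x} z

lemma exists_sawCountTo_le_mul_pow {d : ℕ} (htrans : G.IsVertexTransitive)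
    (hreg : G.IsRegularOfDegree d) (hd : 2 ≤ d) {x₀ : V} {s : ℝ} (hs : G.spectralRadius x₀ < s)
    (hs1 : s ≤ 1) :
    ∃ K : ℝ, ∀ n x y, (G.sawCountTo x y n : ℝ) ≤ K * ((d - 1) * s) ^ n := by
  obtain ⟨r, hr, hrs⟩ := exists_between hs
  have hr0 : 0 ≤ r := (spectralRadius_nonneg G x₀).trans hr.le
  have hs0 : 0 < s := hr0.trans_lt hrs
  have hd1 : (0 : ℝ) < d - 1 := by
    have : (2 : ℝ) ≤ d := by exact_mod_cast hd
    linarith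
  obtain ⟨C, hC⟩ := exists_srw_le_mul_pow htrans hreg hr (hrs.le.trans hs1)
  have hsr : s⁻¹ * r < 1 := by rwa [inv_mul_lt_one₀ hs0]
  refine ⟨d / (d - 1) * (C * (1 - s⁻¹ * r)⁻¹), fun n x y => ?_⟩
  have hsum : ∀ z, Summable fun m => s⁻¹ ^ m * G.srw m z y := fun z =>
    summable_pow_mul_srw (by positivity) hr0 hsr fun m => hC m z y
  calc (G.sawCountTo x y n : ℝ)
      ≤ nonbacktrackingSum G (fun z => if z = y then 1 else 0) n ∅ x := by
        rw [sawCountTo_eq_card_pathsAvoiding]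
        exact card_pathsAvoiding_le_nonbacktrackingSum
    _ ≤ nonbacktrackingSum G (greenFunction G s⁻¹ y) n ∅ x :=
        nonbacktrackingSum_mono (fun z => ite_eq_le_greenFunction (by positivity) hsum) n ∅ x
    _ ≤ d / (d - 1) * ((d - 1) * s) ^ n * greenFunction G s⁻¹ y x :=
        nonbacktrackingSum_le hreg hd hs0.le hs1 (fun z => greenFunction_nonneg (by positivity))
          (fun z => adjSum_greenFunction_le hreg (by lia) hs0 hsum) n x
    _ ≤ d / (d - 1) * ((d - 1) * s) ^ n * (C * (1 - s⁻¹ * r)⁻¹) := by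
        gcongr
        exact greenFunction_le (by positivity) hr0 hsr fun m => hC m x y
    _ = d / (d - 1) * (C * (1 - s⁻¹ * r)⁻¹) * ((d - 1) * s) ^ n := by ring

end SelfAvoidingWalks

end SpectralBound

variable {V : Type*}

section Percolation

variable {G : SimpleGraph V} {p a : ℝ} {μ : Measure (G.edgeSet → Bool)}
  {P : ℝ → Measure (G.edgeSet → Bool)} {x₀ : V}

lemma percCluster_eq_of_forall_open (hω : ∀ e, ω e = true) (x : V) :
    G.percCluster ω x = {y | G.Reachable x y} := by
  ext y
  exact ⟨fun ⟨w, _⟩ => ⟨w⟩, fun ⟨w⟩ => ⟨w, fun _ _ => hω _⟩⟩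

lemma measure_openWalk (hμ : G.IsBernoulliPercolation p μ) {x y : V} {w : G.Walk x y}
    (hw : w.IsTrail) : μ {ω | G.openWalk ω w} = ENNReal.ofReal p ^ w.length := by
  classical
  set s : Finset G.edgeSet := w.edges.toFinset.subtype (· ∈ G.edgeSet) with hs
  have hcard : s.card = w.length := by
    rw [hs, Finset.card_subtype, Finset.filter_true_of_mem fun e he =>
      w.edges_subset_edgeSet (List.mem_toFinset.1 he), List.toFinset_card_of_nodup hw.edges_nodup,
      Walk.length_edges]
  have hopen : {ω | G.openWalk ω w} = {ω | ∀ e ∈ s, ω e = true} := by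
    ext ω
    exact ⟨fun h e he => h e (by simpa [hs] using he),
      fun h e he => h ⟨e, w.edges_subset_edgeSet he⟩ (by simpa [hs] using he)⟩
  simpa [hopen, hcard] using hμ.2 s fun _ => true

lemma ae_forall_eq_true [Countable V] (hμ : G.IsBernoulliPercolation 1 μ) :
    ∀ᵐ ω ∂μ, ∀ e, ω e = true := by
  have : Countable (Sym2 V) := Quot.mk_surjective.countable
  refine ae_all_iff.2 fun e => ?_
  simpa [ae_iff] using hμ.2 {e} fun _ => false

lemma exists_measure_percCluster_infinite_ne_zero [Countable V]
    (hP : ∀ q ∈ Set.Icc (0 : ℝ) 1, G.IsBernoulliPercolation q (P q))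
    (hinf : {y | G.Reachable x₀ y}.Infinite) (ha : G.percCritical P < a) :
    ∃ p ∈ Set.Icc (0 : ℝ) 1, p < a ∧ ∃ x, P p {ω | (G.percCluster ω x).Infinite} ≠ 0 := by
  have hone : (1 : ℝ) ∈ {p : ℝ | p ∈ Set.Icc (0 : ℝ) 1 ∧
      0 < P p {ω | ∃ x, (G.percCluster ω x).Infinite}} := by
    have hbern := hP 1 (by simp)
    have := hbern.1
    have hfreq : ∃ᶠ ω in ae (P 1), ∃ x, (G.percCluster ω x).Infinite :=
      Eventually.frequently <| (ae_forall_eq_true hbern).mono fun ω hω =>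
        ⟨x₀, by rwa [percCluster_eq_of_forall_open hω]⟩
    exact ⟨by simp, pos_iff_ne_zero.2 (frequently_ae_iff.1 hfreq)⟩
  obtain ⟨p, ⟨hp, hpos⟩, hpa⟩ := exists_lt_of_csInf_lt ⟨1, hone⟩ ha
  rw [Set.ofPred_exists] at hpos
  obtain ⟨x, hx⟩ := exists_measure_pos_of_not_measure_iUnion_null hpos.ne'
  exact ⟨p, hp, hpa, x, hx.ne'⟩

end Percolation

section ConnectiveConstant

variable (G : SimpleGraph V) [∀ v, Finite (G.neighborSet v)]

lemma finite_setOf_length_eq (x : V) (n : ℕ) :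
    {w : (y : V) × G.Walk x y | w.2.length = n}.Finite := by
  induction n generalizing x with
  | zero =>
    refine (Set.finite_singleton ⟨x, Walk.nil⟩).subset ?_
    rintro ⟨y, w⟩ hw
    cases w with
    | nil => rfl
    | cons => simp at hw
  | succ n ih =>
    refine (Set.finite_iUnion fun z : G.neighborSet x =>
      (ih z).image fun w => ⟨w.1, Walk.cons z.2 w.2⟩).subset ?_
    rintro ⟨y, w⟩ hw
    cases w with
    | nil => simp at hw
    | cons hxz w =>
      exact Set.mem_iUnion.2 ⟨⟨_, hxz⟩, ⟨y, w⟩, Nat.succ.inj hw, rfl⟩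

variable {G} {ω : G.edgeSet → Bool} {x x₀ y : V} {n : ℕ} {p a : ℝ}
  {μ : Measure (G.edgeSet → Bool)} {P : ℝ → Measure (G.edgeSet → Bool)}

instance finite_saws (x : V) (n : ℕ) :
    Finite {w : (y : V) × G.Walk x y // w.2.IsPath ∧ w.2.length = n} :=
  ((finite_setOf_length_eq G x n).subset fun _ hw => hw.2).to_subtype

lemma sawCount_le_map_iso (φ : G ≃g G) (x : V) (n : ℕ) :
    G.sawCount x n ≤ G.sawCount (φ x) n := by
  refine Nat.card_le_card_of_injective (fun w => ⟨⟨φ w.1.1, w.1.2.map φ.toHom⟩,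
    (Walk.isPath_map_iff_of_injective φ.injective).2 w.2.1, by simpa using w.2.2⟩) ?_
  rintro ⟨⟨y, w⟩, hw⟩ ⟨⟨y', w'⟩, hw'⟩ heq
  simp only [Subtype.mk.injEq, Sigma.mk.injEq] at heq
  obtain ⟨hy, hmap⟩ := heq
  obtain rfl := φ.injective hy
  obtain rfl := Walk.map_injective_of_injective (f := φ.toHom) φ.injective _ _ (eq_of_heq hmap)
  rfl

lemma sawCountTo_le_card_subtype (x y : V) (n : ℕ) :
    G.sawCountTo x y n ≤
      Nat.card {w : {w : (y : V) × G.Walk x y // w.2.IsPath ∧ w.2.length = n} // w.1.1 = y} :=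
  Nat.card_le_card_of_injective (fun w => ⟨⟨⟨y, w.1⟩, w.2⟩, rfl⟩) fun w w' heq => by
    simpa [Subtype.ext_iff] using heq

lemma sawCountTo_le_sawCount (x y : V) (n : ℕ) : G.sawCountTo x y n ≤ G.sawCount x n :=
  (sawCountTo_le_card_subtype x y n).trans (Finite.card_subtype_le _)

lemma sawCountTo_lt_sawCount {z : V} (hzy : z ≠ y) {w : G.Walk x z} (hw : w.IsPath)
    (hlen : w.length = n) : G.sawCountTo x y n < G.sawCount x n :=
  (sawCountTo_le_card_subtype x y n).trans_lt
    (Finite.card_subtype_lt (x := ⟨⟨z, w⟩, hw, hlen⟩) hzy)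

lemma exists_isPath_length_eq_openWalk (hinf : (G.percCluster ω x).Infinite) (n : ℕ) :
    ∃ (y : V) (w : G.Walk x y), w.IsPath ∧ w.length = n ∧ G.openWalk ω w := by
  classical
  have hfin : (⋃ m ∈ Finset.range n,
      Sigma.fst '' {w : (y : V) × G.Walk x y | w.2.length = m}).Finite :=
    (Finset.finite_toSet _).biUnion fun m _ => (finite_setOf_length_eq G x m).image _
  obtain ⟨y, ⟨w, hw⟩, hy⟩ := hinf.exists_notMem_finite hfin
  have hlen : n ≤ w.bypass.length := by
    by_contra! hlt
    exact hy (Set.mem_biUnion (Finset.mem_coe.2 (Finset.mem_range.2 hlt)) ⟨⟨y, w.bypass⟩, rfl, rfl⟩)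
  refine ⟨_, w.bypass.take n, w.bypass_isPath.take n, by simp [hlen], fun e he => hw e ?_⟩
  exact w.edges_bypass_subset_edges ((w.bypass.isSubwalk_take n).edges_subset he)

lemma exists_isPath_length_eq (hinf : {y | G.Reachable x₀ y}.Infinite) (n : ℕ) :
    ∃ (y : V) (w : G.Walk x₀ y), w.IsPath ∧ w.length = n := by
  rw [← percCluster_eq_of_forall_open (ω := fun _ => true) (fun _ => rfl)] at hinf
  obtain ⟨y, w, hw, hlen, -⟩ := exists_isPath_length_eq_openWalk hinf n
  exact ⟨y, w, hw, hlen⟩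

-- The two halves of a path of length `2n`, recentred at its midpoint, end at different vertices.
lemma exists_isPath_length_eq_ne (htrans : G.IsVertexTransitive)
    (hinf : {y | G.Reachable x₀ y}.Infinite) {n : ℕ} (hn : n ≠ 0) (x : V) :
    ∃ y ≠ x, ∃ w : G.Walk x₀ y, w.IsPath ∧ w.length = n := by
  obtain ⟨b, w, hw, hlen⟩ := exists_isPath_length_eq hinf (2 * n)
  have hb : x₀ ≠ b := by
    rintro rfl
    rw [Walk.isPath_iff_nil.1 hw |>.eq_nil, Walk.length_nil] at hlen
    lia
  obtain ⟨φ, hφ⟩ := htrans (w.getVert n) x₀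
  have hmap : ∀ {y} (q : G.Walk (w.getVert n) y), q.IsPath → q.length = n →
      ∃ q' : G.Walk x₀ (φ y), q'.IsPath ∧ q'.length = n := fun q hq hqlen =>
    hφ ▸ ⟨q.map φ.toHom, (Walk.isPath_map_iff_of_injective φ.injective).2 hq, by simpa using hqlen⟩
  rcases ne_or_eq (φ x₀) x with hx | rfl
  · exact ⟨φ x₀, hx, hmap (w.take n).reverse (hw.take n).reverse (by simp; lia)⟩
  · exact ⟨φ b, φ.injective.ne hb.symm, hmap (w.drop n) (hw.drop n) (by simp; lia)⟩

lemma exists_sawCountTo_div_sawCount_le (htrans : G.IsVertexTransitive)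
    (hinf : {y | G.Reachable x₀ y}.Infinite) (hn : n ≠ 0) :
    ∃ q < 1, ∀ x, (G.sawCountTo x₀ x n : ℝ) / G.sawCount x₀ n ≤ q := by
  have hlt : ∀ x, (G.sawCountTo x₀ x n : ℝ) + 1 ≤ G.sawCount x₀ n := fun x => by
    obtain ⟨y, hyx, w, hw, hlen⟩ := exists_isPath_length_eq_ne htrans hinf hn x
    exact_mod_cast sawCountTo_lt_sawCount hyx hw hlen
  have hpos : (0 : ℝ) < G.sawCount x₀ n := (Nat.cast_add_one_pos _).trans_le (hlt x₀)
  refine ⟨(G.sawCount x₀ n - 1) / G.sawCount x₀ n, (div_lt_one hpos).2 (sub_one_lt _), fun x => ?_⟩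
  gcongr
  exact le_sub_iff_add_le.2 (hlt x)

lemma measure_percCluster_infinite_le (hμ : G.IsBernoulliPercolation p μ) (x : V) (n : ℕ) :
    μ {ω | (G.percCluster ω x).Infinite} ≤ G.sawCount x n * ENNReal.ofReal p ^ n := by
  calc μ {ω | (G.percCluster ω x).Infinite}
      ≤ μ (⋃ w : {w : (y : V) × G.Walk x y // w.2.IsPath ∧ w.2.length = n},
          {ω | G.openWalk ω w.1.2}) := by
        refine measure_mono fun ω hω => ?_
        obtain ⟨y, w, hw, hlen, hopen⟩ := exists_isPath_length_eq_openWalk hω n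
        exact Set.mem_iUnion.2 ⟨⟨⟨y, w⟩, hw, hlen⟩, hopen⟩
    _ ≤ ∑' w : {w : (y : V) × G.Walk x y // w.2.IsPath ∧ w.2.length = n},
          μ {ω | G.openWalk ω w.1.2} := measure_iUnion_le _
    _ = ∑' _ : {w : (y : V) × G.Walk x y // w.2.IsPath ∧ w.2.length = n},
          ENNReal.ofReal p ^ n :=
        tsum_congr fun w => by rw [measure_openWalk hμ w.2.1.isTrail, w.2.2]
    _ = G.sawCount x n * ENNReal.ofReal p ^ n := by
        rw [ENNReal.tsum_const, sawCount, ENat.card_eq_coe_natCard, ENat.toENNReal_coe]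

lemma exists_le_sawCount_mul_pow [Countable V] (htrans : G.IsVertexTransitive)
    (hP : ∀ q ∈ Set.Icc (0 : ℝ) 1, G.IsBernoulliPercolation q (P q))
    (hinf : {y | G.Reachable x₀ y}.Infinite) (ha : G.percCritical P < a) :
    ∃ ε > 0, ∀ n, ε ≤ G.sawCount x₀ n * a ^ n := by
  obtain ⟨p, hp, hpa, x, hx⟩ := exists_measure_percCluster_infinite_ne_zero hP hinf ha
  have hbern := hP p hp
  have := hbern.1
  obtain ⟨φ, rfl⟩ := htrans x x₀
  refine ⟨(P p).real {ω | (G.percCluster ω x).Infinite},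
    ENNReal.toReal_pos hx (measure_ne_top _ _), fun n => ?_⟩
  calc (P p).real {ω | (G.percCluster ω x).Infinite} ≤ G.sawCount x n * p ^ n := by
        have hle := ENNReal.toReal_mono (by finiteness) (measure_percCluster_infinite_le hbern x n)
        simpa [measureReal_def, ENNReal.toReal_ofReal hp.1] using hle
    _ ≤ G.sawCount (φ x) n * a ^ n := by
        have := hp.1
        gcongr
        exact sawCount_le_map_iso φ x n

end ConnectiveConstant

section ExponentialDecay

lemma exists_gt_exists_gt_mul_mul_lt_one {p k r : ℝ} (h : p * k * r < 1) (hr : r < 1) :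
    ∃ a > p, ∃ s > r, s < 1 ∧ a * (k * s) < 1 := by
  have hprod : ∀ᶠ e : ℝ in 𝓝[>] 0, (p + e) * (k * (r + e)) < 1 :=
    (ContinuousAt.eventually_lt (by fun_prop) continuousAt_const
      (by simpa [mul_assoc] using h)).filter_mono nhdsWithin_le_nhds
  obtain ⟨e, he, he0, her⟩ := (hprod.and (Ioo_mem_nhdsGT (sub_pos.2 hr))).exists
  exact ⟨p + e, by linarith, r + e, by linarith, by linarith, he⟩

-- The geometric bound handles all large `n`; each of the finitely many remaining `n` only requires
-- `c` to be small enough.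
lemma exists_pos_forall_le_exp_of_le_mul_pow {α : Type*} {f : ℕ → α → ℝ} {K θ : ℝ} (hθ0 : 0 ≤ θ)
    (hθ1 : θ < 1) (hf : ∀ n x, f n x ≤ K * θ ^ n) (hzero : ∀ x, f 0 x ≤ 1)
    (hlt : ∀ n ≠ 0, ∃ q < 1, ∀ x, f n x ≤ q) :
    ∃ c > 0, ∀ (n : ℕ) (x : α), f n x ≤ Real.exp (-c * n) := by
  obtain ⟨η, hθη, hη1⟩ := exists_between hθ1
  have hη0 : 0 < η := hθ0.trans_lt hθη
  obtain ⟨N, hN⟩ : ∃ N, ∀ n ≥ N, K * θ ^ n ≤ η ^ n := by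
    refine eventually_atTop.1 ?_
    filter_upwards [((isLittleO_pow_pow_of_lt_left hθ0 hθη).const_mul_left K).bound one_pos]
      with n hn
    rw [one_mul, Real.norm_of_nonneg (by positivity : 0 ≤ η ^ n)] at hn
    exact (le_abs_self _).trans hn
  have hexp : ∀ q < (1 : ℝ), ∀ n : ℕ, ∀ᶠ c : ℝ in 𝓝[>] 0, q ≤ Real.exp (-c * n) := fun q hq n =>
    ((ContinuousAt.eventually_lt continuousAt_const (by fun_prop) (by simpa using hq)).filter_mono
      nhdsWithin_le_nhds).mono fun _ => le_of_lt
  have hsmall : ∀ᶠ c : ℝ in 𝓝[>] 0, ∀ n ∈ Set.Iio N, ∀ x, f n x ≤ Real.exp (-c * n) := by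
    refine (eventually_all_finite (Set.finite_Iio N)).2 fun n _ => ?_
    rcases eq_or_ne n 0 with rfl | hn
    · simpa using hzero
    · obtain ⟨q, hq, hfq⟩ := hlt n hn
      exact (hexp q hq n).mono fun c hc x => (hfq x).trans hc
  obtain ⟨c, ⟨hc, hηc⟩, hc0⟩ :=
    ((hsmall.and (hexp η hη1 1)).and self_mem_nhdsWithin).exists
  refine ⟨c, hc0, fun n x => ?_⟩
  rcases lt_or_ge n N with hn | hn
  · exact hc n hn x
  · calc f n x ≤ K * θ ^ n := hf n x
      _ ≤ η ^ n := hN n hn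
      _ ≤ Real.exp (-c * (1 : ℕ)) ^ n := by gcongr
      _ = Real.exp (-c * n) := by rw [← Real.exp_nat_mul]; push_cast; ring_nf

variable {G : SimpleGraph V}

lemma percCritical_nonneg (P : ℝ → Measure (G.edgeSet → Bool)) : 0 ≤ G.percCritical P :=
  Real.sInf_nonneg fun _ hp => hp.1.1

lemma countable_of_connected [∀ v, Finite (G.neighborSet v)] (hconn : G.Connected) :
    Countable V := by
  obtain ⟨x⟩ := hconn.nonempty
  have hcover : (⋃ n, Sigma.fst '' {w : (y : V) × G.Walk x y | w.2.length = n}) = Set.univ :=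
    Set.eq_univ_of_forall fun y =>
      let ⟨w⟩ := hconn x y
      Set.mem_iUnion.2 ⟨w.length, ⟨y, w⟩, rfl, rfl⟩
  rw [← Set.countable_univ_iff, ← hcover]
  exact Set.countable_iUnion fun n => ((finite_setOf_length_eq G x n).image _).countable

variable [DecidableEq V] [∀ v, Fintype (G.neighborSet v)] {P : ℝ → Measure (G.edgeSet → Bool)}

lemma exists_sawCountTo_div_sawCount_le_mul_pow [Countable V] (htrans : G.IsVertexTransitive)
    {d : ℕ} (hd : 2 ≤ d) (hreg : G.IsRegularOfDegree d) {x₀ : V}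
    (hinf : {y | G.Reachable x₀ y}.Infinite)
    (hP : ∀ q ∈ Set.Icc (0 : ℝ) 1, G.IsBernoulliPercolation q (P q))
    {a s : ℝ} (ha : G.percCritical P < a) (hs : G.spectralRadius x₀ < s) (hs1 : s ≤ 1) :
    ∃ K : ℝ, ∀ n x,
      (G.sawCountTo x₀ x n : ℝ) / G.sawCount x₀ n ≤ K * (a * ((d - 1) * s)) ^ n := by
  obtain ⟨K, hK⟩ := exists_sawCountTo_le_mul_pow htrans hreg hd hs hs1
  obtain ⟨ε, hε, hlow⟩ := exists_le_sawCount_mul_pow htrans hP hinf ha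
  refine ⟨K / ε, fun n x => ?_⟩
  have hK0 : 0 ≤ K * ((d - 1) * s) ^ n := (Nat.cast_nonneg _).trans (hK n x₀ x)
  have hpos : (0 : ℝ) < G.sawCount x₀ n := by
    refine (Nat.cast_nonneg _).lt_of_ne fun h => ?_
    have := hlow n
    rw [← h, zero_mul] at this
    linarith
  rw [div_le_iff₀ hpos]
  calc (G.sawCountTo x₀ x n : ℝ)
      ≤ K * ((d - 1) * s) ^ n := hK n x₀ x
    _ = K * ((d - 1) * s) ^ n / ε * ε := by field_simp
    _ ≤ K * ((d - 1) * s) ^ n / ε * (G.sawCount x₀ n * a ^ n) := by gcongr; exact hlow n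
    _ = K / ε * (a * ((d - 1) * s)) ^ n * G.sawCount x₀ n := by rw [mul_pow a]; ring

end ExponentialDecay

end SelfAvoidingWalk

open SelfAvoidingWalk in
theorem stmt_12_general {V : Type*} [DecidableEq V] [Countable V] (G : SimpleGraph V)
    [∀ v, Fintype (G.neighborSet v)] (htrans : G.IsVertexTransitive)
    (d : ℕ) (hd : 2 ≤ d) (hreg : G.IsRegularOfDegree d)
    (x₀ : V) (hinf : {y | G.Reachable x₀ y}.Infinite)
    (ρ : ℝ) (hρ : G.spectralRadius x₀ = ρ) (hρ1 : ρ < 1)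
    (P : ℝ → Measure (G.edgeSet → Bool))
    (hP : ∀ q ∈ Set.Icc (0 : ℝ) 1, G.IsBernoulliPercolation q (P q))
    (hpc : G.percCritical P * ((d : ℝ) - 1) * ρ < 1) :
    ∃ c : ℝ, 0 < c ∧ ∀ (n : ℕ) (x : V),
      (G.sawCountTo x₀ x n : ℝ) / (G.sawCount x₀ n : ℝ) ≤ Real.exp (-c * n) := by
  subst hρ
  obtain ⟨a, ha, s, hs, hs1, has⟩ := exists_gt_exists_gt_mul_mul_lt_one hpc hρ1
  obtain ⟨K, hK⟩ :=
    exists_sawCountTo_div_sawCount_le_mul_pow htrans hd hreg hinf hP ha hs hs1.le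
  have ha0 : 0 ≤ a := (percCritical_nonneg P).trans ha.le
  have hs0 : 0 ≤ s := (spectralRadius_nonneg G x₀).trans hs.le
  have hd1 : (0 : ℝ) ≤ d - 1 := sub_nonneg.2 (by exact_mod_cast (by lia : 1 ≤ d))
  exact exists_pos_forall_le_exp_of_le_mul_pow (by positivity) has hK
    (fun x => div_le_one_of_le₀ (by exact_mod_cast sawCountTo_le_sawCount x₀ x 0) (by positivity))
    fun n hn => exists_sawCountTo_div_sawCount_le htrans hinf hn

/-- on a d-regular transitive graph with spectral radius `ρ < 1` such that
`p_c (d-1) ρ < 1`, the self-avoiding walk endpoint distribution decays exponentially: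
`c_n(x)/c_n ≤ e^{-cn}` uniformly in `x`. -/
theorem stmt_12 {V : Type*} [DecidableEq V] (G : SimpleGraph V)
    [∀ v, Fintype (G.neighborSet v)] [Infinite V] (hconn : G.Connected)
    (htrans : G.IsVertexTransitive)
    (d : ℕ) (hd : 2 ≤ d) (hreg : G.IsRegularOfDegree d)
    (x₀ : V) (ρ : ℝ) (hρ : G.spectralRadius x₀ = ρ) (hρ1 : ρ < 1)
    (P : ℝ → MeasureTheory.Measure (G.edgeSet → Bool))
    (hP : ∀ q ∈ Set.Icc (0:ℝ) 1, G.IsBernoulliPercolation q (P q))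
    (hpc : G.percCritical P * ((d : ℝ) - 1) * ρ < 1) :
    ∃ c : ℝ, 0 < c ∧ ∀ (n : ℕ) (x : V),
      (G.sawCountTo x₀ x n : ℝ) / (G.sawCount x₀ n : ℝ) ≤ Real.exp (-c * n) := by
  have := SelfAvoidingWalk.countable_of_connected hconn
  exact stmt_12_general G htrans d hd hreg x₀
    (by simpa [hconn.preconnected x₀] using Set.infinite_univ) ρ hρ hρ1 P hP hpc
end

section
/- Let G be a d-regular transitive graph with spectral radius ρ < 1 and suppose p_c(d-1)ρ < 1. Then the self-avoiding walk bubble condition holds at the critical point: Σ_x G_{μ^{-1}}(x)² < ∞, where μ is the connective constant. -/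
open MeasureTheory Filter Set
open scoped ENNReal

/-!
The argument compares self-avoiding walks with non-backtracking walks, and these with all walks.
Let `d = q + 1`, let `B_z` and `W_t` be the generating functions of non-backtracking walks and of
all walks, and put `t = z / (1 + q z²)`. Erasing backtracks from a walk of length `n` leaves a
non-backtracking walk, and each non-backtracking walk of length `k` arises at least as often as
there are weighted paths of length `n` from `0` to `k` on the half-line. The Green function of the
half-line is at least `z ^ k` when `q z² ≤ 1`, whence `B_z(x, y) ≤ W_t(x, y)`.

By symmetry `∑_y W_t(x, y)²` is a sum of return counts, finite as soon as `t (q + 1) ρ < 1`. At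
`z = 1 / √q` the sum `∑_y B_z(x, y)²` diverges, which forces `(q + 1) ρ ≥ 2 √q`. Hence `z q ρ < 1`
implies `q z² < 1`, and then `t (q + 1) ρ < 1` follows from `(1 - z q ρ) (1 - z ρ) > 0` and `ρ ≤ 1`.
Finally `z = μ⁻¹` is admissible because `μ⁻¹ ≤ p_c`, by a union bound over self-avoiding walks.
-/

namespace SawBubble

open SimpleGraph
open scoped Finset

variable {V : Type*} {G : SimpleGraph V}

section WalkCounts

variable [DecidableEq V] [∀ v, Fintype (G.neighborSet v)]

lemma card_filter_finsetWalkLength_succ (n : ℕ) (x y : V) (Q : G.Walk x y → Prop)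
    [DecidablePred Q] :
    #{w ∈ G.finsetWalkLength (n + 1) x y | Q w} =
      ∑ z : G.neighborSet x, #{w ∈ G.finsetWalkLength n z y | Q (.cons z.2 w)} := by
  rw [finsetWalkLength, Finset.filter_biUnion, Finset.card_biUnion]
  · simp only [Finset.filter_map, Finset.card_map]
    rfl
  · intro z _ z' _ hne
    simp only [Finset.disjoint_left, Finset.mem_filter, Finset.mem_map]
    rintro _ ⟨⟨w, _, rfl⟩, _⟩ ⟨⟨w', _, hw'⟩, _⟩
    injection hw' with _ hz
    exact hne (Subtype.ext hz.symm)

variable (G) in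
/-- The number of walks of length `n` from `x` to `y`, that is, the `(x, y)` entry of the `n`-th
power of the adjacency operator. -/
def walkCount (n : ℕ) (x y : V) : ℕ :=
  #(G.finsetWalkLength n x y)

lemma walkCount_zero (x y : V) : walkCount G 0 x y = if x = y then 1 else 0 := by
  by_cases h : x = y
  · subst h
    simp [walkCount, finsetWalkLength]
  · simp [walkCount, finsetWalkLength, h]

lemma walkCount_succ (n : ℕ) (x y : V) :
    walkCount G (n + 1) x y = ∑ z ∈ G.neighborFinset x, walkCount G n z y := by
  have h := card_filter_finsetWalkLength_succ (G := G) n x y fun _ ↦ True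
  simp only [Finset.filter_true] at h
  exact h.trans (Finset.sum_set_coe (f := fun z ↦ walkCount G n z y) (G.neighborSet x))

lemma walkCount_comm (n : ℕ) (x y : V) : walkCount G n x y = walkCount G n y x :=
  Finset.card_nbij' Walk.reverse Walk.reverse
    (fun w hw ↦ by simpa [mem_finsetWalkLength_iff] using hw)
    (fun w hw ↦ by simpa [mem_finsetWalkLength_iff] using hw)
    (fun w _ ↦ w.reverse_reverse) (fun w _ ↦ w.reverse_reverse)

lemma tsum_walkCount_mul_walkCount (n m : ℕ) (x y : V) :
    ∑' z, (walkCount G n x z : ℝ≥0∞) * walkCount G m y z = walkCount G (n + m) x y := by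
  induction n generalizing x with
  | zero =>
    rw [tsum_eq_single x fun z hz ↦ by simp [walkCount_zero, hz.symm]]
    simp [walkCount_zero, walkCount_comm m x y]
  | succ n ih =>
    simp_rw [Nat.succ_add, walkCount_succ, Nat.cast_sum, Finset.sum_mul, ← ih]
    exact Summable.tsum_finsetSum fun _ _ ↦ ENNReal.summable

lemma two_mul_walkCount_le (n : ℕ) (x : V) :
    2 * walkCount G (2 * n + 1) x x ≤ walkCount G (2 * n) x x + walkCount G (2 * (n + 1)) x x := by
  have h : (2 : ℝ≥0∞) * walkCount G (n + (n + 1)) x x ≤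
      walkCount G (n + n) x x + walkCount G ((n + 1) + (n + 1)) x x := by
    rw [← tsum_walkCount_mul_walkCount n (n + 1), ← tsum_walkCount_mul_walkCount n n,
      ← tsum_walkCount_mul_walkCount (n + 1) (n + 1), ← ENNReal.tsum_mul_left, ← ENNReal.tsum_add]
    refine ENNReal.tsum_le_tsum fun z ↦ ?_
    have hz := two_mul_le_add_sq (walkCount G n x z) (walkCount G (n + 1) x z)
    rw [sq, sq, mul_assoc] at hz
    exact_mod_cast hz
  rw [two_mul n, two_mul (n + 1), add_assoc n]
  exact_mod_cast h

lemma tsum_sq_tsum_walkCount (x : V) (t : ℝ≥0∞) :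
    ∑' y, (∑' n, walkCount G n x y * t ^ n) ^ 2 =
      ∑' n, ∑' m, walkCount G (n + m) x x * t ^ (n + m) := by
  simp_rw [sq, ← ENNReal.tsum_mul_right, ← ENNReal.tsum_mul_left]
  rw [ENNReal.tsum_comm]
  refine tsum_congr fun n ↦ ?_
  rw [ENNReal.tsum_comm]
  refine tsum_congr fun m ↦ ?_
  rw [← tsum_walkCount_mul_walkCount, ← ENNReal.tsum_mul_right]
  refine tsum_congr fun y ↦ ?_
  ring

end WalkCounts

section NonBacktracking

variable [DecidableEq V] [∀ v, Fintype (G.neighborSet v)]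

variable (G) in
/-- The number of non-backtracking walks of length `n` from `x` to `y` whose first step avoids the
set `S`. The unconstrained count is `S = ∅`; `S = {p}` counts the continuations of a walk that has
just arrived at `x` from `p`. -/
def nbwCount : ℕ → Finset V → V → V → ℕ
  | 0, _, x, y => if x = y then 1 else 0
  | n + 1, S, x, y => ∑ z ∈ G.neighborFinset x \ S, nbwCount n {x} z y

lemma nbwCount_succ_eq_add (n : ℕ) {x w : V} (h : G.Adj x w) (y : V) :
    nbwCount G (n + 1) ∅ w y = nbwCount G (n + 1) {x} w y + nbwCount G n {w} x y := by
  simp only [nbwCount, Finset.sdiff_empty]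
  exact Finset.sum_eq_sum_sdiff_singleton_add ((G.mem_neighborFinset w x).2 h.symm) _

lemma mul_nbwCount_le_sum {q : ℕ} (hreg : G.IsRegularOfDegree (q + 1)) (n : ℕ) (x y : V) :
    q * nbwCount G n ∅ x y ≤ ∑ w ∈ G.neighborFinset x, nbwCount G n {w} x y := by
  have hcard : #(G.neighborFinset x) = q + 1 := hreg x
  cases n with
  | zero =>
    simp only [nbwCount, Finset.sum_const, hcard, smul_eq_mul]
    gcongr
    omega
  | succ n =>
    have hsplit := Finset.sum_congr rfl fun w hw ↦
      Finset.sum_eq_sum_sdiff_singleton_add (s := G.neighborFinset x) hw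
        fun z ↦ nbwCount G n {x} z y
    rw [Finset.sum_const, Finset.sum_add_distrib, hcard, smul_eq_mul] at hsplit
    simp only [nbwCount, Finset.sdiff_empty]
    linarith

lemma nbwCount_add_two_add_le {q : ℕ} (hreg : G.IsRegularOfDegree (q + 1)) (n : ℕ) (x y : V) :
    nbwCount G (n + 2) ∅ x y + q * nbwCount G n ∅ x y ≤
      ∑ w ∈ G.neighborFinset x, nbwCount G (n + 1) ∅ w y := by
  have hsplit : ∑ w ∈ G.neighborFinset x, nbwCount G (n + 1) ∅ w y =
      nbwCount G (n + 2) ∅ x y + ∑ w ∈ G.neighborFinset x, nbwCount G n {w} x y := by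
    rw [Finset.sum_congr rfl fun w hw ↦
      nbwCount_succ_eq_add n ((G.mem_neighborFinset x w).1 hw) y, Finset.sum_add_distrib]
    simp only [nbwCount, Finset.sdiff_empty]
  rw [hsplit]
  exact Nat.add_le_add_left (mul_nbwCount_le_sum hreg n x y) _

lemma pow_le_tsum_nbwCount {q : ℕ} (hreg : G.IsRegularOfDegree (q + 1)) (n : ℕ) {S : Finset V}
    (hS : #S ≤ 1) (x : V) : (q : ℝ≥0∞) ^ n ≤ ∑' y, (nbwCount G n S x y : ℝ≥0∞) := by
  induction n generalizing S x with
  | zero =>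
    rw [tsum_eq_single x fun y hy ↦ by simp [nbwCount, hy.symm]]
    simp [nbwCount]
  | succ n ih =>
    have hcard : q ≤ #(G.neighborFinset x \ S) := by
      have := Finset.le_card_sdiff S (G.neighborFinset x)
      have : #(G.neighborFinset x) = q + 1 := hreg x
      omega
    simp only [nbwCount, Nat.cast_sum]
    rw [Summable.tsum_finsetSum fun _ _ ↦ ENNReal.summable]
    calc (q : ℝ≥0∞) ^ (n + 1) = q * q ^ n := pow_succ' _ _
      _ ≤ #(G.neighborFinset x \ S) * q ^ n := by gcongr
      _ = #(G.neighborFinset x \ S) • (q : ℝ≥0∞) ^ n := (nsmul_eq_mul _ _).symm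
      _ ≤ _ := Finset.card_nsmul_le_sum _ _ _ fun z _ ↦ ih (Finset.card_singleton x).le z

lemma card_isPath_disjoint_le_nbwCount (n : ℕ) (S : Finset V) (x y : V) :
    #{w ∈ G.finsetWalkLength n x y | w.IsPath ∧ ∀ v ∈ S, v ∉ w.support} ≤
      nbwCount G n S x y := by
  induction n generalizing S x with
  | zero => exact (Finset.card_filter_le _ _).trans (walkCount_zero x y).le
  | succ n ih =>
    rw [card_filter_finsetWalkLength_succ, nbwCount, Finset.sdiff_eq_filter, Finset.sum_filter,
      neighborFinset, ← Finset.sum_set_coe]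
    refine Finset.sum_le_sum fun z _ ↦ ?_
    split_ifs with hz
    · rw [Finset.card_eq_zero.2]
      refine Finset.filter_eq_empty_iff.2 fun w _ hw ↦ hw.2 z hz ?_
      exact List.mem_cons_of_mem _ w.start_mem_support
    · refine (Finset.card_le_card fun w ↦ ?_).trans (ih {x} z)
      simp only [Finset.mem_filter, Finset.mem_singleton, forall_eq]
      exact fun ⟨hlen, hw, _⟩ ↦ ⟨hlen, (Walk.cons_isPath_iff _ _).1 hw⟩

lemma sawCountTo_le_nbwCount (n : ℕ) (x y : V) : G.sawCountTo x y n ≤ nbwCount G n ∅ x y := by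
  have hcard : G.sawCountTo x y n = #{w ∈ G.finsetWalkLength n x y | w.IsPath} := by
    rw [sawCountTo, Nat.card_eq_fintype_card]
    exact Fintype.card_of_subtype _ fun w ↦ by simp [mem_finsetWalkLength_iff, and_comm]
  rw [hcard]
  simpa using card_isPath_disjoint_le_nbwCount n ∅ x y

lemma sawGen_le_tsum_nbwCount (x y : V) (z : ℝ) :
    G.sawGen x z y ≤ ∑' n, nbwCount G n ∅ x y * ENNReal.ofReal z ^ n := by
  rw [sawGen]
  gcongr with n
  exact_mod_cast sawCountTo_le_nbwCount n x y

end NonBacktracking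

section BallotPaths

/-- The number of paths of length `n` from `0` to `k` on the half-line `ℕ`, each weighted by `q` to
the number of its down-steps. On a `(q + 1)`-regular graph it bounds from below the number of walks
of length `n` that reduce to a given non-backtracking walk of length `k` when their backtracks are
erased. -/
def ballotCount (q : ℕ) : ℕ → ℕ → ℕ
  | 0, k => if k = 0 then 1 else 0
  | n + 1, 0 => q * ballotCount q n 1
  | n + 1, k + 1 => ballotCount q n k + q * ballotCount q n (k + 2)

lemma tsum_ballotCount_succ_mul (q n : ℕ) (g : ℕ → ℝ≥0∞) :
    ∑' k, ballotCount q (n + 1) k * g k =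
      ballotCount q n 0 * g 1 + ∑' k, ballotCount q n (k + 1) * (g (k + 2) + q * g k) := by
  have hshift (f : ℕ → ℝ≥0∞) : ∑' k, f k = f 0 + ∑' k, f (k + 1) :=
    tsum_eq_zero_add' ENNReal.summable
  have hup := hshift fun k ↦ ballotCount q n k * g (k + 1)
  have hdown := hshift fun k ↦ ballotCount q n (k + 1) * (q * g k)
  simp only [mul_add, ENNReal.tsum_add]
  rw [hshift, hdown, ← add_assoc, ← hup, add_left_comm, ← ENNReal.tsum_add]
  simp only [ballotCount]
  push_cast
  congr 1
  · ring
  · exact tsum_congr fun k ↦ by ring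

lemma tsum_ballotCount_mul_nbwCount_le [DecidableEq V] [∀ v, Fintype (G.neighborSet v)] {q : ℕ}
    (hreg : G.IsRegularOfDegree (q + 1)) (n : ℕ) (x y : V) :
    ∑' k, (ballotCount q n k : ℝ≥0∞) * nbwCount G k ∅ x y ≤ walkCount G n x y := by
  induction n generalizing x with
  | zero =>
    rw [tsum_eq_single 0 fun k hk ↦ by simp [ballotCount, hk]]
    simp [ballotCount, nbwCount, walkCount_zero]
  | succ n ih =>
    calc ∑' k, (ballotCount q (n + 1) k : ℝ≥0∞) * nbwCount G k ∅ x y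
      _ = ballotCount q n 0 * nbwCount G 1 ∅ x y + ∑' k, ballotCount q n (k + 1) *
            (nbwCount G (k + 2) ∅ x y + q * nbwCount G k ∅ x y : ℝ≥0∞) :=
          tsum_ballotCount_succ_mul q n _
      _ ≤ ballotCount q n 0 * ∑ w ∈ G.neighborFinset x, (nbwCount G 0 ∅ w y : ℝ≥0∞) +
            ∑' k, ballotCount q n (k + 1) *
              ∑ w ∈ G.neighborFinset x, (nbwCount G (k + 1) ∅ w y : ℝ≥0∞) := by
          gcongr with k
          · simp [nbwCount]
          · exact_mod_cast nbwCount_add_two_add_le hreg k x y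
      _ = ∑ w ∈ G.neighborFinset x, ∑' k, (ballotCount q n k : ℝ≥0∞) * nbwCount G k ∅ w y := by
          rw [← Summable.tsum_finsetSum fun _ _ ↦ ENNReal.summable]
          simp only [← Finset.mul_sum]
          exact (tsum_eq_zero_add' (f := fun k ↦ (ballotCount q n k : ℝ≥0∞) *
            ∑ w ∈ G.neighborFinset x, (nbwCount G k ∅ w y : ℝ≥0∞)) ENNReal.summable).symm
      _ ≤ walkCount G (n + 1) x y := by
          rw [walkCount_succ, Nat.cast_sum]
          exact Finset.sum_le_sum fun w _ ↦ ih w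

/-- The generating function of the ballot counts in the length variable: the Green function from
`0` to `k` of the weighted half-line. -/
noncomputable def ballotGen (q : ℕ) (t : ℝ) (k : ℕ) : ℝ :=
  ∑' n, ballotCount q n k * t ^ n

variable {q : ℕ} {z : ℝ}

lemma sum_range_ballotCount_mul_pow_le (hz : 0 ≤ z) (N k : ℕ) :
    ∑ n ∈ Finset.range N, ballotCount q n k * (z / (1 + q * z ^ 2)) ^ n ≤
      (1 + q * z ^ 2) * z ^ k := by
  have hpos : 0 < 1 + q * z ^ 2 := by positivity
  set t := z / (1 + q * z ^ 2)
  have : 0 ≤ t := by positivity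
  have htz : t * (1 + q * z ^ 2) = z := div_mul_cancel₀ z hpos.ne'
  induction N generalizing k with
  | zero => simpa using by positivity
  | succ N ih =>
    rw [Finset.sum_range_succ']
    cases k with
    | zero =>
      calc _ = t * q * ∑ n ∈ Finset.range N, ballotCount q n 1 * t ^ n + 1 := by
            simp only [ballotCount, Finset.mul_sum]
            push_cast
            simp only [pow_succ, pow_zero, mul_one]
            congr 1
            exact Finset.sum_congr rfl fun n _ ↦ by ring
        _ ≤ t * q * ((1 + q * z ^ 2) * z ^ 1) + 1 := by gcongr; exact ih 1
        _ = _ := by linear_combination (q * z) * htz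
    | succ k =>
      calc _ = t * (∑ n ∈ Finset.range N, ballotCount q n k * t ^ n +
              q * ∑ n ∈ Finset.range N, ballotCount q n (k + 2) * t ^ n) := by
            simp only [ballotCount, Finset.mul_sum, mul_add, ← Finset.sum_add_distrib]
            push_cast
            simp only [zero_mul, add_zero]
            exact Finset.sum_congr rfl fun n _ ↦ by ring
        _ ≤ t * ((1 + q * z ^ 2) * z ^ k + q * ((1 + q * z ^ 2) * z ^ (k + 2))) := by
            gcongr
            · exact ih k
            · exact ih (k + 2)
        _ = _ := by linear_combination (z ^ k * (1 + q * z ^ 2)) * htz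

lemma summable_ballotCount_mul_pow (hz : 0 ≤ z) (k : ℕ) :
    Summable fun n ↦ ballotCount q n k * (z / (1 + q * z ^ 2)) ^ n :=
  summable_of_sum_range_le (fun n ↦ by positivity)
    fun N ↦ sum_range_ballotCount_mul_pow_le hz N k

lemma ballotGen_zero (hz : 0 ≤ z) :
    ballotGen q (z / (1 + q * z ^ 2)) 0 =
      1 + q * (z / (1 + q * z ^ 2)) * ballotGen q (z / (1 + q * z ^ 2)) 1 := by
  rw [ballotGen, (summable_ballotCount_mul_pow hz 0).tsum_eq_zero_add, ballotGen, ← tsum_mul_left]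
  simp only [ballotCount, if_true, Nat.cast_one, pow_zero, mul_one]
  congr 1
  exact tsum_congr fun n ↦ by push_cast; ring

lemma ballotGen_succ (hz : 0 ≤ z) (k : ℕ) :
    ballotGen q (z / (1 + q * z ^ 2)) (k + 1) = (z / (1 + q * z ^ 2)) *
      (ballotGen q (z / (1 + q * z ^ 2)) k + q * ballotGen q (z / (1 + q * z ^ 2)) (k + 2)) := by
  have hk := summable_ballotCount_mul_pow (q := q) hz k
  have hk2 := (summable_ballotCount_mul_pow (q := q) hz (k + 2)).mul_left (q : ℝ)
  rw [ballotGen, (summable_ballotCount_mul_pow hz (k + 1)).tsum_eq_zero_add, ballotGen, ballotGen,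
    ← tsum_mul_left, ← hk.tsum_add hk2, ← tsum_mul_left]
  simp only [ballotCount, Nat.succ_ne_zero, if_false, Nat.cast_zero, zero_mul, zero_add]
  exact tsum_congr fun n ↦ by push_cast; ring

lemma monotone_of_one_add_mul_eq {w : ℕ → ℝ} {r : ℝ} (hr0 : 0 ≤ r) (hr1 : r ≤ 1)
    (hw : ∀ k, 0 ≤ w k) (hrec : ∀ k, (1 + r) * w (k + 1) = w k + r * w (k + 2)) :
    Monotone w := by
  refine monotone_nat_of_le_succ fun k ↦ ?_
  -- A strict drop would be amplified by `r⁻¹ ≥ 1` at every later step, making `w` negative.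
  by_contra! hlt
  have hdrop (j : ℕ) : w (k + j + 1) ≤ w (k + j) - (w k - w (k + 1)) := by
    induction j with
    | zero => simp
    | succ j ih =>
      have hstep : w (k + j) - w (k + j + 1) = r * (w (k + j + 1) - w (k + j + 2)) := by
        linear_combination -hrec (k + j)
      have hdiff : 0 < w (k + j + 1) - w (k + j + 2) :=
        pos_of_mul_pos_right (hstep ▸ by linarith) hr0
      have := mul_le_of_le_one_left hdiff.le hr1
      simp only [← add_assoc]
      linarith
  have hlinear (j : ℕ) : w (k + j) ≤ w k - j * (w k - w (k + 1)) := by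
    induction j with
    | zero => simp
    | succ j ih =>
      have := hdrop j
      simp only [← add_assoc]
      push_cast
      linarith
  obtain ⟨j, hj⟩ := exists_nat_gt (w k / (w k - w (k + 1)))
  rw [div_lt_iff₀ (sub_pos.2 hlt)] at hj
  linarith [hlinear j, hw (k + j)]

lemma ballotGen_nonneg (hz : 0 ≤ z) (k : ℕ) : 0 ≤ ballotGen q z k :=
  tsum_nonneg fun n ↦ by positivity

lemma pow_le_ballotGen (hz : 0 ≤ z) (hqz : q * z ^ 2 ≤ 1) (k : ℕ) :
    z ^ k ≤ ballotGen q (z / (1 + q * z ^ 2)) k := by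
  have hpos : 0 < 1 + q * z ^ 2 := by positivity
  have hF0 := ballotGen_zero (q := q) hz
  have hF := ballotGen_succ (q := q) hz
  have ht : 0 ≤ z / (1 + q * z ^ 2) := by positivity
  have htz : z / (1 + q * z ^ 2) * (1 + q * z ^ 2) = z := div_mul_cancel₀ z hpos.ne'
  generalize z / (1 + q * z ^ 2) = t at *
  have hone : 1 ≤ ballotGen q t 0 := by
    have := ballotGen_nonneg (q := q) ht 1
    rw [hF0, le_add_iff_nonneg_right]
    positivity
  rcases hz.eq_or_lt with rfl | hz0
  · cases k with
    | zero => simpa using hone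
    | succ k => simpa using ballotGen_nonneg ht (k + 1)
  have hmono : Monotone fun k ↦ ballotGen q t k / z ^ k := by
    refine monotone_of_one_add_mul_eq (by positivity) hqz (fun k ↦ ?_) fun k ↦ ?_
    · exact div_nonneg (ballotGen_nonneg ht k) (by positivity)
    · rw [hF k, ← mul_div_assoc, ← mul_assoc, mul_comm _ t, htz]
      field_simp
      ring
  refine (one_le_div₀ (pow_pos hz0 k)).1 (le_trans ?_ (hmono k.zero_le))
  simpa using hone

lemma ofReal_pow_le_tsum_ballotCount (hz : 0 ≤ z) (hqz : q * z ^ 2 ≤ 1) (k : ℕ) :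
    ENNReal.ofReal z ^ k ≤
      ∑' n, (ballotCount q n k : ℝ≥0∞) * ENNReal.ofReal (z / (1 + q * z ^ 2)) ^ n := by
  have ht : 0 ≤ z / (1 + q * z ^ 2) := by positivity
  have h := ENNReal.ofReal_le_ofReal (pow_le_ballotGen hz hqz k)
  rw [ballotGen, ENNReal.ofReal_tsum_of_nonneg (fun n ↦ by positivity)
    (summable_ballotCount_mul_pow hz k), ENNReal.ofReal_pow hz] at h
  refine h.trans_eq (tsum_congr fun n ↦ ?_)
  rw [ENNReal.ofReal_mul (by positivity), ENNReal.ofReal_natCast, ENNReal.ofReal_pow ht]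

lemma tsum_nbwCount_le_tsum_walkCount [DecidableEq V] [∀ v, Fintype (G.neighborSet v)]
    (hreg : G.IsRegularOfDegree (q + 1)) (hz : 0 ≤ z) (hqz : q * z ^ 2 ≤ 1) (x y : V) :
    ∑' k, nbwCount G k ∅ x y * ENNReal.ofReal z ^ k ≤
      ∑' n, walkCount G n x y * ENNReal.ofReal (z / (1 + q * z ^ 2)) ^ n := by
  set t := ENNReal.ofReal (z / (1 + q * z ^ 2))
  calc ∑' k, nbwCount G k ∅ x y * ENNReal.ofReal z ^ k
    _ ≤ ∑' k, ∑' n, nbwCount G k ∅ x y * ((ballotCount q n k : ℝ≥0∞) * t ^ n) := by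
      simp_rw [ENNReal.tsum_mul_left]
      gcongr with k
      exact ofReal_pow_le_tsum_ballotCount hz hqz k
    _ = ∑' n, (∑' k, (ballotCount q n k : ℝ≥0∞) * nbwCount G k ∅ x y) * t ^ n := by
      rw [ENNReal.tsum_comm]
      simp_rw [← ENNReal.tsum_mul_right]
      exact tsum_congr fun n ↦ tsum_congr fun k ↦ by ring
    _ ≤ ∑' n, walkCount G n x y * t ^ n := by
      gcongr with n
      exact tsum_ballotCount_mul_nbwCount_le hreg n x y

end BallotPaths

section SpectralRadius

variable [DecidableEq V] [∀ v, Fintype (G.neighborSet v)]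

lemma srw_nonneg (n : ℕ) (x y : V) : 0 ≤ G.srw n x y := by
  induction n generalizing x with
  | zero => unfold srw; positivity
  | succ n ih => exact Finset.sum_nonneg fun z _ ↦ mul_nonneg (by positivity) (ih z)

lemma srw_le_one (n : ℕ) (x y : V) : G.srw n x y ≤ 1 := by
  induction n generalizing x with
  | zero => unfold srw; split_ifs <;> norm_num
  | succ n ih =>
    calc G.srw (n + 1) x y ≤ ∑ _z ∈ G.neighborFinset x, (G.degree x : ℝ)⁻¹ :=
          Finset.sum_le_sum fun z _ ↦ mul_le_of_le_one_right (by positivity) (ih z)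
      _ = G.degree x * (G.degree x : ℝ)⁻¹ := by
          rw [Finset.sum_const, card_neighborFinset_eq_degree, nsmul_eq_mul]
      _ ≤ 1 := mul_inv_le_one

lemma srw_eq_walkCount_div {d : ℕ} (hreg : G.IsRegularOfDegree d) (n : ℕ) (x y : V) :
    G.srw n x y = walkCount G n x y / (d : ℝ) ^ n := by
  induction n generalizing x with
  | zero => simp [srw, walkCount_zero]
  | succ n ih =>
    simp_rw [srw, walkCount_succ, Nat.cast_sum, Finset.sum_div, ih, hreg x]
    exact Finset.sum_congr rfl fun z _ ↦ by ring

lemma srw_rpow_inv_le_one (x : V) (n : ℕ) : G.srw (2 * n) x x ^ (2 * n : ℝ)⁻¹ ≤ 1 :=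
  Real.rpow_le_one (srw_nonneg _ x x) (srw_le_one _ x x) (by positivity)

lemma isBoundedUnder_srw_rpow_inv (x : V) :
    IsBoundedUnder (· ≤ ·) atTop fun n : ℕ ↦ G.srw (2 * n) x x ^ (2 * n : ℝ)⁻¹ :=
  isBoundedUnder_of ⟨1, srw_rpow_inv_le_one x⟩

lemma spectralRadius_nonneg (x : V) : 0 ≤ G.spectralRadius x :=
  le_limsup_of_frequently_le
    (.of_forall fun _ ↦ Real.rpow_nonneg (srw_nonneg _ x x) _) (isBoundedUnder_srw_rpow_inv x)

lemma spectralRadius_le_one (x : V) : G.spectralRadius x ≤ 1 :=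
  limsup_le_of_le (isCoboundedUnder_le_of_le atTop fun _ ↦ Real.rpow_nonneg (srw_nonneg _ x x) _)
    (.of_forall (srw_rpow_inv_le_one x))

lemma eventually_srw_le_pow {x : V} {r : ℝ} (hr : G.spectralRadius x < r) :
    ∀ᶠ n : ℕ in atTop, G.srw (2 * n) x x ≤ r ^ (2 * n) := by
  have hr0 : 0 ≤ r := (spectralRadius_nonneg x).trans hr.le
  filter_upwards [eventually_lt_of_limsup_lt hr (isBoundedUnder_srw_rpow_inv x),
    eventually_gt_atTop 0] with n hlt hn
  have h2n : (0 : ℝ) < 2 * n := by positivity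
  have := (Real.rpow_inv_le_iff_of_pos (srw_nonneg _ x x) hr0 h2n).1 hlt.le
  exact_mod_cast this

variable {q : ℕ}

lemma exists_walkCount_two_mul_le (hreg : G.IsRegularOfDegree (q + 1)) {x : V} {R : ℝ}
    (hR : (q + 1) * G.spectralRadius x < R) :
    ∃ C, 0 ≤ C ∧ ∀ n, (walkCount G (2 * n) x x : ℝ) ≤ C * R ^ (2 * n) := by
  have hR0 : 0 < R := (mul_nonneg (by positivity) (spectralRadius_nonneg x)).trans_lt hR
  have hev := eventually_srw_le_pow ((lt_div_iff₀' (by positivity)).2 hR)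
  have hO : (fun n ↦ (walkCount G (2 * n) x x : ℝ)) =O[atTop] fun n ↦ R ^ (2 * n) := by
    refine Asymptotics.IsBigO.of_bound 1 (hev.mono fun n hn ↦ ?_)
    rw [srw_eq_walkCount_div hreg, div_pow] at hn
    push_cast at hn
    rw [div_le_div_iff_of_pos_right (by positivity)] at hn
    simpa [abs_of_pos hR0] using hn
  obtain ⟨C, hC, hbound⟩ := Asymptotics.bound_of_isBigO_nat_atTop hO
  refine ⟨C, hC.le, fun n ↦ ?_⟩
  simpa [abs_of_pos hR0] using hbound (x := n) (by positivity)

lemma exists_walkCount_le (hreg : G.IsRegularOfDegree (q + 1)) {x : V} {R : ℝ}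
    (hR : (q + 1) * G.spectralRadius x < R) :
    ∃ C, 0 ≤ C ∧ ∀ n, (walkCount G n x x : ℝ) ≤ C * R ^ n := by
  have hR0 : 0 < R := (mul_nonneg (by positivity) (spectralRadius_nonneg x)).trans_lt hR
  obtain ⟨C, hC, heven⟩ := exists_walkCount_two_mul_le hreg hR
  refine ⟨C * (1 + R⁻¹ + R), by positivity, fun n ↦ ?_⟩
  obtain ⟨m, rfl | rfl⟩ := n.even_or_odd'
  · refine (heven m).trans ?_
    gcongr
    exact le_mul_of_one_le_right hC (by linarith [inv_pos.2 hR0])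
  · have hodd : 2 * (walkCount G (2 * m + 1) x x : ℝ) ≤
        walkCount G (2 * m) x x + walkCount G (2 * (m + 1)) x x := by
      exact_mod_cast two_mul_walkCount_le m x
    have hpow : C * (R⁻¹ + R) * R ^ (2 * m + 1) = C * R ^ (2 * m) + C * R ^ (2 * (m + 1)) := by
      field_simp
      ring
    have hpos : 0 ≤ C * R ^ (2 * m + 1) := by positivity
    have hpos' : 0 ≤ C * (R⁻¹ + R) * R ^ (2 * m + 1) := by positivity
    linarith [heven m, heven (m + 1)]

lemma tsum_sq_tsum_walkCount_lt_top (hreg : G.IsRegularOfDegree (q + 1)) {x : V} {t : ℝ}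
    (ht : 0 ≤ t) (htρ : t * ((q + 1) * G.spectralRadius x) < 1) :
    ∑' y, (∑' n, walkCount G n x y * ENNReal.ofReal t ^ n) ^ 2 < ⊤ := by
  obtain ⟨R, hR, htR⟩ : ∃ R, (q + 1) * G.spectralRadius x < R ∧ t * R < 1 :=
    (((continuous_const_mul t).tendsto _).eventually_lt_const htρ).exists_gt
  obtain ⟨C, hC, hbound⟩ := exists_walkCount_le hreg hR
  have hR0 : 0 ≤ R := (mul_nonneg (by positivity) (spectralRadius_nonneg x)).trans hR.le
  set s := ENNReal.ofReal (t * R)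
  have hs : s < 1 := by simpa [s] using htR
  have hterm (n : ℕ) : walkCount G n x x * ENNReal.ofReal t ^ n ≤ ENNReal.ofReal C * s ^ n := by
    rw [← ENNReal.ofReal_natCast, ← ENNReal.ofReal_pow ht, ← ENNReal.ofReal_pow (by positivity),
      ← ENNReal.ofReal_mul (by positivity), ← ENNReal.ofReal_mul hC, mul_pow, mul_left_comm,
      mul_comm]
    gcongr
    exact hbound n
  calc ∑' y, (∑' n, walkCount G n x y * ENNReal.ofReal t ^ n) ^ 2
    _ = ∑' n, ∑' m, walkCount G (n + m) x x * ENNReal.ofReal t ^ (n + m) :=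
      tsum_sq_tsum_walkCount x _
    _ ≤ ∑' n, ∑' m, ENNReal.ofReal C * s ^ (n + m) :=
      ENNReal.tsum_le_tsum fun n ↦ ENNReal.tsum_le_tsum fun m ↦ hterm (n + m)
    _ = ENNReal.ofReal C * (∑' n, s ^ n) ^ 2 := by
      simp_rw [pow_add, ENNReal.tsum_mul_left, ENNReal.tsum_mul_right, sq]
    _ < ⊤ := by
      rw [ENNReal.tsum_geometric]
      exact ENNReal.mul_lt_top ENNReal.ofReal_lt_top
        (ENNReal.pow_lt_top (ENNReal.inv_lt_top.2 (tsub_pos_of_lt hs)))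

lemma tsum_sq_le_sq_tsum {ι : Type*} (a : ι → ℝ≥0∞) : ∑' i, a i ^ 2 ≤ (∑' i, a i) ^ 2 := by
  simp_rw [sq, ← ENNReal.tsum_mul_left]
  gcongr with i
  exact ENNReal.le_tsum i

lemma tsum_sq_tsum_nbwCount_eq_top (hreg : G.IsRegularOfDegree (q + 1)) (x : V) {z : ℝ≥0∞}
    (hz : 1 ≤ q * z ^ 2) : ∑' y, (∑' k, nbwCount G k ∅ x y * z ^ k) ^ 2 = ⊤ := by
  refine top_unique ?_
  calc ⊤
    _ = ∑' _k : ℕ, (1 : ℝ≥0∞) := (ENNReal.tsum_const_eq_top_of_ne_zero one_ne_zero).symm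
    _ ≤ ∑' k, (∑' y, (nbwCount G k ∅ x y : ℝ≥0∞)) * (z ^ k) ^ 2 := by
      gcongr with k
      refine (one_le_pow_of_one_le' hz k).trans ?_
      rw [mul_pow, pow_right_comm]
      gcongr
      exact pow_le_tsum_nbwCount hreg k (by simp) x
    _ = ∑' y, ∑' k, nbwCount G k ∅ x y * (z ^ k) ^ 2 := by
      rw [ENNReal.tsum_comm]
      simp_rw [ENNReal.tsum_mul_right]
    _ ≤ ∑' y, ∑' k, (nbwCount G k ∅ x y * z ^ k) ^ 2 := by
      gcongr with y k
      rw [mul_pow]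
      gcongr
      exact_mod_cast Nat.le_self_pow two_ne_zero _
    _ ≤ ∑' y, (∑' k, nbwCount G k ∅ x y * z ^ k) ^ 2 := by
      gcongr with y
      exact tsum_sq_le_sq_tsum _

variable {z : ℝ}

lemma tsum_sq_tsum_nbwCount_lt_top_of_mul_sq_le_one (hreg : G.IsRegularOfDegree (q + 1)) {x : V}
    (hz : 0 ≤ z) (hqz : q * z ^ 2 ≤ 1)
    (hzρ : z / (1 + q * z ^ 2) * ((q + 1) * G.spectralRadius x) < 1) :
    ∑' y, (∑' k, nbwCount G k ∅ x y * ENNReal.ofReal z ^ k) ^ 2 < ⊤ := by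
  refine lt_of_le_of_lt (ENNReal.tsum_le_tsum fun y ↦ ?_)
    (tsum_sq_tsum_walkCount_lt_top hreg (by positivity) hzρ)
  exact pow_le_pow_left' (tsum_nbwCount_le_tsum_walkCount hreg hz hqz x y) 2

-- Kesten's lower bound on the spectral radius. If it failed, the comparison with the simple random
-- walk would make the non-backtracking bubble finite at `q * z ^ 2 = 1`, where it diverges.
lemma two_mul_sqrt_le_mul_spectralRadius (hreg : G.IsRegularOfDegree (q + 1)) (x : V) :
    2 * √q ≤ (q + 1) * G.spectralRadius x := by
  by_contra! hlt
  have hq : 0 < √(q : ℝ) := by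
    have := mul_nonneg (by positivity : (0 : ℝ) ≤ q + 1) (spectralRadius_nonneg (G := G) x)
    linarith
  have hqz : q * (√(q : ℝ))⁻¹ ^ 2 = 1 := by
    rw [inv_pow, Real.sq_sqrt (by positivity), mul_inv_cancel₀ (Real.sqrt_pos.1 hq).ne']
  have hfinite := tsum_sq_tsum_nbwCount_lt_top_of_mul_sq_le_one hreg (x := x) (z := (√q)⁻¹)
    (by positivity) hqz.le (by
      rw [hqz, one_add_one_eq_two, div_mul_eq_mul_div, div_lt_one two_pos, inv_mul_lt_iff₀ hq]
      linarith)
  refine hfinite.ne (tsum_sq_tsum_nbwCount_eq_top hreg x ?_)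
  rw [← ENNReal.ofReal_pow (by positivity), ← ENNReal.ofReal_natCast,
    ← ENNReal.ofReal_mul (by positivity), hqz, ENNReal.ofReal_one]

lemma mul_sq_lt_one_of_mul_spectralRadius_lt_one (hreg : G.IsRegularOfDegree (q + 1)) {x : V}
    (hq : 1 ≤ q) (hz : 0 ≤ z) (hzρ : z * q * G.spectralRadius x < 1) : q * z ^ 2 < 1 := by
  have hkesten := two_mul_sqrt_le_mul_spectralRadius hreg x
  have hq1 : (1 : ℝ) ≤ q := by exact_mod_cast hq
  have hsq : √(q : ℝ) ^ 2 = q := Real.sq_sqrt (by positivity)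
  have hsqrt : 1 ≤ √(q : ℝ) * G.spectralRadius x := by
    refine le_of_mul_le_mul_left ?_ (by positivity : (0 : ℝ) < q + 1)
    calc (q + 1) * 1 ≤ √(q : ℝ) * (2 * √q) := by linarith
      _ ≤ √q * ((q + 1) * G.spectralRadius x) := by gcongr
      _ = (q + 1) * (√q * G.spectralRadius x) := mul_left_comm ..
  have hzq : z * √q < 1 := by
    calc z * √q ≤ z * √q * (√q * G.spectralRadius x) :=
          le_mul_of_one_le_right (by positivity) hsqrt
      _ = z * q * G.spectralRadius x := by linear_combination z * G.spectralRadius x * hsq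
      _ < 1 := hzρ
  calc q * z ^ 2 = (z * √q) ^ 2 := by rw [mul_pow, hsq, mul_comm]
    _ < 1 := pow_lt_one₀ (by positivity) hzq two_ne_zero

theorem tsum_sq_tsum_nbwCount_lt_top (hreg : G.IsRegularOfDegree (q + 1)) {x : V} (hq : 1 ≤ q)
    (hz : 0 ≤ z) (hzρ : z * q * G.spectralRadius x < 1) :
    ∑' y, (∑' k, nbwCount G k ∅ x y * ENNReal.ofReal z ^ k) ^ 2 < ⊤ := by
  have hqz := mul_sq_lt_one_of_mul_spectralRadius_lt_one hreg hq hz hzρ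
  refine tsum_sq_tsum_nbwCount_lt_top_of_mul_sq_le_one hreg hz hqz.le ?_
  set ρ := G.spectralRadius x
  have hρ0 : 0 ≤ ρ := spectralRadius_nonneg x
  have hρ1 : ρ ≤ 1 := spectralRadius_le_one x
  have hzρ1 : z * ρ < 1 := by
    have hzq : z ≤ z * q := le_mul_of_one_le_right hz (by exact_mod_cast hq)
    exact (mul_le_mul_of_nonneg_right hzq hρ0).trans_lt hzρ
  have hfactor : 0 < (1 - z * q * ρ) * (1 - z * ρ) := mul_pos (by linarith) (by linarith)
  have hρsq : q * z ^ 2 * ρ ^ 2 ≤ q * z ^ 2 :=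
    mul_le_of_le_one_right (by positivity) (pow_le_one₀ hρ0 hρ1)
  rw [div_mul_eq_mul_div, div_lt_one (by positivity)]
  linarith

end SpectralRadius

section SelfAvoidingWalks

variable (G) in
/-- The self-avoiding walks of length `n` started at `x`, with arbitrary endpoint. -/
abbrev SelfAvoidingWalk (x : V) (n : ℕ) :=
  {w : (y : V) × G.Walk x y // w.2.IsPath ∧ w.2.length = n}

lemma connectiveConstant_nonneg (x : V) : 0 ≤ G.connectiveConstant x :=
  Real.iInf_nonneg fun _ ↦ by positivity

lemma exists_sawCount_mul_pow_lt_one {x : V} {p : ℝ} (hp : 0 ≤ p)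
    (hlt : p < (G.connectiveConstant x)⁻¹) : ∃ n : ℕ, G.sawCount x n * p ^ n < 1 := by
  rcases hp.eq_or_lt with rfl | hp0
  · exact ⟨1, by simp⟩
  have hμ : G.connectiveConstant x < p⁻¹ :=
    (lt_inv_comm₀ hp0 (inv_pos.1 (hp.trans_lt hlt))).1 hlt
  obtain ⟨n, hn⟩ := exists_lt_of_ciInf_lt hμ
  refine ⟨n, ?_⟩
  have hn0 : (0 : ℝ) < (n : ℕ) := by exact_mod_cast n.pos
  rwa [Real.rpow_inv_lt_iff_of_pos (by positivity) (by positivity) hn0, Real.rpow_natCast, inv_pow,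
    inv_eq_one_div, lt_div_iff₀ (by positivity)] at hn

variable [∀ v, Finite (G.neighborSet v)]

instance finite_walk_length_eq (x : V) (n : ℕ) :
    Finite {w : (y : V) × G.Walk x y // w.2.length = n} := by
  induction n generalizing x with
  | zero =>
    refine Finite.of_surjective (α := Unit) (fun _ ↦ ⟨⟨x, .nil⟩, rfl⟩) ?_
    rintro ⟨⟨y, w⟩, h⟩
    cases w with
    | nil => exact ⟨(), rfl⟩
    | cons => simp at h
  | succ n ih =>
    refine Finite.of_surjective
      (α := (z : G.neighborSet x) × {w : (y : V) × G.Walk z.1 y // w.2.length = n})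
      (fun u ↦ ⟨⟨u.2.1.1, .cons u.1.2 u.2.1.2⟩, congrArg (· + 1) u.2.2⟩) ?_
    rintro ⟨⟨y, w⟩, h⟩
    cases w with
    | nil => simp at h
    | cons hadj w => exact ⟨⟨⟨_, hadj⟩, ⟨⟨y, w⟩, by simpa using h⟩⟩, rfl⟩

instance finite_selfAvoidingWalk (x : V) (n : ℕ) : Finite (SelfAvoidingWalk G x n) :=
  Finite.of_injective
    (fun w ↦ (⟨w.1, w.2.2⟩ : {w : (y : V) × G.Walk x y // w.2.length = n}))
    fun _ _ h ↦ Subtype.ext (by simpa using h)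

lemma countable_of_connected (hconn : G.Connected) : Countable V := by
  obtain ⟨x⟩ := hconn.nonempty
  refine Function.Surjective.countable
    (α := (n : ℕ) × {w : (y : V) × G.Walk x y // w.2.length = n}) (f := fun u ↦ u.2.1.1) fun y ↦ ?_
  obtain ⟨w⟩ := hconn.preconnected x y
  exact ⟨⟨w.length, ⟨⟨y, w⟩, rfl⟩⟩, rfl⟩

lemma sawCount_le_of_injective {V' : Type*} {G' : SimpleGraph V'} (f : G' →g G)
    (hf : Function.Injective f) (x : V') (n : ℕ) : G'.sawCount x n ≤ G.sawCount (f x) n := by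
  refine Nat.card_le_card_of_injective (β := SelfAvoidingWalk G (f x) n)
    (fun w ↦ ⟨⟨f w.1.1, w.1.2.map f⟩, w.2.1.map hf, by simpa using w.2.2⟩) ?_
  rintro ⟨⟨y, w⟩, _⟩ ⟨⟨y', w'⟩, _⟩ heq
  simp only [Subtype.mk.injEq, Sigma.mk.injEq] at heq
  obtain ⟨hy, hw⟩ := heq
  obtain rfl : y = y' := hf hy
  obtain rfl := Walk.map_injective_of_injective hf x y (eq_of_heq hw)
  rfl

lemma sawCount_eq_of_isVertexTransitive (htrans : G.IsVertexTransitive) (x y : V) (n : ℕ) :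
    G.sawCount x n = G.sawCount y n := by
  have hle (x y : V) : G.sawCount x n ≤ G.sawCount y n := by
    obtain ⟨φ, rfl⟩ := htrans x y
    exact sawCount_le_of_injective φ.toHom φ.injective x n
  exact le_antisymm (hle x y) (hle y x)

lemma sawCount_add_le (htrans : G.IsVertexTransitive) (x : V) (n m : ℕ) :
    G.sawCount x (n + m) ≤ G.sawCount x n * G.sawCount x m := by
  have hcard : Nat.card ((u : SelfAvoidingWalk G x n) × SelfAvoidingWalk G u.1.1 m) =
      G.sawCount x n * G.sawCount x m := by
    have := Fintype.ofFinite (SelfAvoidingWalk G x n)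
    have hconst (u : SelfAvoidingWalk G x n) :
        Nat.card (SelfAvoidingWalk G u.1.1 m) = G.sawCount x m :=
      sawCount_eq_of_isVertexTransitive htrans u.1.1 x m
    simp_rw [Nat.card_sigma, hconst, Finset.sum_const, Finset.card_univ, smul_eq_mul,
      ← Nat.card_eq_fintype_card]
    rfl
  let split (w : SelfAvoidingWalk G x (n + m)) :
      (u : SelfAvoidingWalk G x n) × SelfAvoidingWalk G u.1.1 m :=
    ⟨⟨⟨_, w.1.2.take n⟩, w.2.1.take n, by rw [Walk.take_length, w.2.2]; omega⟩,
      ⟨⟨_, w.1.2.drop n⟩, w.2.1.drop n, by rw [Walk.drop_length, w.2.2]; omega⟩⟩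
  let join (u : (u : SelfAvoidingWalk G x n) × SelfAvoidingWalk G u.1.1 m) :
      (y : V) × G.Walk x y := ⟨u.2.1.1, u.1.1.2.append u.2.1.2⟩
  have hjoin (w : SelfAvoidingWalk G x (n + m)) : join (split w) = w.1 := by
    simp [join, split, Walk.append_take_drop_eq]
  rw [← hcard]
  exact Nat.card_le_card_of_injective split fun a b hab ↦
    Subtype.ext (by rw [← hjoin a, hab, hjoin])

lemma sawCount_mul_le_pow (htrans : G.IsVertexTransitive) (x : V) (n k : ℕ) :
    G.sawCount x (n * (k + 1)) ≤ G.sawCount x n ^ (k + 1) := by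
  induction k with
  | zero => simp
  | succ k ih =>
    rw [Nat.mul_succ, pow_succ]
    exact (sawCount_add_le htrans x _ n).trans (Nat.mul_le_mul_right _ ih)

end SelfAvoidingWalks

section Percolation

lemma measure_openWalk {p : ℝ} {P : Measure (G.edgeSet → Bool)}
    (hP : G.IsBernoulliPercolation p P) {x y : V} {w : G.Walk x y} (hw : w.IsTrail) :
    P {ω | G.openWalk ω w} = ENNReal.ofReal p ^ w.length := by
  classical
  set l := w.edges.attachWith (· ∈ G.edgeSet) fun _ he ↦ w.edges_subset_edgeSet he
  have hnodup : l.Nodup := .of_map Subtype.val (by simpa [l] using hw.edges_nodup)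
  have hcard : #l.toFinset = w.length := by
    rw [List.toFinset_card_of_nodup hnodup, List.length_attachWith, Walk.length_edges]
  have hevent : {ω | G.openWalk ω w} = {ω | ∀ e ∈ l.toFinset, ω e = true} := by
    ext ω
    simpa [openWalk, l] using
      ⟨fun h e _ he ↦ h e he, fun h e he ↦ h e (w.edges_subset_edgeSet he) he⟩
  simpa [hevent, hcard] using hP.2 l.toFinset fun _ ↦ true

variable [∀ v, Finite (G.neighborSet v)]

lemma exists_openWalk_of_infinite_percCluster {ω : G.edgeSet → Bool} {x : V}
    (h : (G.percCluster ω x).Infinite) (n : ℕ) :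
    ∃ w : SelfAvoidingWalk G x n, G.openWalk ω w.1.2 := by
  classical
  have hball : (⋃ m ∈ Finset.range n, Set.range
      fun w : {w : (y : V) × G.Walk x y // w.2.length = m} ↦ w.1.1).Finite :=
    Set.Finite.biUnion (Finset.finite_toSet _) fun _ _ ↦ Set.finite_range _
  obtain ⟨y, ⟨w, hw⟩, hy⟩ := (h.sdiff hball).nonempty
  have hlen : n ≤ w.bypass.length := by
    by_contra! hlt
    exact hy (Set.mem_biUnion (Finset.mem_coe.2 (Finset.mem_range.2 hlt))
      ⟨⟨⟨y, w.bypass⟩, rfl⟩, rfl⟩)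
  refine ⟨⟨⟨_, w.bypass.take n⟩, w.bypass_isPath.take n, ?_⟩, fun e he ↦ ?_⟩
  · rw [Walk.take_length, min_eq_left hlen]
  · exact hw e (w.edges_bypass_subset_edges ((w.bypass.isSubwalk_take n).edges_subset he))

variable {p : ℝ} {P : Measure (G.edgeSet → Bool)}

lemma measure_infinite_percCluster_le (hP : G.IsBernoulliPercolation p P) (x : V) (n : ℕ) :
    P {ω | (G.percCluster ω x).Infinite} ≤ G.sawCount x n * ENNReal.ofReal p ^ n := by
  have := Fintype.ofFinite (SelfAvoidingWalk G x n)
  calc P {ω | (G.percCluster ω x).Infinite}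
    _ ≤ P (⋃ w : SelfAvoidingWalk G x n, {ω | G.openWalk ω w.1.2}) :=
      measure_mono fun ω hω ↦ Set.mem_iUnion.2 (exists_openWalk_of_infinite_percCluster hω n)
    _ ≤ ∑ w : SelfAvoidingWalk G x n, P {ω | G.openWalk ω w.1.2} := measure_iUnion_fintype_le _ _
    _ = ∑ _w : SelfAvoidingWalk G x n, ENNReal.ofReal p ^ n :=
      Finset.sum_congr rfl fun w _ ↦ by rw [measure_openWalk hP w.2.1.isTrail, w.2.2]
    _ = G.sawCount x n * ENNReal.ofReal p ^ n := by
      rw [Finset.sum_const, Finset.card_univ, nsmul_eq_mul, ← Nat.card_eq_fintype_card]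
      rfl

lemma measure_infinite_percCluster_eq_zero (htrans : G.IsVertexTransitive)
    (hP : G.IsBernoulliPercolation p P) {x : V} {n : ℕ}
    (hlt : (G.sawCount x n : ℝ≥0∞) * ENNReal.ofReal p ^ n < 1) :
    P {ω | (G.percCluster ω x).Infinite} = 0 := by
  have hdecay := (ENNReal.tendsto_pow_atTop_nhds_zero_of_lt_one hlt).comp (tendsto_add_atTop_nat 1)
  refine le_antisymm (ge_of_tendsto' hdecay fun k ↦ ?_) bot_le
  refine (measure_infinite_percCluster_le hP x (n * (k + 1))).trans ?_
  rw [Function.comp_apply, mul_pow, pow_mul]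
  gcongr
  exact_mod_cast sawCount_mul_le_pow htrans x n k

lemma inv_connectiveConstant_le (hconn : G.Connected) (htrans : G.IsVertexTransitive) (x₀ : V)
    (hp : 0 ≤ p) (hP : G.IsBernoulliPercolation p P)
    (hpos : 0 < P {ω | ∃ x, (G.percCluster ω x).Infinite}) :
    (G.connectiveConstant x₀)⁻¹ ≤ p := by
  by_contra! hlt
  have := countable_of_connected hconn
  obtain ⟨n, hn⟩ := exists_sawCount_mul_pow_lt_one hp hlt
  have hn' : (G.sawCount x₀ n : ℝ≥0∞) * ENNReal.ofReal p ^ n < 1 := by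
    rwa [← ENNReal.ofReal_natCast, ← ENNReal.ofReal_pow hp, ← ENNReal.ofReal_mul (by positivity),
      ENNReal.ofReal_lt_one]
  refine hpos.ne' ?_
  rw [Set.ofPred_exists]
  refine measure_iUnion_null fun x ↦ measure_infinite_percCluster_eq_zero htrans hP (n := n) ?_
  rwa [sawCount_eq_of_isVertexTransitive htrans x x₀]

lemma measure_exists_infinite_percCluster_pos [Infinite V] (hconn : G.Connected)
    (hP : G.IsBernoulliPercolation 1 P) : 0 < P {ω | ∃ x, (G.percCluster ω x).Infinite} := by
  have := hP.1
  have := countable_of_connected hconn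
  have : Countable (Sym2 V) := Quot.mk_surjective.countable
  obtain ⟨x₀⟩ := hconn.nonempty
  have hopen : ∀ᵐ ω ∂P, ∀ e, ω e = true := ae_all_iff.2 fun e ↦ by
    simpa [ae_iff] using hP.2 {e} fun _ ↦ false
  have hinf : ∀ᵐ ω ∂P, ∃ x, (G.percCluster ω x).Infinite := by
    filter_upwards [hopen] with ω hω
    have huniv : G.percCluster ω x₀ = Set.univ := Set.eq_univ_of_forall fun y ↦
      (hconn.preconnected x₀ y).elim fun w ↦ ⟨w, fun e _ ↦ hω _⟩
    exact ⟨x₀, huniv ▸ Set.infinite_univ⟩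
  exact pos_iff_ne_zero.2 (frequently_ae_iff.1 hinf.frequently)

theorem inv_connectiveConstant_le_percCritical [Infinite V] (hconn : G.Connected)
    (htrans : G.IsVertexTransitive) (x₀ : V) {P : ℝ → Measure (G.edgeSet → Bool)}
    (hP : ∀ p ∈ Set.Icc (0 : ℝ) 1, G.IsBernoulliPercolation p (P p)) :
    (G.connectiveConstant x₀)⁻¹ ≤ G.percCritical P := by
  have hone : (1 : ℝ) ∈ Set.Icc (0 : ℝ) 1 := by simp
  refine le_csInf ⟨1, hone, measure_exists_infinite_percCluster_pos hconn (hP 1 hone)⟩ ?_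
  rintro p ⟨hp, hpos⟩
  exact inv_connectiveConstant_le hconn htrans x₀ hp.1 (hP p hp) hpos

end Percolation

end SawBubble

/-- on a d-regular transitive graph with spectral radius `ρ < 1` and
`p_c (d-1) ρ < 1`, the bubble condition holds at the critical point `z = μ⁻¹`:
`Σ_x G_{μ⁻¹}(x)² < ∞`. -/
theorem stmt_15 {V : Type*} [DecidableEq V] (G : SimpleGraph V)
    [∀ v, Fintype (G.neighborSet v)] [Infinite V] (hconn : G.Connected)
    (htrans : G.IsVertexTransitive)
    (d : ℕ) (hd : 2 ≤ d) (hreg : G.IsRegularOfDegree d)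
    (x₀ : V) (ρ : ℝ) (hρ : G.spectralRadius x₀ = ρ) (hρ1 : ρ < 1)
    (P : ℝ → MeasureTheory.Measure (G.edgeSet → Bool))
    (hP : ∀ q ∈ Set.Icc (0:ℝ) 1, G.IsBernoulliPercolation q (P q))
    (hpc : G.percCritical P * ((d : ℝ) - 1) * ρ < 1) :
    (∑' x : V, (G.sawGen x₀ (G.connectiveConstant x₀)⁻¹ x) ^ 2) < ⊤ := by
  obtain ⟨q, rfl⟩ : ∃ q, d = q + 1 := ⟨d - 1, by omega⟩
  subst hρ
  set z := (G.connectiveConstant x₀)⁻¹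
  have hz0 : 0 ≤ z := inv_nonneg.2 (SawBubble.connectiveConstant_nonneg x₀)
  have hzρ : z * q * G.spectralRadius x₀ < 1 := by
    refine lt_of_le_of_lt ?_ hpc
    rw [Nat.cast_succ, add_sub_cancel_right]
    gcongr
    · exact SawBubble.spectralRadius_nonneg x₀
    · exact SawBubble.inv_connectiveConstant_le_percCritical hconn htrans x₀ hP
  calc ∑' x, (G.sawGen x₀ z x) ^ 2
    _ ≤ ∑' x, (∑' k, SawBubble.nbwCount G k ∅ x₀ x * ENNReal.ofReal z ^ k) ^ 2 :=
      ENNReal.tsum_le_tsum fun x ↦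
        pow_le_pow_left' (SawBubble.sawGen_le_tsum_nbwCount x₀ x z) 2
    _ < ⊤ := SawBubble.tsum_sq_tsum_nbwCount_lt_top hreg (by omega) hz0 hzρ
end
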